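/- Let G be a finitely generated virtually free group and H a finitely generated subgroup. Then for any g ∈ G not conjugate into H, there exists a finite quotient q : G → Q such that q(g) is not conjugate into q(H); that is, finitely generated subgroups of finitely generated virtually free groups are conjugacy distinguished. -/

import Mathlib

universe u



namespace CD

/-- Equivariant choice. -/
theorem eqsec {G B Ω : Type*} [Group G] [MulAction G B]
    (act : G → Ω → Ω) (act_mul : ∀ g h ω, act (g * h) ω = act g (act h ω))
    (Good : B → Ω → Prop) (hinv : ∀ g b ω, Good b ω → Good (g • b) (act g ω))
    (hex : ∀ b, ∃ ω, Good b ω ∧ ∀ g : G, g • b = b → act g ω = ω) :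
    ∃ J : B → Ω, (∀ b, Good b (J b)) ∧ ∀ (g : G) b, J (g • b) = act g (J b) := by
  classical
  choose om hgood hfix using hex
  let r : B → B := fun b => (Quotient.out (Quotient.mk (MulAction.orbitRel G B) b))
  have hr : ∀ b, ∃ g : G, g • r b = b := by
    intro b
    have h : (MulAction.orbitRel G B).r (r b) b := Quotient.mk_out (s := MulAction.orbitRel G B) b
    have h2 := (MulAction.orbitRel G B).symm h
    exact h2
  have hrr : ∀ (g : G) b, r (g • b) = r b := by
    intro g b
    have : (Quotient.mk (MulAction.orbitRel G B) (g • b)) = Quotient.mk (MulAction.orbitRel G B) b :=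
      Quotient.sound ⟨g, rfl⟩
    simp only [r, this]
  choose t ht using hr
  refine ⟨fun b => act (t b) (om (r b)), ?_, ?_⟩
  · intro b
    have := hinv (t b) _ _ (hgood (r b))
    rwa [ht] at this
  · intro g b
    have h1 : (t (g • b)) • r b = g • b := by
      have := ht (g • b); rwa [hrr] at this
    have h2 : ((g * t b)⁻¹ * t (g • b)) • r b = r b := by
      rw [mul_smul, h1, inv_smul_eq_iff, mul_smul, ht]
    have h3 := hfix _ _ h2
    simp only [hrr]
    rw [← act_mul]
    conv_rhs => rw [← h3]
    rw [← act_mul, mul_inv_cancel_left]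

theorem sep_sdiff {α : Type*} (X O : Set α) (p : α → Prop) :
    {z ∈ X \ O | p z} = {z ∈ X | p z} \ {z ∈ O | p z} := by
  ext z
  exact ⟨fun h => ⟨⟨h.1.1, h.2⟩, fun h' => h.1.2 h'.1⟩,
    fun h => ⟨⟨h.1.1, fun h' => h.2 ⟨h', h.1.2⟩⟩, h.1.2⟩⟩

theorem sep_mono' {α : Type*} {X O : Set α} (h : O ⊆ X) (p : α → Prop) :
    {z ∈ O | p z} ⊆ {z ∈ X | p z} := fun _ hz => ⟨h hz.1, hz.2⟩

section emb
variable {G S W : Type*} [Group G] [MulAction G S] [MulAction G W]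

/-- stabilizer in `A` as a set -/
def stb (A : Subgroup G) {S : Type*} [MulAction G S] (x : S) : Set G := {a | a ∈ A ∧ a • x = x}

theorem stb_smul (A : Subgroup G) {x : S} {y : W} (h : stb A x = stb A y) {a : G} (ha : a ∈ A) :
    stb A (a • x) = stb A (a • y) := by
  ext b
  have := Set.ext_iff.1 h (a⁻¹ * b * a)
  simp only [stb, Set.mem_ofPred_eq] at this ⊢
  constructor
  · rintro ⟨hb, h1⟩
    have h2 := (this.1 ⟨A.mul_mem (A.mul_mem (A.inv_mem ha) hb) ha, by
      rw [mul_smul, mul_smul, h1, inv_smul_smul]⟩).2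
    refine ⟨hb, ?_⟩
    rwa [mul_smul, mul_smul, inv_smul_eq_iff] at h2
  · rintro ⟨hb, h1⟩
    have h2 := (this.2 ⟨A.mul_mem (A.mul_mem (A.inv_mem ha) hb) ha, by
      rw [mul_smul, mul_smul, h1, inv_smul_smul]⟩).2
    refine ⟨hb, ?_⟩
    rwa [mul_smul, mul_smul, inv_smul_eq_iff] at h2

theorem stb_eq_iff (A : Subgroup G) {x : S} {y : W} (h : stb A x = stb A y) {a b : G} (ha : a ∈ A)
    (hb : b ∈ A) : a • x = b • x ↔ a • y = b • y := by
  have := Set.ext_iff.1 h (b⁻¹ * a)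
  simp only [stb, Set.mem_ofPred_eq, A.mul_mem (A.inv_mem hb) ha, true_and, mul_smul,
    inv_smul_eq_iff] at this
  exact this

theorem emb (A : Subgroup G) [Nonempty W] : ∀ (n : ℕ) (X : Set S) (X' : Set W), X.ncard = n →
    X.Finite → X'.Finite → (∀ a ∈ A, ∀ x ∈ X, a • x ∈ X) → (∀ a ∈ A, ∀ x ∈ X', a • x ∈ X') →
    (∀ L : Set G, {x ∈ X | stb A x = L}.ncard ≤ {x ∈ X' | stb A x = L}.ncard) →
    ∃ f : S → W, Set.InjOn f X ∧ Set.MapsTo f X X' ∧ ∀ a ∈ A, ∀ x ∈ X, f (a • x) = a • f x := by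
  classical
  intro n
  induction n using Nat.strong_induction_on with
  | _ n ih =>
  intro X X' hn hX hX' hi hi' hc
  by_cases hne : X = ∅
  · subst hne
    exact ⟨fun _ => Classical.arbitrary W, fun x hx => hx.elim, fun x hx => hx.elim, fun a _ x hx => hx.elim⟩
  obtain ⟨x, hx⟩ := Set.nonempty_iff_ne_empty.2 hne
  have hpos : 0 < {x' ∈ X' | stb A x' = stb A x}.ncard := by
    refine lt_of_lt_of_le ?_ (hc (stb A x))
    rw [Set.ncard_pos (hX.subset (Set.sep_subset _ _))]
    exact ⟨x, hx, rfl⟩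
  obtain ⟨y, hy, hyx⟩ := (Set.ncard_pos (hX'.subset (Set.sep_subset _ _))).1 hpos
  have hxy : stb A x = stb A y := hyx.symm
  let O : Set S := {z | ∃ a ∈ A, z = a • x}
  let O' : Set W := {z | ∃ a ∈ A, z = a • y}
  have hOX : O ⊆ X := by rintro _ ⟨a, ha, rfl⟩; exact hi a ha x hx
  have hOX' : O' ⊆ X' := by rintro _ ⟨a, ha, rfl⟩; exact hi' a ha y hy
  have hOi : ∀ a ∈ A, ∀ z ∈ O, a • z ∈ O := by
    rintro a ha _ ⟨b, hb, rfl⟩; exact ⟨a * b, A.mul_mem ha hb, by rw [mul_smul]⟩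
  have hOi' : ∀ a ∈ A, ∀ z ∈ O', a • z ∈ O' := by
    rintro a ha _ ⟨b, hb, rfl⟩; exact ⟨a * b, A.mul_mem ha hb, by rw [mul_smul]⟩
  have hxO : x ∈ O := ⟨1, A.one_mem, by simp⟩
  let φ : S → W := fun z => if h : ∃ a ∈ A, z = a • x then h.choose • y else y
  have hφ : ∀ a ∈ A, φ (a • x) = a • y := by
    intro a ha
    have h : ∃ b ∈ A, a • x = b • x := ⟨a, ha, rfl⟩
    simp only [φ, dif_pos h]
    exact ((stb_eq_iff A hxy ha h.choose_spec.1).1 h.choose_spec.2).symm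
  have hφinj : Set.InjOn φ O := by
    rintro _ ⟨a, ha, rfl⟩ _ ⟨b, hb, rfl⟩ h
    rw [hφ a ha, hφ b hb] at h
    exact (stb_eq_iff A hxy ha hb).2 h
  have hcO : ∀ L : Set G, {z ∈ O | stb A z = L}.ncard = {z ∈ O' | stb A z = L}.ncard := by
    intro L
    have : {z ∈ O' | stb A z = L} = φ '' {z ∈ O | stb A z = L} := by
      ext z
      constructor
      · rintro ⟨⟨a, ha, rfl⟩, h⟩
        exact ⟨a • x, ⟨⟨a, ha, rfl⟩, by rw [stb_smul A hxy ha, h]⟩, hφ a ha⟩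
      · rintro ⟨_, ⟨⟨a, ha, rfl⟩, h⟩, rfl⟩
        rw [hφ a ha]
        exact ⟨⟨a, ha, rfl⟩, by rw [← stb_smul A hxy ha, h]⟩
    rw [this, Set.InjOn.ncard_image (hφinj.mono (Set.sep_subset _ _))]
  have hlt : (X \ O).ncard < n := by
    rw [← hn]
    apply Set.ncard_lt_ncard _ hX
    exact ⟨Set.sdiff_subset, fun h => (h hx).2 hxO⟩
  have hdi : ∀ a ∈ A, ∀ z ∈ X \ O, a • z ∈ X \ O := by
    rintro a ha z ⟨hz, hzO⟩
    refine ⟨hi a ha z hz, fun h => hzO ?_⟩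
    have := hOi a⁻¹ (A.inv_mem ha) _ h
    rwa [inv_smul_smul] at this
  have hdi' : ∀ a ∈ A, ∀ z ∈ X' \ O', a • z ∈ X' \ O' := by
    rintro a ha z ⟨hz, hzO⟩
    refine ⟨hi' a ha z hz, fun h => hzO ?_⟩
    have := hOi' a⁻¹ (A.inv_mem ha) _ h
    rwa [inv_smul_smul] at this
  obtain ⟨f, f1, f2, f3⟩ := ih _ hlt (X \ O) (X' \ O') rfl (hX.sdiff) (hX'.sdiff) hdi hdi' (by
    intro L
    have e1 : {z ∈ X \ O | stb A z = L} = {z ∈ X | stb A z = L} \ {z ∈ O | stb A z = L} := by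
      exact sep_sdiff _ _ _
    have e2 : {z ∈ X' \ O' | stb A z = L} = {z ∈ X' | stb A z = L} \ {z ∈ O' | stb A z = L} := by
      exact sep_sdiff _ _ _
    rw [e1, e2, Set.ncard_sdiff (sep_mono' hOX _)
      ((hX.subset hOX).subset (Set.sep_subset _ _)),
      Set.ncard_sdiff (sep_mono' hOX' _)
      ((hX'.subset hOX').subset (Set.sep_subset _ _)), hcO L]
    exact Nat.sub_le_sub_right (hc L) _)
  have hφO : ∀ z ∈ O, φ z ∈ O' := by
    rintro _ ⟨a, ha, rfl⟩; rw [hφ a ha]; exact ⟨a, ha, rfl⟩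
  refine ⟨fun z => if z ∈ O then φ z else f z, ?_, ?_, ?_⟩
  · intro z hz z' hz' h
    by_cases h1 : z ∈ O <;> by_cases h2 : z' ∈ O <;> simp only [h1, h2, if_true, if_false] at h
    · exact hφinj h1 h2 h
    · exact absurd (h ▸ hφO z h1) (f2 ⟨hz', h2⟩).2
    · exact absurd (h ▸ hφO z' h2) (f2 ⟨hz, h1⟩).2
    · exact f1 ⟨hz, h1⟩ ⟨hz', h2⟩ h
  · intro z hz
    by_cases h1 : z ∈ O <;> simp only [h1, if_true, if_false]
    · exact hOX' (hφO z h1)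
    · exact (f2 ⟨hz, h1⟩).1
  · intro a ha z hz
    by_cases h1 : z ∈ O
    · simp only [h1, hOi a ha z h1, if_true]
      obtain ⟨b, hb, rfl⟩ := h1
      rw [← mul_smul, hφ _ (A.mul_mem ha hb), hφ b hb, mul_smul]
    · simp only [h1, (hdi a ha z ⟨hz, h1⟩).2, if_false]
      exact f3 a ha z ⟨hz, h1⟩

theorem embBij (A : Subgroup G) (X : Set S) (X' : Set W)
    (hX : X.Finite) (hX' : X'.Finite) (hi : ∀ a ∈ A, ∀ x ∈ X, a • x ∈ X)
    (hi' : ∀ a ∈ A, ∀ x ∈ X', a • x ∈ X') [Nonempty S] [Nonempty W]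
    (hc : ∀ L : Set G, {x ∈ X | stb A x = L}.ncard = {x ∈ X' | stb A x = L}.ncard) :
    ∃ f : S → W, Set.BijOn f X X' ∧ ∀ a ∈ A, ∀ x ∈ X, f (a • x) = a • f x := by
  obtain ⟨f, f1, f2, f3⟩ := emb A _ X X' rfl hX hX' hi hi' (fun L => (hc L).le)
  obtain ⟨g, g1, g2, g3⟩ := emb A _ X' X rfl hX' hX hi' hi (fun L => (hc L).ge)
  refine ⟨f, ⟨f2, f1, ?_⟩, f3⟩
  have h1 : X'.ncard ≤ X.ncard := Set.ncard_le_ncard_of_injOn g g2 g1 hX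
  have h2 : f '' X = X' := by
    apply Set.eq_of_subset_of_ncard_le f2.image_subset _ hX'
    rwa [Set.InjOn.ncard_image f1]
  exact h2.ge

theorem stbinj (A : Subgroup G) (γ : S → W) (Y : Set S)
    (hY : ∀ a ∈ A, ∀ y ∈ Y, a • y ∈ Y) (hγ : Set.InjOn γ Y)
    (hγA : ∀ a ∈ A, ∀ y ∈ Y, γ (a • y) = a • γ y) (y : S) (hy : y ∈ Y) :
    stb A (γ y) = stb A y := by
  ext a
  constructor
  · rintro ⟨ha, h⟩
    exact ⟨ha, hγ (hY a ha y hy) hy (by rw [hγA a ha y hy, h])⟩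
  · rintro ⟨ha, h⟩
    exact ⟨ha, by rw [← hγA a ha y hy, h]⟩

theorem ext_iso (A : Subgroup G) (X X' : Set W) (hX : X.Finite)
    (hi : ∀ a ∈ A, ∀ x ∈ X, a • x ∈ X) (hi' : ∀ a ∈ A, ∀ x ∈ X', a • x ∈ X')
    (τ : W → W) (hτ : Set.BijOn τ X X') (hτA : ∀ a ∈ A, ∀ x ∈ X, τ (a • x) = a • τ x)
    (Y : Set S) (hY : ∀ a ∈ A, ∀ y ∈ Y, a • y ∈ Y)
    (α β : S → W) (hα : Set.InjOn α Y) (hβ : Set.InjOn β Y) (hαX : Set.MapsTo α Y X)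
    (hβX : Set.MapsTo β Y X') (hαA : ∀ a ∈ A, ∀ y ∈ Y, α (a • y) = a • α y)
    (hβA : ∀ a ∈ A, ∀ y ∈ Y, β (a • y) = a • β y) :
    ∃ f : W → W, Set.BijOn f X X' ∧ (∀ a ∈ A, ∀ x ∈ X, f (a • x) = a • f x) ∧
      ∀ y ∈ Y, f (α y) = β y := by
  classical
  have hX' : X'.Finite := by rw [← hτ.image_eq]; exact hX.image _
  have c1 : ∀ L : Set G, {x ∈ X | stb A x = L}.ncard = {x ∈ X' | stb A x = L}.ncard := by
    intro L
    have : {x ∈ X' | stb A x = L} = τ '' {x ∈ X | stb A x = L} := by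
      ext z
      constructor
      · rintro ⟨hz, h⟩
        obtain ⟨x, hx, rfl⟩ := hτ.surjOn hz
        exact ⟨x, ⟨hx, by rw [← h, stbinj A τ X hi hτ.injOn hτA x hx]⟩, rfl⟩
      · rintro ⟨x, ⟨hx, h⟩, rfl⟩
        exact ⟨hτ.mapsTo hx, by rw [← h, stbinj A τ X hi hτ.injOn hτA x hx]⟩
    rw [this, Set.InjOn.ncard_image (hτ.injOn.mono (Set.sep_subset _ _))]
  have cim : ∀ (γ : S → W), Set.InjOn γ Y → (∀ a ∈ A, ∀ y ∈ Y, γ (a • y) = a • γ y) →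
      ∀ L, {x ∈ γ '' Y | stb A x = L}.ncard = {y ∈ Y | stb A y = L}.ncard := by
    intro γ hγ hγA L
    have : {x ∈ γ '' Y | stb A x = L} = γ '' {y ∈ Y | stb A y = L} := by
      ext z
      constructor
      · rintro ⟨⟨y, hy, rfl⟩, h⟩
        exact ⟨y, ⟨hy, by rw [← h, stbinj A γ Y hY hγ hγA y hy]⟩, rfl⟩
      · rintro ⟨y, ⟨hy, h⟩, rfl⟩
        exact ⟨⟨y, hy, rfl⟩, by rw [← h, stbinj A γ Y hY hγ hγA y hy]⟩
    rw [this, Set.InjOn.ncard_image (hγ.mono (Set.sep_subset _ _))]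
  have dinv : ∀ (γ : S → W) (X : Set W), (∀ a ∈ A, ∀ x ∈ X, a • x ∈ X) →
      (∀ a ∈ A, ∀ y ∈ Y, γ (a • y) = a • γ y) →
      ∀ a ∈ A, ∀ x ∈ X \ γ '' Y, a • x ∈ X \ γ '' Y := by
    rintro γ X hi hγA a ha x ⟨hx, hxY⟩
    refine ⟨hi a ha x hx, ?_⟩
    rintro ⟨y, hy, h⟩
    exact hxY ⟨a⁻¹ • y, hY _ (A.inv_mem ha) y hy, by
      rw [hγA _ (A.inv_mem ha) y hy, h, inv_smul_smul]⟩
  have cd : ∀ (γ : S → W) (X : Set W), X.Finite → Set.MapsTo γ Y X → Set.InjOn γ Y →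
      (∀ a ∈ A, ∀ y ∈ Y, γ (a • y) = a • γ y) → ∀ L, {x ∈ X \ γ '' Y | stb A x = L}.ncard
        = {x ∈ X | stb A x = L}.ncard - {y ∈ Y | stb A y = L}.ncard := by
    intro γ X hX hγX hγ hγA L
    have e1 : {z ∈ X \ γ '' Y | stb A z = L}
        = {z ∈ X | stb A z = L} \ {z ∈ γ '' Y | stb A z = L} := by
      exact sep_sdiff _ _ _
    rw [e1, Set.ncard_sdiff (sep_mono' hγX.image_subset _)
      ((hX.subset hγX.image_subset).subset (Set.sep_subset _ _)), cim γ hγ hγA]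
  by_cases hW : Nonempty W
  swap
  · refine ⟨τ, hτ, hτA, fun y hy => (hW ⟨α y⟩).elim⟩
  obtain ⟨f, f1, f2⟩ := embBij (S := W) (W := W) A (X \ α '' Y) (X' \ β '' Y) hX.sdiff hX'.sdiff
    (dinv α X hi hαA) (dinv β X' hi' hβA) (by
      intro L; rw [cd α X hX hαX hα hαA, cd β X' hX' hβX hβ hβA, c1])
  let φ : W → W := fun x => if h : ∃ y ∈ Y, α y = x then β h.choose else f x
  have φ1 : ∀ y ∈ Y, φ (α y) = β y := by
    intro y hy
    have h : ∃ y' ∈ Y, α y' = α y := ⟨y, hy, rfl⟩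
    simp only [φ, dif_pos h]
    rw [hα h.choose_spec.1 hy h.choose_spec.2]
  have φ2 : ∀ x, x ∉ α '' Y → φ x = f x := by
    intro x hx
    have h : ¬ ∃ y ∈ Y, α y = x := hx
    simp only [φ, dif_neg h]
  refine ⟨φ, ⟨?_, ?_, ?_⟩, ?_, φ1⟩
  · intro x hx
    by_cases h : x ∈ α '' Y
    · obtain ⟨y, hy, rfl⟩ := h
      rw [φ1 y hy]; exact hβX hy
    · rw [φ2 x h]; exact (f1.mapsTo ⟨hx, h⟩).1
  · intro x hx x' hx' e
    by_cases h : x ∈ α '' Y <;> by_cases h' : x' ∈ α '' Y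
    · obtain ⟨y, hy, rfl⟩ := h
      obtain ⟨y', hy', rfl⟩ := h'
      rw [φ1 y hy, φ1 y' hy'] at e
      rw [hβ hy hy' e]
    · obtain ⟨y, hy, rfl⟩ := h
      rw [φ1 y hy, φ2 x' h'] at e
      exact absurd ⟨y, hy, e⟩ (f1.mapsTo ⟨hx', h'⟩).2
    · obtain ⟨y, hy, rfl⟩ := h'
      rw [φ1 y hy, φ2 x h] at e
      exact absurd ⟨y, hy, e.symm⟩ (f1.mapsTo ⟨hx, h⟩).2
    · rw [φ2 x h, φ2 x' h'] at e
      exact f1.injOn ⟨hx, h⟩ ⟨hx', h'⟩ e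
  · intro x hx
    by_cases h : x ∈ β '' Y
    · obtain ⟨y, hy, rfl⟩ := h
      exact ⟨α y, hαX hy, φ1 y hy⟩
    · obtain ⟨z, hz, rfl⟩ := f1.surjOn ⟨hx, h⟩
      exact ⟨z, hz.1, φ2 z hz.2⟩
  · intro a ha x hx
    by_cases h : x ∈ α '' Y
    · obtain ⟨y, hy, rfl⟩ := h
      rw [← hαA a ha y hy, φ1 y hy, φ1 _ (hY a ha y hy), hβA a ha y hy]
    · rw [φ2 x h, φ2 _ (dinv α X hi hαA a ha x ⟨hx, h⟩).2, f2 a ha x ⟨hx, h⟩]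

end emb

end CD



namespace CD

section color

/-- colour index -/
abbrev Idx (Q : Type u) [Group Q] : Type u := {D : Subgroup Q // D ≠ ⊤} × Bool

/-- coloured set -/
@[ext]
structure CW (Q : Type u) [Group Q] (n : ℕ) : Type u where
  c : Fin (n + 1)
  S : Finset (Idx Q)
  f : ∀ i : Idx Q, Q ⧸ i.1.1

open Classical in
/-- the action on the coloured set -/
noncomputable def CW.act {G Q : Type u} [Group G] [Group Q] (ρ : G →* Q) (n : ℕ) :
    MulAction G (CW Q n) where
  smul g w := ⟨w.c, w.S, fun i => if i ∈ w.S then ρ g • w.f i else w.f i⟩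
  one_smul w := by
    refine CW.ext rfl rfl ?_
    funext i
    change (if i ∈ w.S then ρ 1 • w.f i else w.f i) = _
    simp
  mul_smul g h w := by
    refine CW.ext rfl rfl ?_
    funext i
    change (if i ∈ w.S then ρ (g * h) • w.f i else w.f i) =
      (if i ∈ w.S then ρ g • (if i ∈ w.S then ρ h • w.f i else w.f i)
        else (if i ∈ w.S then ρ h • w.f i else w.f i))
    by_cases hi : i ∈ w.S
    · simp only [if_pos hi, map_mul, mul_smul]
    · simp only [if_neg hi]

theorem color {G Q : Type u} [Group G] [Group Q] [Finite Q] (hQ : ∀ a b : Q, a * b = b * a)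
    (ρ : G →* Q) (n : ℕ) :
    ∃ (W : Type u) (_ : MulAction G W) (_ : Finite W) (_ : Nonempty W) (od : W → Prop),
      (∀ (g : G) w, od (g • w) ↔ od w) ∧
      (∀ D : Subgroup Q, n ≤ {w : W | ¬ od w ∧ ∀ a : G, a • w = w ↔ ρ a ∈ D}.ncard) ∧
      (∀ D : Subgroup Q, D ≠ ⊤ → n ≤ {w : W | od w ∧ ∀ a : G, a • w = w ↔ ρ a ∈ D}.ncard) ∧
      (∀ A : Subgroup G, A.map ρ ≠ ⊤ → ∃ τ : W → W, Function.Involutive τ ∧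
        (∀ w, od (τ w) ↔ ¬ od w) ∧ ∀ a ∈ A, ∀ w, τ (a • w) = a • τ w) ∧
      ∀ g : G, (∀ q : Q, q ∈ Subgroup.zpowers (ρ g)) → ∀ w : W, od w → g • w ≠ w := by
  classical
  letI := CW.act ρ n
  have hfin : Finite (CW Q n) := by
    refine Finite.of_injective (fun w : CW Q n => (w.c, w.S, w.f)) ?_
    intro w w' h
    simp only [Prod.mk.injEq] at h
    exact CW.ext h.1 h.2.1 h.2.2
  have smul_def : ∀ (g : G) (w : CW Q n),
    g • w = ⟨w.c, w.S, fun i => if i ∈ w.S then ρ g • w.f i else w.f i⟩ := fun g w => rfl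
  have fixed_iff : ∀ (g : G) (w : CW Q n), g • w = w ↔ ∀ i ∈ w.S, ρ g • w.f i = w.f i := by
    intro g w
    rw [smul_def]
    constructor
    · intro h i hi
      have h2 := congrFun (congrArg (fun w : CW Q n => w.f) h) i
      simpa [hi] using h2
    · intro h
      have : (fun i => if i ∈ w.S then ρ g • w.f i else w.f i) = w.f := by
        funext i
        split_ifs with hi
        · exact h i hi
        · rfl
      rw [this]
  have coset1 : ∀ (D : Subgroup Q) (q : Q), q • ((1 : Q) : Q ⧸ D) = ((1 : Q) : Q ⧸ D) ↔ q ∈ D := by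
    intro D q
    rw [MulAction.Quotient.smul_coe, eq_comm, QuotientGroup.eq]
    simp
  -- the family of points with prescribed set
  let pt : Finset (Idx Q) → Fin (n + 1) → CW Q n := fun S c => ⟨c, S, fun i => ((1 : Q) : Q ⧸ i.1.1)⟩
  have hpt : ∀ (S : Finset (Idx Q)) (P : CW Q n → Prop), (∀ c, P (pt S c)) → n ≤ {w | P w}.ncard := by
    intro S P h
    have hinj : Function.Injective (pt S) := fun c c' e => congrArg (fun w : CW Q n => w.c) e
    have h1 : (Set.range (pt S)) ⊆ {w | P w} := by rintro _ ⟨c, rfl⟩; exact h c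
    have h2 := Set.ncard_le_ncard h1 (Set.toFinite _)
    rw [← Set.image_univ, Set.InjOn.ncard_image hinj.injOn, Set.ncard_univ] at h2
    simp at h2
    omega
  refine ⟨CW Q n, inferInstance, hfin, ⟨pt ∅ 0⟩, fun w => Odd w.S.card, ?_, ?_, ?_, ?_, ?_⟩
  · intro g w; rfl
  · intro D
    by_cases hD : D = ⊤
    · subst hD
      apply hpt ∅
      intro c
      refine ⟨by simp [pt], fun a => ?_⟩
      rw [fixed_iff]; simp [pt]
    · apply hpt {(⟨D, hD⟩, false), (⟨D, hD⟩, true)}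
      intro c
      refine ⟨?_, fun a => ?_⟩
      · simp only [pt]
        rw [Finset.card_pair (by simp)]
        decide
      · rw [fixed_iff]
        simp only [pt, Finset.mem_insert, Finset.mem_singleton, forall_eq_or_imp, forall_eq]
        rw [coset1]; simp
  · intro D hD
    apply hpt {(⟨D, hD⟩, false)}
    intro c
    refine ⟨by simp [pt], fun a => ?_⟩
    rw [fixed_iff]
    simp only [pt, Finset.mem_singleton, forall_eq]
    rw [coset1]
  · intro A hA
    let i0 : Idx Q := (⟨A.map ρ, hA⟩, false)
    refine ⟨fun w => ⟨w.c, if i0 ∈ w.S then w.S.erase i0 else insert i0 w.S, w.f⟩, ?_, ?_, ?_⟩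
    · intro w
      by_cases h : i0 ∈ w.S
      · simp only [h, if_true, Finset.notMem_erase, if_false, Finset.insert_erase]
      · simp only [h, if_true, if_false, Finset.mem_insert_self, Finset.erase_insert h]
    · intro w
      by_cases h : i0 ∈ w.S
      · simp only [h, if_true]
        have := Finset.card_erase_add_one h
        rw [← this]; 
        rw [Nat.odd_add_one, not_not]
      · simp only [h, if_false]
        rw [Finset.card_insert_of_notMem h, Nat.odd_add_one]
    · intro a ha w
      simp only [smul_def]
      refine CW.ext rfl rfl ?_
      funext i
      by_cases hi : i = i0
      · subst hi
        have : ρ a • w.f i0 = w.f i0 := by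
          obtain ⟨x, hx⟩ := QuotientGroup.mk_surjective (w.f i0)
          rw [← hx]
          rw [MulAction.Quotient.smul_coe, eq_comm, QuotientGroup.eq]
          change x⁻¹ * (ρ a * x) ∈ A.map ρ
          rw [hQ (ρ a) x, inv_mul_cancel_left]
          exact ⟨a, ha, rfl⟩
        simp only [this, ite_self]
      · have : (i ∈ if i0 ∈ w.S then w.S.erase i0 else insert i0 w.S) ↔ i ∈ w.S := by
          split_ifs <;> simp [hi]
        simp only [this]
  · intro g hg w hw hfix
    rw [fixed_iff] at hfix
    have hne : w.S.Nonempty := by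
      rw [← Finset.card_pos]
      exact hw.pos
    obtain ⟨i, hi⟩ := hne
    have h1 := hfix i hi
    apply i.1.2
    rw [eq_top_iff]
    intro q _
    obtain ⟨x, hx⟩ := QuotientGroup.mk_surjective (w.f i)
    have h2 : ρ g ∈ MulAction.stabilizer Q (w.f i) := h1
    have h3 : q ∈ MulAction.stabilizer Q (w.f i) := (Subgroup.zpowers_le.2 h2) (hg q)
    have h4 : q • w.f i = w.f i := h3
    rw [← hx, MulAction.Quotient.smul_coe, eq_comm, QuotientGroup.eq] at h4
    simp only [smul_eq_mul] at h4
    rwa [hQ q x, inv_mul_cancel_left] at h4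

end color

/-- group action on an oriented tree, described by the properties we use -/
structure IsGTree (G : Type u) {V : Type u} [Group G] [MulAction G V] (E : V → V → Prop) : Prop where
  smul_E : ∀ (g : G) v w, E v w → E (g • v) (g • w)
  conn : ∀ v w, Relation.ReflTransGen (fun a b => E a b ∨ E b a) v w
  sec : ∀ (W : Type u) (fib : V → Set W) (R : V → V → W → W → Prop),
    (∀ v w, E v w → ∀ x ∈ fib v, ∃! y, y ∈ fib w ∧ R v w x y) →
    (∀ v w, E v w → ∀ y ∈ fib w, ∃! x, x ∈ fib v ∧ R v w x y) →
    ∀ v, ∀ x ∈ fib v, ∃! s : V → W, (∀ v, s v ∈ fib v) ∧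
      (∀ v w, E v w → R v w (s v) (s w)) ∧ s v = x
  axis : ∀ g : G, (∃ v : V, g • v = v) ∨ ∃ ℓ : ℕ, 0 < ℓ ∧ ∃ v : ℕ → V,
    (∀ i, E (v i) (v (i + 1)) ∨ E (v (i + 1)) (v i)) ∧ (∀ i, v (i + ℓ) = g • v i) ∧
    ∀ i j, i < j → ¬ (v i = v j ∧ v (i + 1) = v (j + 1)) ∧ ¬ (v i = v (j + 1) ∧ v (i + 1) = v j)

/-- a finite local system with an embedding of `Z` -/
structure LSys {G V S W : Type u} [Group G] [MulAction G V] [MulAction G S] [MulAction G W]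
    (E : V → V → Prop) (Z : V → Set S) (fib : V → Set W) (j : V → S → W)
    (R : V → V → W → W → Prop) : Prop where
  fib_smul : ∀ (g : G) v, ∀ x ∈ fib v, g • x ∈ fib (g • v)
  R_smul : ∀ (g : G) v w, E v w → ∀ x y, R v w x y → R (g • v) (g • w) (g • x) (g • y)
  fwd : ∀ v w, E v w → ∀ x ∈ fib v, ∃! y, y ∈ fib w ∧ R v w x y
  bwd : ∀ v w, E v w → ∀ y ∈ fib w, ∃! x, x ∈ fib v ∧ R v w x y
  j_smul : ∀ (g : G) v, ∀ s ∈ Z v, j (g • v) (g • s) = g • j v s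
  j_inj : ∀ v, Set.InjOn (j v) (Z v)
  j_mem : ∀ v, Set.MapsTo (j v) (Z v) (fib v)
  j_R : ∀ v w, E v w → ∀ s, s ∈ Z v → s ∈ Z w → R v w (j v s) (j w s)

end CD



namespace CD

theorem completion {G V S Q : Type u} [Group G] [MulAction G V] [MulAction G S] [Group Q] [Finite Q]
    (E : V → V → Prop) (hE : ∀ (g : G) v w, E v w → E (g • v) (g • w))
    (hQ : ∀ a b : Q, a * b = b * a) (ρ : G →* Q)
    (hst : ∀ (x : G) (v : V), x • v = v → ρ x = 1 → x = 1)
    (Z : V → Set S) (hZ : ∀ (g : G) v s, s ∈ Z v → g • s ∈ Z (g • v)) (n : ℕ)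
    (hZf : ∀ v, (Z v).Finite) (hZn : ∀ v, (Z v).ncard ≤ n) :
    ∃ (W : Type u) (_ : MulAction G W) (_ : Finite W) (fib : V → Set W) (j : V → S → W)
      (R : V → V → W → W → Prop), LSys (G := G) E Z fib j R ∧
      (∀ g : G, (∀ q : Q, q ∈ Subgroup.zpowers (ρ g)) → ∀ v : V, g • v = v →
        ∀ w ∈ fib v, g • w = w → ∃ s : S, g • s = s) := by
  classical
  obtain ⟨W, _, _, _, od, od_smul, cev, cod, ctog, cfix⟩ := color hQ ρ n
  let bad : V → Prop := fun v => (MulAction.stabilizer G v).map ρ = ⊤ ∧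
    ¬ ∃ s : S, ∀ a : G, a • v = v → a • s = s
  have inj : ∀ (v : V) (a b : G), a • v = v → b • v = v → ρ a = ρ b → a = b := by
    intro v a b ha hb hab
    have : b⁻¹ * a = 1 := hst _ v (by rw [mul_smul, ha, inv_smul_eq_iff, hb])
      (by rw [map_mul, map_inv, hab, inv_mul_cancel])
    rw [inv_mul_eq_one] at this
    exact this.symm
  have bad1 : ∀ (g : G) v, bad v → bad (g • v) := by
    rintro g v ⟨h1, h2⟩
    refine ⟨?_, ?_⟩
    · rw [eq_top_iff]
      intro q _
      have : (ρ g)⁻¹ * q * ρ g ∈ (MulAction.stabilizer G v).map ρ := by rw [h1]; trivial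
      obtain ⟨a, ha, hq⟩ := this
      refine ⟨g * a * g⁻¹, ?_, ?_⟩
      · change (g * a * g⁻¹) • (g • v) = g • v
        have ha' : a • v = v := ha
        rw [mul_smul, mul_smul, inv_smul_smul, ha']
      · rw [map_mul, map_mul, hq, map_inv]; group
    · rintro ⟨s, hs⟩
      refine h2 ⟨g⁻¹ • s, fun a ha => ?_⟩
      have := hs (g * a * g⁻¹) (by rw [mul_smul, mul_smul, inv_smul_smul, ha])
      rw [mul_smul, mul_smul] at this
      rw [eq_inv_smul_iff, this]
  have bad_smul : ∀ (g : G) v, bad (g • v) ↔ bad v := by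
    intro g v
    refine ⟨fun h => ?_, bad1 g v⟩
    have := bad1 g⁻¹ _ h
    rwa [inv_smul_smul] at this
  let fib : V → Set W := fun v => {w | od w ↔ bad v}
  have fib_smul : ∀ (g : G) v, ∀ x ∈ fib v, g • x ∈ fib (g • v) := by
    intro g v x hx
    change od (g • x) ↔ bad (g • v)
    rw [od_smul, bad_smul]; exact hx
  -- construction of j
  obtain ⟨J, J1, J2⟩ := eqsec (G := G) (B := V) (Ω := S → W → Prop)
    (fun g r => fun s w => r (g⁻¹ • s) (g⁻¹ • w))
    (by intro g h r; funext s w; simp [mul_smul])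
    (fun v r => ∃ f : S → W, Set.InjOn f (Z v) ∧ Set.MapsTo f (Z v) (fib v) ∧
      r = fun s w => s ∈ Z v ∧ w = f s)
    (by
      rintro g v r ⟨f, f1, f2, rfl⟩
      have hZ' : ∀ s, s ∈ Z (g • v) → g⁻¹ • s ∈ Z v := by
        intro s hs
        have := hZ g⁻¹ _ _ hs
        rwa [inv_smul_smul] at this
      refine ⟨fun s => g • f (g⁻¹ • s), ?_, ?_, ?_⟩
      · intro s hs s' hs' h
        have := f1 (hZ' s hs) (hZ' s' hs') (smul_left_cancel g h)
        exact smul_left_cancel _ this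
      · intro s hs
        exact fib_smul g v _ (f2 (hZ' s hs))
      · funext s w
        simp only [eq_iff_iff, inv_smul_eq_iff]
        constructor
        · rintro ⟨h, rfl⟩
          have := hZ g _ _ h
          rw [smul_inv_smul] at this
          exact ⟨this, rfl⟩
        · rintro ⟨h, rfl⟩
          exact ⟨hZ' s h, rfl⟩)
    (by
      intro v
      obtain ⟨f, f1, f2, f3⟩ := emb (MulAction.stabilizer G v) _ (Z v) (fib v) rfl (hZf v)
        (Set.toFinite _)
        (by
          intro a ha s hs
          have := hZ a v s hs
          rwa [show a • v = v from ha] at this)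
        (by
          intro a ha s hs
          have := fib_smul a v s hs
          rwa [show a • v = v from ha] at this)
        (by
          intro L
          by_cases hne : {x ∈ Z v | stb (MulAction.stabilizer G v) x = L} = ∅
          · rw [hne, Set.ncard_empty]; exact Nat.zero_le _
          obtain ⟨x, hx, rfl⟩ := Set.nonempty_iff_ne_empty.2 hne
          refine le_trans (le_trans (Set.ncard_le_ncard (Set.sep_subset _ _) (hZf v)) (hZn v)) ?_
          let D : Subgroup Q := (MulAction.stabilizer G v ⊓ MulAction.stabilizer G x).map ρ
          have hD : ∀ a : G, a • v = v → (ρ a ∈ D ↔ a • x = x) := by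
            intro a ha
            constructor
            · rintro ⟨b, ⟨hb1, hb2⟩, hb⟩
              rw [← inj v b a hb1 ha hb]; exact hb2
            · intro h
              exact ⟨a, ⟨ha, h⟩, rfl⟩
          have key : ∀ w : W, (∀ a : G, a • w = w ↔ ρ a ∈ D) →
              stb (MulAction.stabilizer G v) w = stb (MulAction.stabilizer G v) x := by
            intro w hw
            ext a
            constructor
            · rintro ⟨ha, h⟩
              exact ⟨ha, (hD a ha).1 ((hw a).1 h)⟩
            · rintro ⟨ha, h⟩
              exact ⟨ha, (hw a).2 ((hD a ha).2 h)⟩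
          by_cases hb : bad v
          · refine le_trans (cod D ?_) (Set.ncard_le_ncard ?_ (Set.toFinite _))
            · intro htop
              refine hb.2 ⟨x, fun a ha => (hD a ha).1 ?_⟩
              rw [htop]; trivial
            · rintro w ⟨hw1, hw2⟩
              exact ⟨⟨fun _ => hb, fun _ => hw1⟩, key w hw2⟩
          · refine le_trans (cev D) (Set.ncard_le_ncard ?_ (Set.toFinite _))
            rintro w ⟨hw1, hw2⟩
            exact ⟨⟨fun h => absurd h hw1, fun h => absurd h hb⟩, key w hw2⟩)
      refine ⟨fun s w => s ∈ Z v ∧ w = f s, ⟨f, f1, f2, rfl⟩, ?_⟩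
      intro g hg
      have hgi : g⁻¹ • v = v := by rw [inv_smul_eq_iff, hg]
      funext s w
      simp only [eq_iff_iff]
      constructor
      · rintro ⟨h1, h2⟩
        have h3 := hZ g _ _ h1
        rw [smul_inv_smul, hg] at h3
        refine ⟨h3, ?_⟩
        rw [f3 g⁻¹ hgi s h3] at h2
        exact smul_left_cancel _ h2
      · rintro ⟨h1, rfl⟩
        have h3 := hZ g⁻¹ _ _ h1
        rw [hgi] at h3
        exact ⟨h3, (f3 g⁻¹ hgi s h1).symm⟩)
  choose jj jinj jmem jdef using J1
  have j_smul : ∀ (g : G) v, ∀ s ∈ Z v, jj (g • v) (g • s) = g • jj v s := by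
    intro g v s hs
    have h1 : J (g • v) (g • s) (g • jj v s) := by
      rw [J2]
      simp only [inv_smul_smul]
      rw [jdef]; exact ⟨hs, rfl⟩
    rw [jdef] at h1
    exact h1.2.symm
  -- bad along edges
  have badle : ∀ v w, (MulAction.stabilizer G v ⊓ MulAction.stabilizer G w).map ρ = ⊤ →
      bad v → bad w := by
    rintro v w htop ⟨h1, h2⟩
    refine ⟨?_, ?_⟩
    · rw [eq_top_iff, ← htop]
      exact Subgroup.map_mono inf_le_right
    · rintro ⟨s, hs⟩
      refine h2 ⟨s, fun a ha => hs a ?_⟩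
      have : ρ a ∈ (MulAction.stabilizer G v ⊓ MulAction.stabilizer G w).map ρ := by
        rw [htop]; trivial
      obtain ⟨b, ⟨hb1, hb2⟩, hb⟩ := this
      rw [← inj v b a hb1 ha hb]
      exact hb2
  obtain ⟨R, R1, R2⟩ := eqsec (G := G) (B := V × V) (Ω := W → W → Prop)
    (fun g r => fun s w => r (g⁻¹ • s) (g⁻¹ • w))
    (by intro g h r; funext s w; simp [mul_smul])
    (fun e r => E e.1 e.2 → ∃ f : W → W, Set.BijOn f (fib e.1) (fib e.2) ∧
      (∀ s, s ∈ Z e.1 → s ∈ Z e.2 → f (jj e.1 s) = jj e.2 s) ∧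
      r = fun x y => x ∈ fib e.1 ∧ y = f x)
    (by
      rintro g ⟨v, w⟩ r h hEg
      have hfi : ∀ x v, x ∈ fib (g • v) → g⁻¹ • x ∈ fib v := by
        intro x v hx
        have := fib_smul g⁻¹ _ _ hx
        rwa [inv_smul_smul] at this
      have hZ' : ∀ s v, s ∈ Z (g • v) → g⁻¹ • s ∈ Z v := by
        intro s v hs
        have := hZ g⁻¹ _ _ hs
        rwa [inv_smul_smul] at this
      have hEvw : E v w := by
        have := hE g⁻¹ _ _ hEg
        simpa using this
      obtain ⟨f, f1, f2, rfl⟩ := h hEvw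
      simp only at f1 f2
      refine ⟨fun x => g • f (g⁻¹ • x), ⟨?_, ?_, ?_⟩, ?_, ?_⟩
      · intro x hx
        exact fib_smul g w _ (f1.mapsTo (hfi _ _ hx))
      · intro x hx x' hx' h
        have := f1.injOn (hfi _ _ hx) (hfi _ _ hx') (smul_left_cancel g h)
        exact smul_left_cancel _ this
      · intro y hy
        obtain ⟨x, hx, hxy⟩ := f1.surjOn (hfi _ _ hy)
        refine ⟨g • x, fib_smul g v x hx, ?_⟩
        simp only [inv_smul_smul]
        rw [hxy, smul_inv_smul]
      · intro s h1 h2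
        simp only [Prod.smul_mk] at h1 h2 ⊢
        have h1' := hZ' s v h1
        have h2' := hZ' s w h2
        have e1 : jj (g • v) s = g • jj v (g⁻¹ • s) := by
          rw [← j_smul g v _ h1', smul_inv_smul]
        have e2 : jj (g • w) s = g • jj w (g⁻¹ • s) := by
          rw [← j_smul g w _ h2', smul_inv_smul]
        rw [e1, inv_smul_smul, f2 _ h1' h2', e2]
      · funext x y
        simp only [Prod.smul_mk, eq_iff_iff, inv_smul_eq_iff]
        constructor
        · rintro ⟨h, rfl⟩
          have := fib_smul g _ _ h
          rw [smul_inv_smul] at this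
          exact ⟨this, rfl⟩
        · rintro ⟨h, rfl⟩
          exact ⟨hfi _ _ h, rfl⟩)
    (by
      rintro ⟨v, w⟩
      by_cases hEvw : E v w
      swap
      · exact ⟨fun _ _ => False, fun h => absurd h hEvw, fun g _ => rfl⟩
      let A := MulAction.stabilizer G v ⊓ MulAction.stabilizer G w
      have hτ : ∃ τ : W → W, Set.BijOn τ (fib v) (fib w) ∧ ∀ a ∈ A, ∀ x ∈ fib v, τ (a • x) = a • τ x := by
        by_cases hb : bad v ↔ bad w
        · refine ⟨id, ?_, fun a _ x _ => rfl⟩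
          have : fib v = fib w := by
            ext x
            change (od x ↔ bad v) ↔ (od x ↔ bad w)
            rw [hb]
          rw [this]
          exact Set.bijOn_id _
        · have hA : A.map ρ ≠ ⊤ := by
            intro htop
            refine hb ⟨badle v w htop, badle w v ?_⟩
            rw [inf_comm]; exact htop
          obtain ⟨τ, τ1, τ2, τ3⟩ := ctog A hA
          refine ⟨τ, ⟨?_, τ1.injective.injOn, ?_⟩, fun a ha x _ => τ3 a ha x⟩
          · intro x hx
            have hx' : od x ↔ bad v := hx
            change od (τ x) ↔ bad w
            rw [τ2]; tauto
          · intro y hy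
            have hy' : od y ↔ bad w := hy
            refine ⟨τ y, ?_, τ1 y⟩
            change od (τ y) ↔ bad v
            rw [τ2]; tauto
      obtain ⟨τ, τ1, τ2⟩ := hτ
      obtain ⟨f, f1, f2, f3⟩ := ext_iso A (fib v) (fib w) (Set.toFinite _)
        (by
          intro a ha x hx
          have := fib_smul a v x hx
          rwa [show a • v = v from ha.1] at this)
        (by
          intro a ha x hx
          have := fib_smul a w x hx
          rwa [show a • w = w from ha.2] at this)
        τ τ1 τ2 (Z v ∩ Z w)
        (by
          intro a ha s hs
          have h1 := hZ a v s hs.1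
          rw [show a • v = v from ha.1] at h1
          have h2 := hZ a w s hs.2
          rw [show a • w = w from ha.2] at h2
          exact ⟨h1, h2⟩)
        (jj v) (jj w) ((jinj v).mono Set.inter_subset_left) ((jinj w).mono Set.inter_subset_right)
        (fun s hs => jmem v hs.1) (fun s hs => jmem w hs.2)
        (by
          intro a ha s hs
          have := j_smul a v s hs.1
          rwa [show a • v = v from ha.1] at this)
        (by
          intro a ha s hs
          have := j_smul a w s hs.2
          rwa [show a • w = w from ha.2] at this)
      refine ⟨fun x y => x ∈ fib v ∧ y = f x, fun _ => ⟨f, f1, fun s h1 h2 => f3 s ⟨h1, h2⟩, rfl⟩, ?_⟩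
      intro g hg
      simp only [Prod.smul_mk, Prod.mk.injEq] at hg
      have hgi : g⁻¹ ∈ A := A.inv_mem hg
      funext x y
      simp only [eq_iff_iff]
      constructor
      · rintro ⟨h1, h2⟩
        have h3 := fib_smul g _ _ h1
        rw [smul_inv_smul, hg.1] at h3
        refine ⟨h3, ?_⟩
        rw [f2 g⁻¹ hgi x h3] at h2
        exact smul_left_cancel _ h2
      · rintro ⟨h1, rfl⟩
        have h3 := fib_smul g⁻¹ _ _ h1
        rw [show g⁻¹ • v = v from hgi.1] at h3
        exact ⟨h3, (f2 g⁻¹ hgi x h1).symm⟩)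
  refine ⟨W, inferInstance, inferInstance, fib, jj, fun v w => R (v, w), ?_, ?_⟩
  · refine ⟨fib_smul, ?_, ?_, ?_, j_smul, jinj, jmem, ?_⟩
    · intro g v w hvw x y hxy
      have := R2 g (v, w)
      simp only [Prod.smul_mk] at this
      rw [this]
      simpa using hxy
    · intro v w hvw x hx
      obtain ⟨f, f1, f2, f3⟩ := R1 (v, w) hvw
      simp only at f1 f2 f3
      rw [f3]
      exact ⟨f x, ⟨f1.mapsTo hx, hx, rfl⟩, fun y hy => hy.2.2⟩
    · intro v w hvw y hy
      obtain ⟨f, f1, f2, f3⟩ := R1 (v, w) hvw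
      simp only at f1 f2 f3
      rw [f3]
      obtain ⟨x, hx, rfl⟩ := f1.surjOn hy
      exact ⟨x, ⟨hx, hx, rfl⟩, fun x' hx' => f1.injOn hx'.1 hx hx'.2.2.symm⟩
    · intro v w hvw s hs hs'
      obtain ⟨f, f1, f2, f3⟩ := R1 (v, w) hvw
      simp only at f1 f2 f3
      rw [f3]
      exact ⟨jmem v hs, (f2 s hs hs').symm⟩
  · intro g hg v hv w hw hgw
    by_contra hns
    have hbad : bad v := by
      refine ⟨?_, ?_⟩
      · rw [eq_top_iff]
        intro q _
        have : Subgroup.zpowers (ρ g) ≤ (MulAction.stabilizer G v).map ρ := by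
          rw [Subgroup.zpowers_le]
          exact ⟨g, hv, rfl⟩
        exact this (hg q)
      · rintro ⟨s, hs⟩
        exact hns ⟨s, hs g hv⟩
    have hw' : od w ↔ bad v := hw
    exact cfix g hg w (hw'.2 hbad) hgw

end CD



namespace CD

theorem rtg_lift {α β : Type*} {r : α → α → Prop} {r' : β → β → Prop} (f : α → β)
    (h : ∀ a b, r a b → r' (f a) (f b)) {a b : α} (hab : Relation.ReflTransGen r a b) :
    Relation.ReflTransGen r' (f a) (f b) := by
  induction hab with
  | refl => exact Relation.ReflTransGen.refl
  | tail _ hbc ih => exact ih.tail (h _ _ hbc)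

theorem rtg_symm {α : Type*} {r : α → α → Prop} (h : ∀ a b, r a b → r b a) {a b : α}
    (hab : Relation.ReflTransGen r a b) : Relation.ReflTransGen r b a := by
  induction hab with
  | refl => exact Relation.ReflTransGen.refl
  | tail _ hbc ih => exact Relation.ReflTransGen.head (h _ _ hbc) ih

/-- sections of a local system -/
def IsSec {V W : Type u} (E : V → V → Prop) (fib : V → Set W) (R : V → V → W → W → Prop)
    (s : V → W) : Prop :=
  (∀ v, s v ∈ fib v) ∧ ∀ v w, E v w → R v w (s v) (s w)

/-- the cosets whose translate of `T` contains `v` -/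
def Zset {G V : Type u} [Group G] [MulAction G V] (H : Subgroup G) (T : Set V) (v : V) : Set (G ⧸ H) :=
  {s | ∃ k : G, s = (k : G ⧸ H) ∧ k⁻¹ • v ∈ T}

/-- connected invariant subset -/
structure HTree {G V : Type u} [Group G] [MulAction G V] (E : V → V → Prop) (H : Subgroup G)
    (T : Set V) (v0 : V) : Prop where
  base : v0 ∈ T
  inv : ∀ h ∈ H, ∀ v ∈ T, h • v ∈ T
  conn : ∀ v ∈ T, Relation.ReflTransGen (fun a b => (E a b ∨ E b a) ∧ a ∈ T ∧ b ∈ T) v0 v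

section
variable {G V : Type u} [Group G] [MulAction G V] {E : V → V → Prop}

theorem Zset_smul (H : Subgroup G) (T : Set V) (g : G) (v : V) (s : G ⧸ H) (hs : s ∈ Zset H T v) :
    g • s ∈ Zset H T (g • v) := by
  obtain ⟨k, rfl, hk⟩ := hs
  refine ⟨g * k, rfl, ?_⟩
  rw [mul_inv_rev, mul_smul, inv_smul_smul]
  exact hk

theorem Zset_finite {Q : Type u} [Group Q] [Finite Q] (ρ : G →* Q)
    (hst : ∀ (x : G) (v : V), x • v = v → ρ x = 1 → x = 1) (H : Subgroup G) (T0 : Set V)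
    (hT0 : T0.Finite) (v : V) :
    (Zset H {w | ∃ h ∈ H, ∃ t ∈ T0, w = h • t} v).Finite ∧
    (Zset H {w | ∃ h ∈ H, ∃ t ∈ T0, w = h • t} v).ncard ≤ T0.ncard * Nat.card Q := by
  classical
  have key : ∀ s ∈ Zset H {w | ∃ h ∈ H, ∃ t ∈ T0, w = h • t} v, ∃ k : G, s = (k : G ⧸ H) ∧
      k⁻¹ • v ∈ T0 := by
    rintro s ⟨k, rfl, h, hh, t, ht, e⟩
    refine ⟨k * h, ?_, ?_⟩
    · rw [QuotientGroup.eq]; simpa using hh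
    · rw [mul_inv_rev, mul_smul, e, inv_smul_smul]; exact ht
  choose! kk hk1 hk2 using key
  let φ : G ⧸ H → V × Q := fun s => ((kk s)⁻¹ • v, ρ (kk s))
  have hinj : Set.InjOn φ (Zset H {w | ∃ h ∈ H, ∃ t ∈ T0, w = h • t} v) := by
    intro s hs s' hs' e
    simp only [φ, Prod.mk.injEq] at e
    have h1 : kk s * (kk s')⁻¹ = 1 := by
      apply hst _ v
      · rw [mul_smul, ← e.1, smul_inv_smul]
      · rw [map_mul, map_inv, e.2, mul_inv_cancel]
    rw [hk1 s hs, hk1 s' hs', mul_inv_eq_one.1 h1]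
  have hmaps : Set.MapsTo φ (Zset H {w | ∃ h ∈ H, ∃ t ∈ T0, w = h • t} v)
      (T0 ×ˢ (Set.univ : Set Q)) := fun s hs => ⟨hk2 s hs, trivial⟩
  have hfin : (T0 ×ˢ (Set.univ : Set Q)).Finite := hT0.prod Set.finite_univ
  refine ⟨Set.Finite.of_injOn hmaps hinj hfin, ?_⟩
  have := Set.ncard_le_ncard_of_injOn φ hmaps hinj hfin
  rwa [Set.ncard_prod, Set.ncard_univ] at this

theorem path_set {r : V → V → Prop} {v w : V} (h : Relation.ReflTransGen r v w) :
    ∃ T0 : Set V, T0.Finite ∧ v ∈ T0 ∧ w ∈ T0 ∧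
      ∀ x ∈ T0, Relation.ReflTransGen (fun a b => r a b ∧ a ∈ T0 ∧ b ∈ T0) v x := by
  induction h with
  | refl =>
    refine ⟨{v}, Set.finite_singleton v, rfl, rfl, ?_⟩
    rintro x rfl
    exact Relation.ReflTransGen.refl
  | @tail b c hab hbc ih =>
    obtain ⟨T0, h1, h2, h3, h4⟩ := ih
    refine ⟨insert c T0, h1.insert c, Or.inr h2, Or.inl rfl, ?_⟩
    have mono : ∀ x, Relation.ReflTransGen (fun a b => r a b ∧ a ∈ T0 ∧ b ∈ T0) v x →
        Relation.ReflTransGen (fun a b => r a b ∧ a ∈ insert c T0 ∧ b ∈ insert c T0) v x :=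
      fun x hx => rtg_lift id (fun a b (h : r a b ∧ a ∈ T0 ∧ b ∈ T0) => ⟨h.1, Or.inr h.2.1, Or.inr h.2.2⟩) hx
    rintro x (rfl | hx)
    · exact (mono _ (h4 b h3)).tail ⟨hbc, Or.inr h3, Or.inl rfl⟩
    · exact mono _ (h4 x hx)

theorem exists_HTree (hT : IsGTree G E) (H : Subgroup G) (hH : H.FG) (v0 w0 : V) :
    ∃ T0 : Set V, T0.Finite ∧ w0 ∈ T0 ∧ HTree (G := G) E H {w | ∃ h ∈ H, ∃ t ∈ T0, w = h • t} v0 := by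
  classical
  obtain ⟨s, hs⟩ := hH
  choose P P1 P2 P3 P4 using fun w => path_set (hT.conn v0 w)
  let T0 : Set V := P w0 ∪ ⋃ h ∈ s, P (h • v0)
  have hfin : T0.Finite := (P1 w0).union (Set.Finite.biUnion s.finite_toSet (fun h _ => P1 _))
  set T : Set V := {w | ∃ h ∈ H, ∃ t ∈ T0, w = h • t} with hTdef
  have hsub : T0 ⊆ T := fun t ht => ⟨1, H.one_mem, t, ht, by simp⟩
  have hinv : ∀ h ∈ H, ∀ v ∈ T, h • v ∈ T := by
    rintro h hh _ ⟨h', hh', t, ht, rfl⟩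
    exact ⟨h * h', H.mul_mem hh hh', t, ht, by rw [mul_smul]⟩
  let r : V → V → Prop := fun a b => (E a b ∨ E b a) ∧ a ∈ T ∧ b ∈ T
  have rsymm : ∀ a b, Relation.ReflTransGen r a b → Relation.ReflTransGen r b a := by
    intro a b h
    exact rtg_symm (fun a b h => ⟨h.1.symm, h.2.2, h.2.1⟩) h
  have rsmul : ∀ h ∈ H, ∀ a b, Relation.ReflTransGen r a b →
      Relation.ReflTransGen r (h • a) (h • b) := by
    intro h hh a b hab
    refine rtg_lift (fun v => h • v) ?_ hab
    rintro a b ⟨h1, h2, h3⟩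
    exact ⟨h1.imp (hT.smul_E h _ _) (hT.smul_E h _ _), hinv h hh _ h2, hinv h hh _ h3⟩
  have hP : ∀ w, P w ⊆ T0 → ∀ x ∈ P w, Relation.ReflTransGen r v0 x := by
    intro w hw x hx
    exact rtg_lift id
      (fun a b (h : (E a b ∨ E b a) ∧ a ∈ P w ∧ b ∈ P w) => ⟨h.1, hsub (hw h.2.1), hsub (hw h.2.2)⟩) (P4 w x hx)
  have hPw : P w0 ⊆ T0 := Set.subset_union_left
  have hPs : ∀ h ∈ s, P (h • v0) ⊆ T0 := fun h hh x hx =>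
    Or.inr (Set.mem_biUnion (show h ∈ (s : Set G) from hh) hx)
  have hT0c : ∀ t ∈ T0, Relation.ReflTransGen r v0 t := by
    rintro t (ht | ht)
    · exact hP w0 hPw t ht
    · simp only [Set.mem_iUnion] at ht
      obtain ⟨h, hh, ht⟩ := ht
      exact hP _ (hPs h hh) t ht
  have hHc : ∀ h ∈ H, Relation.ReflTransGen r v0 (h • v0) := by
    intro h hh
    rw [← hs] at hh
    have : h ∈ H ∧ Relation.ReflTransGen r v0 (h • v0) := by
      induction hh using Subgroup.closure_induction with
      | mem x hx =>
        exact ⟨hs ▸ Subgroup.subset_closure hx, hP _ (hPs x hx) _ (P3 _)⟩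
      | one => exact ⟨H.one_mem, by rw [one_smul]⟩
      | mul x y _ _ hx hy =>
        refine ⟨H.mul_mem hx.1 hy.1, hx.2.trans ?_⟩
        rw [mul_smul]
        exact rsmul x hx.1 _ _ hy.2
      | inv x _ hx =>
        refine ⟨H.inv_mem hx.1, rsymm _ _ ?_⟩
        have := rsmul x⁻¹ (H.inv_mem hx.1) _ _ hx.2
        rwa [inv_smul_smul] at this
    exact this.2
  refine ⟨T0, hfin, hPw (P3 w0), hsub (hPw (P2 w0)), hinv, ?_⟩
  rintro _ ⟨h, hh, t, ht, rfl⟩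
  exact (hHc h hh).trans (rsmul h hh _ _ (hT0c t ht))

variable {W : Type u} [MulAction G W]

theorem sec_smul (hT : IsGTree G E) {S : Type u} [MulAction G S] {Z : V → Set S} {fib : V → Set W}
    {j : V → S → W} {R : V → V → W → W → Prop} (L : LSys (G := G) E Z fib j R) (g : G) {x : V → W}
    (hx : IsSec E fib R x) : IsSec E fib R (fun v => g • x (g⁻¹ • v)) := by
  refine ⟨fun v => ?_, fun v w hvw => ?_⟩
  · have := L.fib_smul g _ _ (hx.1 (g⁻¹ • v))
    rwa [smul_inv_smul] at this
  · have h1 := hT.smul_E g⁻¹ _ _ hvw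
    have := L.R_smul g _ _ h1 _ _ (hx.2 _ _ h1)
    rwa [smul_inv_smul, smul_inv_smul] at this

theorem sec_uniq (hT : IsGTree G E) {S : Type u} [MulAction G S] {Z : V → Set S} {fib : V → Set W}
    {j : V → S → W} {R : V → V → W → W → Prop} (L : LSys (G := G) E Z fib j R) {x y : V → W}
    (hx : IsSec E fib R x) (hy : IsSec E fib R y) (v : V) (h : x v = y v) : x = y :=
  (hT.sec W fib R L.fwd L.bwd v (x v) (hx.1 v)).unique ⟨hx.1, hx.2, rfl⟩ ⟨hy.1, hy.2, h.symm⟩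

theorem secstab (hT : IsGTree G E) (H : Subgroup G) (T : Set V) (v0 : V)
    (hHT : HTree (G := G) E H T v0) [Finite W] {fib : V → Set W}
    {j : V → (G ⧸ H) → W} {R : V → V → W → W → Prop} (L : LSys (G := G) E (Zset H T) fib j R) :
    ∃ K : Subgroup G, K.FiniteIndex ∧ H ≤ K ∧ ∃ p : V → W, IsSec E fib R p ∧
      (∀ v ∈ T, p v = j v ((1 : G) : G ⧸ H)) ∧ ∀ k ∈ K, ∀ v, p (k • v) = k • p v := by
  classical
  have hZ1 : ∀ v ∈ T, ((1 : G) : G ⧸ H) ∈ Zset H T v := fun v hv => ⟨1, rfl, by simpa using hv⟩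
  obtain ⟨p, ⟨p1, p2, p3⟩, -⟩ := hT.sec W fib R L.fwd L.bwd v0 _ (L.j_mem v0 (hZ1 v0 hHT.base))
  have hp : IsSec E fib R p := ⟨p1, p2⟩
  have hpT : ∀ v ∈ T, p v = j v ((1 : G) : G ⧸ H) := by
    intro v hv
    have hc := hHT.conn v hv
    clear hv
    induction hc with
    | refl => exact p3
    | @tail b c _ hbc ih =>
      obtain ⟨h1, hb, hc⟩ := hbc
      rcases h1 with h1 | h1
      · refine (L.fwd b c h1 (p b) (p1 b)).unique ⟨p1 c, p2 b c h1⟩ ⟨L.j_mem c (hZ1 c hc), ?_⟩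
        rw [ih]; exact L.j_R b c h1 _ (hZ1 b hb) (hZ1 c hc)
      · refine (L.bwd c b h1 (p b) (p1 b)).unique ⟨p1 c, p2 c b h1⟩ ⟨L.j_mem c (hZ1 c hc), ?_⟩
        rw [ih]; exact L.j_R c b h1 _ (hZ1 c hc) (hZ1 b hb)
  let K : Subgroup G :=
    { carrier := {k | ∀ v, p (k • v) = k • p v}
      one_mem' := fun v => by simp
      mul_mem' := fun {a b} ha hb v => by rw [mul_smul, ha, hb, mul_smul]
      inv_mem' := fun {a} ha v => by
        have := ha (a⁻¹ • v)
        rw [smul_inv_smul] at this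
        rw [this, inv_smul_smul] }
  have hKmem : ∀ a b : G, a • p (a⁻¹ • v0) = b • p (b⁻¹ • v0) → a⁻¹ * b ∈ K := by
    intro a b h v
    have := sec_uniq hT L (sec_smul hT L a hp) (sec_smul hT L b hp) v0 h
    have h2 := congrFun this (b • v)
    simp only [inv_smul_smul] at h2
    rw [mul_smul, mul_smul, ← h2, inv_smul_smul]
  refine ⟨K, ?_, ?_, p, hp, hpT, fun k hk => hk⟩
  · let φ : G → W := fun a => a • p (a⁻¹ • v0)
    have : Finite (G ⧸ K) := by
      refine Finite.of_injective (fun s : G ⧸ K => φ s.out) ?_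
      intro s s' h
      have := hKmem _ _ h
      rw [← QuotientGroup.eq] at this
      simpa using this
    exact Subgroup.finiteIndex_of_finite_quotient
  · intro h hh
    have h1 : h⁻¹ • v0 ∈ T := hHT.inv _ (H.inv_mem hh) _ hHT.base
    have := hKmem 1 h (by
      rw [one_smul, inv_one, one_smul, hpT _ h1, hpT _ hHT.base, ← L.j_smul h _ _ (hZ1 _ h1),
        smul_inv_smul]
      congr 1
      rw [MulAction.Quotient.smul_coe, QuotientGroup.eq]
      simpa using hh)
    simpa using this

theorem conj_sec (hT : IsGTree G E) {S : Type u} [MulAction G S] {Z : V → Set S} {fib : V → Set W}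
    {j : V → S → W} {R : V → V → W → W → Prop} (L : LSys (G := G) E Z fib j R) {p : V → W}
    (hp : IsSec E fib R p) (g a : G) (h : ∀ v, p ((a⁻¹ * g * a) • v) = (a⁻¹ * g * a) • p v) :
    ∃ x : V → W, IsSec E fib R x ∧ ∀ v, x (g • v) = g • x v := by
  refine ⟨_, sec_smul hT L a hp, fun v => ?_⟩
  have := h (a⁻¹ • v)
  simp only [mul_smul, smul_inv_smul] at this
  rw [this, smul_inv_smul]

variable {Q : Type u} [Group Q] [Finite Q]

theorem resfin (hT : IsGTree G E) [Nonempty V] (hQ : ∀ a b : Q, a * b = b * a) (ρ : G →* Q)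
    (hst : ∀ (x : G) (v : V), x • v = v → ρ x = 1 → x = 1) (f : G) (hf : f ≠ 1) :
    ∃ K : Subgroup G, K.FiniteIndex ∧ f ∉ K := by
  obtain ⟨v0⟩ := ‹Nonempty V›
  obtain ⟨T0, hfin, hf0, hTree⟩ := exists_HTree hT ⊥ ⟨∅, by simp⟩ v0 (f • v0)
  obtain ⟨W, _, _, fib, j, R, L, -⟩ := completion E hT.smul_E hQ ρ hst
    (Zset (⊥ : Subgroup G) {w | ∃ h ∈ (⊥ : Subgroup G), ∃ t ∈ T0, w = h • t})
    (fun g v s => Zset_smul _ _ g v s) (T0.ncard * Nat.card Q)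
    (fun v => (Zset_finite ρ hst _ T0 hfin v).1) (fun v => (Zset_finite ρ hst _ T0 hfin v).2)
  obtain ⟨K, hK1, hK2, p, hp, hpT, hpK⟩ := secstab hT ⊥ _ v0 hTree L
  refine ⟨K, hK1, fun hfK => hf ?_⟩
  have h1 := hpK f hfK v0
  have hfT : f • v0 ∈ {w | ∃ h ∈ (⊥ : Subgroup G), ∃ t ∈ T0, w = h • t} :=
    ⟨1, Subgroup.one_mem _, _, hf0, by simp⟩
  have hz0 : ((1 : G) : G ⧸ (⊥ : Subgroup G)) ∈
      Zset (⊥ : Subgroup G) {w | ∃ h ∈ (⊥ : Subgroup G), ∃ t ∈ T0, w = h • t} v0 :=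
    ⟨1, rfl, by simpa using hTree.base⟩
  have hz1 : ((1 : G) : G ⧸ (⊥ : Subgroup G)) ∈
      Zset (⊥ : Subgroup G) {w | ∃ h ∈ (⊥ : Subgroup G), ∃ t ∈ T0, w = h • t} (f • v0) :=
    ⟨1, rfl, by rw [inv_one, one_smul]; exact hfT⟩
  rw [hpT _ hfT, hpT _ hTree.base, ← L.j_smul f _ _ hz0] at h1
  have h2 := L.j_inj _ hz1 (Zset_smul _ _ f _ _ hz0) h1
  rw [MulAction.Quotient.smul_coe, QuotientGroup.eq] at h2
  simpa using h2

theorem resfin_finite (hT : IsGTree G E) [Nonempty V] (hQ : ∀ a b : Q, a * b = b * a) (ρ : G →* Q)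
    (hst : ∀ (x : G) (v : V), x • v = v → ρ x = 1 → x = 1) (B : Set G) (hB : B.Finite)
    (hB1 : 1 ∉ B) :
    ∃ M : Subgroup G, M.FiniteIndex ∧ M.Normal ∧ M ≤ ρ.ker ∧ ∀ b ∈ B, b ∉ M := by
  classical
  have key : ∃ K : Subgroup G, K.FiniteIndex ∧ ∀ b ∈ B, b ∉ K := by
    induction B, hB using Set.Finite.induction_on with
    | empty => exact ⟨⊤, inferInstance, fun b hb => hb.elim⟩
    | @insert a B _ _ ih =>
      obtain ⟨K, hK, hKB⟩ := ih (fun h => hB1 (Or.inr h))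
      obtain ⟨K', hK', hKa⟩ := resfin hT hQ ρ hst a (fun h => hB1 (Or.inl h.symm))
      refine ⟨K ⊓ K', inferInstance, ?_⟩
      rintro b (rfl | hb) ⟨h1, h2⟩
      · exact hKa h2
      · exact hKB b hb h1
  obtain ⟨K, hK, hKB⟩ := key
  have : ρ.ker.FiniteIndex := by
    have : Finite (G ⧸ ρ.ker) := Finite.of_injective _ (QuotientGroup.kerLift_injective ρ)
    exact Subgroup.finiteIndex_of_finite_quotient
  refine ⟨(K ⊓ ρ.ker).normalCore, inferInstance, inferInstance, ?_, ?_⟩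
  · exact (Subgroup.normalCore_le _).trans inf_le_right
  · intro b hb h
    exact hKB b hb (Subgroup.normalCore_le _ h).1

end

end CD



namespace CD

open scoped Pointwise

section insertion
variable {G V S W : Type u} [Group G] [MulAction G V] [MulAction G S] [MulAction G W]

/-- pairs to be cut open -/
def NP (E : V → V → Prop) (Z : V → Set S) (fib : V → Set W) (j : V → S → W)
    (R : V → V → W → W → Prop) (ax : ℕ → V) (v w : V) (x y : W) : Prop :=
  (E v w ∧ ∃ (k : G) (i : ℕ), (k • ax i = v ∧ k • ax (i + 1) = w) ∨ (k • ax i = w ∧ k • ax (i + 1) = v)) ∧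
  x ∈ fib v ∧ y ∈ fib w ∧ R v w x y ∧ ¬ ∃ s, s ∈ Z v ∧ s ∈ Z w ∧ x = j v s ∧ y = j w s

/-- orbit under the normal subgroup -/
def orb (M : Subgroup G) {X : Type u} [MulAction G X] (n : X) : Set X := {n' | ∃ μ ∈ M, n' = μ • n}

theorem orb_self (M : Subgroup G) {X : Type u} [MulAction G X] (n : X) : n ∈ orb M n :=
  ⟨1, M.one_mem, by simp⟩

theorem orb_smul (M : Subgroup G) [hM : M.Normal] {X : Type u} [MulAction G X] (g : G) (n : X) :
    g • orb M n = orb M (g • n) := by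
  ext x
  rw [Set.mem_smul_set_iff_inv_smul_mem]
  constructor
  · rintro ⟨μ, hμ, h⟩
    refine ⟨g * μ * g⁻¹, hM.conj_mem _ hμ g, ?_⟩
    rw [inv_smul_eq_iff] at h
    rw [h]; simp [mul_smul]
  · rintro ⟨μ, hμ, rfl⟩
    refine ⟨g⁻¹ * μ * g, by simpa using hM.conj_mem _ hμ g⁻¹, ?_⟩
    simp [mul_smul]

theorem orb_eq (M : Subgroup G) {X : Type u} [MulAction G X] {n n' : X} (h : n' ∈ orb M n) :
    orb M n' = orb M n := by
  obtain ⟨μ, hμ, rfl⟩ := h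
  ext x
  constructor
  · rintro ⟨ν, hν, rfl⟩
    exact ⟨ν * μ, M.mul_mem hν hμ, by rw [mul_smul]⟩
  · rintro ⟨ν, hν, rfl⟩
    exact ⟨ν * μ⁻¹, M.mul_mem hν (M.inv_mem hμ), by rw [mul_smul, inv_smul_smul]⟩

/-- the set of labels -/
def BB (M : Subgroup G) (E : V → V → Prop) (Z : V → Set S) (fib : V → Set W) (j : V → S → W)
    (R : V → V → W → W → Prop) (ax : ℕ → V) : Type u :=
  {b : Set (V × V × W × W) // ∃ v w x y, NP (G := G) E Z fib j R ax v w x y ∧ b = orb M (v, w, x, y)}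

/-- new relation -/
def newR (M : Subgroup G) (E : V → V → Prop) (Z : V → Set S) (fib : V → Set W) (j : V → S → W)
    (R : V → V → W → W → Prop) (ax : ℕ → V) (v w : V) :
    W ⊕ BB M E Z fib j R ax → W ⊕ BB M E Z fib j R ax → Prop
  | Sum.inl x, Sum.inl y => R v w x y ∧ ¬ NP (G := G) E Z fib j R ax v w x y
  | Sum.inl x, Sum.inr b => ∃ y, NP (G := G) E Z fib j R ax v w x y ∧ (v, w, x, y) ∈ b.1
  | Sum.inr b, Sum.inl y => ∃ x, NP (G := G) E Z fib j R ax v w x y ∧ (v, w, x, y) ∈ b.1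
  | Sum.inr b, Sum.inr b' => b = b' ∧ ∀ x y, NP (G := G) E Z fib j R ax v w x y → (v, w, x, y) ∉ b.1

/-- new fibres -/
def newfib (M : Subgroup G) (E : V → V → Prop) (Z : V → Set S) (fib : V → Set W) (j : V → S → W)
    (R : V → V → W → W → Prop) (ax : ℕ → V) (v : V) : Set (W ⊕ BB M E Z fib j R ax) :=
  {a | ∀ x, a = Sum.inl x → x ∈ fib v}

variable {E : V → V → Prop} {Z : V → Set S} {fib : V → Set W} {j : V → S → W}
  {R : V → V → W → W → Prop}

theorem NP_smul (hE : ∀ (g : G) v w, E v w → E (g • v) (g • w))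
    (hZ : ∀ (g : G) v s, s ∈ Z v → g • s ∈ Z (g • v))
    (L : LSys (G := G) E Z fib j R) (ax : ℕ → V) (g : G) {v w : V} {x y : W}
    (h : NP (G := G) E Z fib j R ax v w x y) :
    NP (G := G) E Z fib j R ax (g • v) (g • w) (g • x) (g • y) := by
  obtain ⟨⟨h1, k, i, h2⟩, h3, h4, h5, h6⟩ := h
  refine ⟨⟨hE g _ _ h1, g * k, i, ?_⟩, L.fib_smul g _ _ h3, L.fib_smul g _ _ h4,
    L.R_smul g _ _ h1 _ _ h5, ?_⟩
  · rcases h2 with ⟨rfl, rfl⟩ | ⟨rfl, rfl⟩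
    · left; simp [mul_smul]
    · right; simp [mul_smul]
  · rintro ⟨s, s1, s2, s3, s4⟩
    have t1 := hZ g⁻¹ _ _ s1
    have t2 := hZ g⁻¹ _ _ s2
    rw [inv_smul_smul] at t1 t2
    refine h6 ⟨g⁻¹ • s, t1, t2, ?_, ?_⟩
    · have := L.j_smul g v _ t1
      rw [smul_inv_smul, ← s3] at this
      exact smul_left_cancel g this
    · have := L.j_smul g w _ t2
      rw [smul_inv_smul, ← s4] at this
      exact smul_left_cancel g this

theorem NP_smul_iff (hE : ∀ (g : G) v w, E v w → E (g • v) (g • w))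
    (hZ : ∀ (g : G) v s, s ∈ Z v → g • s ∈ Z (g • v))
    (L : LSys (G := G) E Z fib j R) (ax : ℕ → V) (g : G) {v w : V} {x y : W} :
    NP (G := G) E Z fib j R ax (g • v) (g • w) (g • x) (g • y) ↔
    NP (G := G) E Z fib j R ax v w x y := by
  refine ⟨fun h => ?_, NP_smul hE hZ L ax g⟩
  have := NP_smul hE hZ L ax g⁻¹ h
  simpa using this

/-- action on labels -/
def BBact (M : Subgroup G) [M.Normal] (hE : ∀ (g : G) v w, E v w → E (g • v) (g • w))
    (hZ : ∀ (g : G) v s, s ∈ Z v → g • s ∈ Z (g • v))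
    (L : LSys (G := G) E Z fib j R) (ax : ℕ → V) : MulAction G (BB M E Z fib j R ax) where
  smul g b := ⟨g • b.1, by
    obtain ⟨v, w, x, y, h, e⟩ := b.2
    exact ⟨g • v, g • w, g • x, g • y, NP_smul hE hZ L ax g h, by rw [e, orb_smul]; rfl⟩⟩
  one_smul b := Subtype.ext (one_smul G b.1)
  mul_smul g h b := Subtype.ext (mul_smul g h b.1)

theorem BB_eq (M : Subgroup G) {ax : ℕ → V} (b b' : BB M E Z fib j R ax) (n : V × V × W × W)
    (h : n ∈ b.1) (h' : n ∈ b'.1) : b = b' := by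
  obtain ⟨v, w, x, y, _, e⟩ := b.2
  obtain ⟨v', w', x', y', _, e'⟩ := b'.2
  apply Subtype.ext
  rw [e] at h
  rw [e'] at h'
  rw [e, e', ← orb_eq M h, orb_eq M h']

theorem BB_mem (M : Subgroup G) {ax : ℕ → V} (b : BB M E Z fib j R ax) (n n' : V × V × W × W)
    (h : n ∈ b.1) (h' : n' ∈ b.1) : ∃ μ ∈ M, n' = μ • n := by
  obtain ⟨v, w, x, y, _, e⟩ := b.2
  rw [e] at h h'
  rw [← orb_eq M h] at h'
  exact h'

theorem BB_finite (M : Subgroup G) [hMn : M.Normal] [M.FiniteIndex] [Finite W] (ax : ℕ → V) (g : G) (ℓ : ℕ)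
    (hℓ : 0 < ℓ) (hax : ∀ i, ax (i + ℓ) = g • ax i) : Finite (BB M E Z fib j R ax) := by
  classical
  have haxq : ∀ q i, ax (i + q * ℓ) = g ^ q • ax i := by
    intro q
    induction q with
    | zero => intro i; simp
    | succ q ih =>
      intro i
      rw [show i + (q + 1) * ℓ = (i + q * ℓ) + ℓ by ring, hax, ih, pow_succ', mul_smul]
  have key : Set.Finite {b : Set (V × V × W × W) | ∃ v w x y,
      NP (G := G) E Z fib j R ax v w x y ∧ b = orb M (v, w, x, y)} := by
    let Ψ : (G ⧸ M) × Fin ℓ × Bool × W × W → Set (V × V × W × W) := fun c =>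
      if c.2.2.1 then orb M (c.1.out • ax c.2.1, c.1.out • ax (c.2.1 + 1), c.2.2.2.1, c.2.2.2.2)
      else orb M (c.1.out • ax (c.2.1 + 1), c.1.out • ax c.2.1, c.2.2.2.1, c.2.2.2.2)
    refine (Set.finite_range Ψ).subset ?_
    rintro b ⟨v, w, x, y, ⟨⟨h1, k, i, h2⟩, -⟩, rfl⟩
    have hi : i = i % ℓ + (i / ℓ) * ℓ := by rw [mul_comm]; exact (Nat.mod_add_div i ℓ).symm
    have e1 : ax i = g ^ (i / ℓ) • ax (i % ℓ) := by conv_lhs => rw [hi, haxq]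
    have e2 : ax (i + 1) = g ^ (i / ℓ) • ax (i % ℓ + 1) := by
      conv_lhs => rw [hi, add_right_comm, haxq]
    set k' := k * g ^ (i / ℓ) with hk'
    obtain ⟨m, hm⟩ := QuotientGroup.mk_out_eq_mul M k'
    have hμ : k' * m * k'⁻¹ ∈ M := hMn.conj_mem _ m.2 k'
    set μ := k' * m * k'⁻¹ with hμd
    have hout : ((k' : G ⧸ M)).out = μ * k' := by rw [hm, hμd]; group
    rcases h2 with ⟨rfl, rfl⟩ | ⟨rfl, rfl⟩
    · refine ⟨((k' : G ⧸ M), ⟨i % ℓ, Nat.mod_lt _ hℓ⟩, true, μ • x, μ • y), ?_⟩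
      simp only [Ψ, if_true]
      apply orb_eq
      refine ⟨μ, hμ, ?_⟩
      rw [hout, e1, e2, ← mul_smul k, ← mul_smul k, ← hk', mul_smul μ k', mul_smul μ k']
      rfl
    · refine ⟨((k' : G ⧸ M), ⟨i % ℓ, Nat.mod_lt _ hℓ⟩, false, μ • x, μ • y), ?_⟩
      simp only [Ψ, Bool.false_eq_true, if_false]
      apply orb_eq
      refine ⟨μ, hμ, ?_⟩
      rw [hout, e1, e2, ← mul_smul k, ← mul_smul k, ← hk', mul_smul μ k', mul_smul μ k']
      rfl
  exact key.to_subtype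

theorem insertion (hE : ∀ (g : G) v w, E v w → E (g • v) (g • w))
    (hZ : ∀ (g : G) v s, s ∈ Z v → g • s ∈ Z (g • v)) [Finite W]
    (L : LSys (G := G) E Z fib j R) (ax : ℕ → V) (g : G) (ℓ : ℕ) (hℓ : 0 < ℓ)
    (hadj : ∀ i, E (ax i) (ax (i + 1)) ∨ E (ax (i + 1)) (ax i))
    (haxg : ∀ i, ax (i + ℓ) = g • ax i)
    (M : Subgroup G) [hMn : M.Normal] [M.FiniteIndex]
    (hMst : ∀ μ ∈ M, ∀ v : V, μ • v = v → μ = 1)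
    (hax : ∀ i i', i < i' → i' < i + ℓ → ∀ μ ∈ M,
      ¬ (μ • ax i = ax i' ∧ μ • ax (i + 1) = ax (i' + 1)) ∧
      ¬ (μ • ax i = ax (i' + 1) ∧ μ • ax (i + 1) = ax i'))
    (hgM : ∀ μ ∈ M, ∀ v : V, (μ * g) • v ≠ v)
    (hgs : ∀ s : S, g • s ≠ s) :
    ∃ (W' : Type u) (_ : MulAction G W') (_ : Finite W') (fib' : V → Set W') (j' : V → S → W')
      (R' : V → V → W' → W' → Prop), LSys (G := G) E Z fib' j' R' ∧
      ¬ ∃ x : V → W', IsSec E fib' R' x ∧ ∀ v, x (g • v) = g • x v := by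
  classical
  letI := BBact M hE hZ L ax
  have smul_val : ∀ (h : G) (b : BB M E Z fib j R ax), (h • b).1 = h • b.1 := fun h b => rfl
  have hfinB : Finite (BB M E Z fib j R ax) := BB_finite M ax g ℓ hℓ haxg
  have NPs := fun g {v w x y} => NP_smul_iff hE hZ L ax g (v := v) (w := w) (x := x) (y := y)
  letI actW : MulAction G (W ⊕ BB M E Z fib j R ax) :=
    { smul := fun g a => Sum.map (g • ·) (g • ·) a
      one_smul := by
        rintro (x | b)
        · exact congrArg Sum.inl (one_smul G x)
        · exact congrArg Sum.inr (one_smul G b)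
      mul_smul := by
        rintro g h (x | b)
        · exact congrArg Sum.inl (mul_smul g h x)
        · exact congrArg Sum.inr (mul_smul g h b) }
  have smul_inl : ∀ (h : G) (x : W),
      h • (Sum.inl x : W ⊕ BB M E Z fib j R ax) = Sum.inl (h • x) := fun _ _ => rfl
  have smul_inr : ∀ (h : G) (b : BB M E Z fib j R ax),
      h • (Sum.inr b : W ⊕ BB M E Z fib j R ax) = Sum.inr (h • b) := fun _ _ => rfl
  have memg : ∀ (h : G) (b : BB M E Z fib j R ax) v w x y,
      (h • v, h • w, h • x, h • y) ∈ (h • b).1 ↔ (v, w, x, y) ∈ b.1 := by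
    intro h b v w x y
    rw [smul_val, Set.mem_smul_set_iff_inv_smul_mem]
    simp
  have uniq : ∀ (b : BB M E Z fib j R ax) v w x y x' y', (v, w, x, y) ∈ b.1 →
      (v, w, x', y') ∈ b.1 → x' = x ∧ y' = y := by
    intro b v w x y x' y' h h'
    obtain ⟨μ, hμ, e⟩ := BB_mem M b _ _ h h'
    simp only [Prod.smul_mk, Prod.mk.injEq] at e
    have := hMst μ hμ v e.1.symm
    subst this
    simpa using e.2.2
  have fibl : ∀ v x, Sum.inl x ∈ newfib M E Z fib j R ax v ↔ x ∈ fib v := by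
    intro v x
    constructor
    · intro h; exact h x rfl
    · intro h x' e; rw [← Sum.inl.inj e]; exact h
  have fibr : ∀ v b, Sum.inr b ∈ newfib M E Z fib j R ax v := by
    intro v b x e; exact absurd e (by simp)
  let mk : ∀ v w x y, NP (G := G) E Z fib j R ax v w x y → BB M E Z fib j R ax :=
    fun v w x y h => ⟨orb M (v, w, x, y), v, w, x, y, h, rfl⟩
  have mk_mem : ∀ v w x y h, (v, w, x, y) ∈ (mk v w x y h).1 := fun v w x y h => orb_self M _
  have LS : LSys (G := G) E Z (newfib M E Z fib j R ax) (fun v s => Sum.inl (j v s))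
      (newR M E Z fib j R ax) := by
    refine ⟨?_, ?_, ?_, ?_, ?_, ?_, ?_, ?_⟩
    · rintro h v (x | b) hx
      · rw [smul_inl, fibl]; rw [fibl] at hx; exact L.fib_smul h v x hx
      · rw [smul_inr]; exact fibr _ _
    · rintro h v w hvw (x | b) (y | b') hxy
      · exact ⟨L.R_smul h v w hvw x y hxy.1, fun hn => hxy.2 ((NPs h).1 hn)⟩
      · obtain ⟨y, hy, hb⟩ := hxy
        exact ⟨h • y, (NPs h).2 hy, (memg h b' _ _ _ _).2 hb⟩
      · obtain ⟨x, hx, hb⟩ := hxy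
        exact ⟨h • x, (NPs h).2 hx, (memg h b _ _ _ _).2 hb⟩
      · obtain ⟨rfl, hb⟩ := hxy
        refine ⟨rfl, fun x y hn hm => ?_⟩
        have e1 : x = h • (h⁻¹ • x) := by simp
        have e2 : y = h • (h⁻¹ • y) := by simp
        rw [e1, e2] at hn hm
        exact hb _ _ ((NPs h).1 hn) ((memg h b _ _ _ _).1 hm)
    · rintro v w hvw (x | b) hx
      · rw [fibl] at hx
        obtain ⟨y, ⟨hy1, hy2⟩, hyu⟩ := L.fwd v w hvw x hx
        by_cases hn : NP (G := G) E Z fib j R ax v w x y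
        · refine ⟨Sum.inr (mk v w x y hn), ⟨fibr _ _, y, hn, mk_mem v w x y hn⟩, ?_⟩
          rintro (y' | b') ⟨h1, h2⟩
          · rw [fibl] at h1
            have := hyu y' ⟨h1, h2.1⟩
            subst this
            exact absurd hn h2.2
          · obtain ⟨y', hy', hb⟩ := h2
            have := hyu y' ⟨hy'.2.2.1, hy'.2.2.2.1⟩
            subst this
            rw [BB_eq M b' _ _ hb (mk_mem _ _ _ _ hn)]
        · refine ⟨Sum.inl y, ⟨(fibl _ _).2 hy1, hy2, hn⟩, ?_⟩
          rintro (y' | b') ⟨h1, h2⟩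
          · rw [fibl] at h1
            rw [hyu y' ⟨h1, h2.1⟩]
          · obtain ⟨y', hy', hb⟩ := h2
            have := hyu y' ⟨hy'.2.2.1, hy'.2.2.2.1⟩
            subst this
            exact absurd hy' hn
      · by_cases hex : ∃ x y, NP (G := G) E Z fib j R ax v w x y ∧ (v, w, x, y) ∈ b.1
        · obtain ⟨x, y, hn, hb⟩ := hex
          refine ⟨Sum.inl y, ⟨(fibl _ _).2 hn.2.2.1, x, hn, hb⟩, ?_⟩
          rintro (y' | b') ⟨h1, h2⟩
          · obtain ⟨x', hn', hb'⟩ := h2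
            rw [(uniq b _ _ _ _ _ _ hb hb').2]
          · exact absurd hb (h2.2 x y hn)
        · refine ⟨Sum.inr b, ⟨fibr _ _, rfl, fun x y hn hb => hex ⟨x, y, hn, hb⟩⟩, ?_⟩
          rintro (y' | b') ⟨h1, h2⟩
          · obtain ⟨x', hn', hb'⟩ := h2
            exact absurd ⟨x', y', hn', hb'⟩ hex
          · rw [h2.1]
    · rintro v w hvw (y | b) hy
      · rw [fibl] at hy
        obtain ⟨x, ⟨hx1, hx2⟩, hxu⟩ := L.bwd v w hvw y hy
        by_cases hn : NP (G := G) E Z fib j R ax v w x y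
        · refine ⟨Sum.inr (mk v w x y hn), ⟨fibr _ _, x, hn, mk_mem v w x y hn⟩, ?_⟩
          rintro (x' | b') ⟨h1, h2⟩
          · rw [fibl] at h1
            have := hxu x' ⟨h1, h2.1⟩
            subst this
            exact absurd hn h2.2
          · obtain ⟨x', hx', hb⟩ := h2
            have := hxu x' ⟨hx'.2.1, hx'.2.2.2.1⟩
            subst this
            rw [BB_eq M b' _ _ hb (mk_mem _ _ _ _ hn)]
        · refine ⟨Sum.inl x, ⟨(fibl _ _).2 hx1, hx2, hn⟩, ?_⟩
          rintro (x' | b') ⟨h1, h2⟩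
          · rw [fibl] at h1
            rw [hxu x' ⟨h1, h2.1⟩]
          · obtain ⟨x', hx', hb⟩ := h2
            have := hxu x' ⟨hx'.2.1, hx'.2.2.2.1⟩
            subst this
            exact absurd hx' hn
      · by_cases hex : ∃ x y, NP (G := G) E Z fib j R ax v w x y ∧ (v, w, x, y) ∈ b.1
        · obtain ⟨x, y, hn, hb⟩ := hex
          refine ⟨Sum.inl x, ⟨(fibl _ _).2 hn.2.1, y, hn, hb⟩, ?_⟩
          rintro (x' | b') ⟨h1, h2⟩
          · obtain ⟨y', hn', hb'⟩ := h2
            rw [(uniq b _ _ _ _ _ _ hb hb').1]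
          · exact absurd (h2.1 ▸ hb) (h2.2 x y hn)
        · refine ⟨Sum.inr b, ⟨fibr _ _, rfl, fun x y hn hb => hex ⟨x, y, hn, hb⟩⟩, ?_⟩
          rintro (x' | b') ⟨h1, h2⟩
          · obtain ⟨y', hn', hb'⟩ := h2
            exact absurd ⟨x', y', hn', hb'⟩ hex
          · rw [h2.1]
    · intro h v s hs
      simp only [smul_inl, L.j_smul h v s hs]
    · intro v s hs s' hs' e
      exact L.j_inj v hs hs' (Sum.inl.inj e)
    · intro v s hs
      exact (fibl _ _).2 (L.j_mem v hs)
    · intro v w hvw s hs hs'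
      exact ⟨L.j_R v w hvw s hs hs', fun hn => hn.2.2.2.2 ⟨s, hs, hs', rfl, rfl⟩⟩
  refine ⟨W ⊕ BB M E Z fib j R ax, actW, inferInstance, _, _, _, LS, ?_⟩
  rintro ⟨x, ⟨hx1, hx2⟩, hxg⟩
  have hper : ∀ i, x (ax (i + ℓ)) = g • x (ax i) := by intro i; rw [haxg, hxg]
  have hE1 : ∀ i, ∃ (k : G) (i' : ℕ), (k • ax i' = ax i ∧ k • ax (i' + 1) = ax (i + 1)) ∨
      (k • ax i' = ax (i + 1) ∧ k • ax (i' + 1) = ax i) := fun i => ⟨1, i, Or.inl (by simp)⟩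
  have hE2 : ∀ i, ∃ (k : G) (i' : ℕ), (k • ax i' = ax (i + 1) ∧ k • ax (i' + 1) = ax i) ∨
      (k • ax i' = ax i ∧ k • ax (i' + 1) = ax (i + 1)) := fun i => ⟨1, i, Or.inr (by simp)⟩
  let on : ℕ → BB M E Z fib j R ax → Prop := fun i b =>
    ∃ p q, (ax i, ax (i + 1), p, q) ∈ b.1 ∨ (ax (i + 1), ax i, p, q) ∈ b.1
  have LL : ∀ i p q, x (ax i) = Sum.inl p → x (ax (i + 1)) = Sum.inl q →
      ∃ s, s ∈ Z (ax i) ∧ s ∈ Z (ax (i + 1)) ∧ p = j (ax i) s ∧ q = j (ax (i + 1)) s := by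
    intro i p q hp hq
    have h1 := hx1 (ax i)
    have h2 := hx1 (ax (i + 1))
    rw [hp, fibl] at h1
    rw [hq, fibl] at h2
    rcases hadj i with h | h
    · have h3 := hx2 _ _ h
      rw [hp, hq] at h3
      by_contra hc
      exact h3.2 ⟨⟨h, hE1 i⟩, h1, h2, h3.1, hc⟩
    · have h3 := hx2 _ _ h
      rw [hp, hq] at h3
      by_contra hc
      refine h3.2 ⟨⟨h, hE2 i⟩, h2, h1, h3.1, ?_⟩
      rintro ⟨s, s1, s2, s3, s4⟩
      exact hc ⟨s, s2, s1, s4, s3⟩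
  have LR : ∀ i p b, x (ax i) = Sum.inl p → x (ax (i + 1)) = Sum.inr b → on i b := by
    intro i p b hp hq
    rcases hadj i with h | h
    · have h3 := hx2 _ _ h
      rw [hp, hq] at h3
      obtain ⟨y, -, h4⟩ := h3
      exact ⟨_, _, Or.inl h4⟩
    · have h3 := hx2 _ _ h
      rw [hp, hq] at h3
      obtain ⟨y, -, h4⟩ := h3
      exact ⟨_, _, Or.inr h4⟩
  have RL : ∀ i p b, x (ax i) = Sum.inr b → x (ax (i + 1)) = Sum.inl p → on i b := by
    intro i p b hp hq
    rcases hadj i with h | h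
    · have h3 := hx2 _ _ h
      rw [hp, hq] at h3
      obtain ⟨y, -, h4⟩ := h3
      exact ⟨_, _, Or.inl h4⟩
    · have h3 := hx2 _ _ h
      rw [hp, hq] at h3
      obtain ⟨y, -, h4⟩ := h3
      exact ⟨_, _, Or.inr h4⟩
  have RR : ∀ i b b', x (ax i) = Sum.inr b → x (ax (i + 1)) = Sum.inr b' → b' = b := by
    intro i b b' hp hq
    rcases hadj i with h | h
    · have h3 := hx2 _ _ h
      rw [hp, hq] at h3
      exact h3.1.symm
    · have h3 := hx2 _ _ h
      rw [hp, hq] at h3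
      exact h3.1
  have noton : ∀ i i' b, i < i' → i' < i + ℓ → on i b → on i' b → False := by
    rintro i i' b hi hi' ⟨p, q, h⟩ ⟨p', q', h'⟩
    rcases h with h | h <;> rcases h' with h' | h' <;>
      obtain ⟨μ, hμ, e⟩ := BB_mem M b _ _ h h' <;>
      simp only [Prod.smul_mk, Prod.mk.injEq] at e
    · exact (hax i i' hi hi' μ hμ).1 ⟨e.1.symm, e.2.1.symm⟩
    · exact (hax i i' hi hi' μ hμ).2 ⟨e.1.symm, e.2.1.symm⟩
    · exact (hax i i' hi hi' μ hμ).2 ⟨e.2.1.symm, e.1.symm⟩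
    · exact (hax i i' hi hi' μ hμ).1 ⟨e.2.1.symm, e.1.symm⟩
  by_cases hallR : ∀ i, ∃ b, x (ax i) = Sum.inr b
  · obtain ⟨b, hb⟩ := hallR 0
    have hall : ∀ i, x (ax i) = Sum.inr b := by
      intro i
      induction i with
      | zero => exact hb
      | succ i ih =>
        obtain ⟨b', hb'⟩ := hallR (i + 1)
        rw [hb', RR i b b' ih hb']
    have h1 := hper 0
    rw [hall, hall, smul_inr] at h1
    have h2 : g • b = b := (Sum.inr.inj h1).symm
    obtain ⟨v, w, p, q, hn, e⟩ := b.2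
    have hm : (v, w, p, q) ∈ b.1 := by rw [e]; exact orb_self M _
    have hm' := (memg g b v w p q).2 hm
    rw [h2] at hm'
    obtain ⟨μ, hμ, e2⟩ := BB_mem M b _ _ hm hm'
    simp only [Prod.smul_mk, Prod.mk.injEq] at e2
    apply hgM μ⁻¹ (M.inv_mem hμ) v
    rw [mul_smul, e2.1, inv_smul_smul]
  by_cases hallL : ∀ i, ∃ p, x (ax i) = Sum.inl p
  · choose p hp using hallL
    have hs := fun i => LL i (p i) (p (i + 1)) (hp i) (hp (i + 1))
    choose s s1 s2 s3 s4 using hs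
    have hconst : ∀ i, s i = s 0 := by
      intro i
      induction i with
      | zero => rfl
      | succ i ih =>
        rw [← ih]
        apply L.j_inj _ (s1 (i + 1)) (s2 i)
        rw [← s3, ← s4]
    have h1 := hper 0
    rw [hp, hp, smul_inl] at h1
    have h2 := Sum.inl.inj h1
    have h3 := s1 (0 + ℓ)
    rw [s3 0, s3 (0 + ℓ), ← L.j_smul g _ _ (s1 0), hconst] at h2
    rw [hconst, haxg] at h3
    rw [haxg] at h2
    have := L.j_inj _ h3 (hZ g _ _ (s1 0)) h2
    exact hgs _ this.symm
  have notR : ∀ i, (¬ ∃ b, x (ax i) = Sum.inr b) → ∃ p, x (ax i) = Sum.inl p := by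
    intro i h
    rcases hxi : x (ax i) with p | b
    · exact ⟨p, rfl⟩
    · exact absurd ⟨b, hxi⟩ h
  have notL : ∀ i, (¬ ∃ b, x (ax i) = Sum.inl b) → ∃ p, x (ax i) = Sum.inr p := by
    intro i h
    rcases hxi : x (ax i) with p | b
    · exact absurd ⟨p, hxi⟩ h
    · exact ⟨b, rfl⟩
  push Not at hallR hallL
  obtain ⟨i0, hi0⟩ := hallR
  obtain ⟨p0, hp0⟩ := notR i0 (by push Not; exact hi0)
  obtain ⟨k0, hk0⟩ := hallL
  obtain ⟨b0, hb0⟩ := notL k0 (by push Not; exact hk0)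
  have hperR : ∀ m, ∃ b, x (ax (k0 + m * ℓ)) = Sum.inr b := by
    intro m
    induction m with
    | zero => exact ⟨b0, by simpa using hb0⟩
    | succ m ih =>
      obtain ⟨b, hb⟩ := ih
      refine ⟨g • b, ?_⟩
      rw [show k0 + (m + 1) * ℓ = k0 + m * ℓ + ℓ by ring, hper, hb, smul_inr]
  have hi1 : ∃ i p b, x (ax i) = Sum.inl p ∧ x (ax (i + 1)) = Sum.inr b := by
    by_contra hc
    push Not at hc
    have hall : ∀ m, ∃ p, x (ax (i0 + m)) = Sum.inl p := by
      intro m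
      induction m with
      | zero => exact ⟨p0, hp0⟩
      | succ m ih =>
        obtain ⟨p, hp⟩ := ih
        apply notR
        rintro ⟨b, hb⟩
        exact hc _ p b hp hb
    obtain ⟨b, hb⟩ := hperR i0
    have hle : i0 ≤ k0 + i0 * ℓ := le_trans (Nat.le_mul_of_pos_right i0 hℓ) (Nat.le_add_left _ _)
    obtain ⟨m, hm⟩ := Nat.exists_eq_add_of_le hle
    obtain ⟨p, hp⟩ := hall m
    rw [← hm, hb] at hp
    cases hp
  obtain ⟨i, p, b, hp, hb⟩ := hi1
  have honi := LR i p b hp hb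
  have hall : ∀ m, m < ℓ → x (ax (i + 1 + m)) = Sum.inr b := by
    intro m
    induction m with
    | zero => intro _; exact hb
    | succ m ih =>
      intro hm
      have h1 := ih (by omega)
      obtain ⟨b', hb'⟩ := notL (i + 1 + m + 1) (by
        rintro ⟨q, hq⟩
        exact noton i (i + 1 + m) b (by omega) (by omega) honi (RL _ q b h1 hq))
      have := RR _ b b' h1 hb'
      subst this
      exact hb'
  have h1 := hall (ℓ - 1) (by omega)
  rw [show i + 1 + (ℓ - 1) = i + ℓ by omega, hper, hp, smul_inl] at h1
  cases h1

end insertion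

theorem thmB {G V Q : Type u} [Group G] [MulAction G V] {E : V → V → Prop} [Group Q] [Finite Q]
    (hT : IsGTree G E) [Nonempty V] (hQ : ∀ a b : Q, a * b = b * a) (ρ : G →* Q)
    (hst : ∀ (x : G) (v : V), x • v = v → ρ x = 1 → x = 1) (g : G)
    (hgen : ∀ q : Q, q ∈ Subgroup.zpowers (ρ g)) (H : Subgroup G) (hH : H.FG)
    (hg : ∀ k : G, k⁻¹ * g * k ∉ H) :
    ∃ K : Subgroup G, K.FiniteIndex ∧ H ≤ K ∧ ∀ a : G, a⁻¹ * g * a ∉ K := by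
  classical
  obtain ⟨v0⟩ := ‹Nonempty V›
  obtain ⟨T0, hfin, -, hTree⟩ := exists_HTree hT H hH v0 v0
  set T := {w | ∃ h ∈ H, ∃ t ∈ T0, w = h • t} with hTd
  have hZ : ∀ (g : G) v s, s ∈ Zset H T v → g • s ∈ Zset H T (g • v) :=
    fun g v s => Zset_smul _ _ g v s
  have hgs : ∀ s : G ⧸ H, g • s ≠ s := by
    intro s
    obtain ⟨k, rfl⟩ := QuotientGroup.mk_surjective s
    intro h
    rw [MulAction.Quotient.smul_coe, eq_comm, QuotientGroup.eq] at h
    apply hg k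
    simpa [mul_assoc] using h
  obtain ⟨W, _, _, fib, j, R, L, hfix⟩ := completion E hT.smul_E hQ ρ hst
    (Zset H T) hZ (T0.ncard * Nat.card Q)
    (fun v => (Zset_finite ρ hst _ T0 hfin v).1) (fun v => (Zset_finite ρ hst _ T0 hfin v).2)
  rcases hT.axis g with ⟨v, hv⟩ | ⟨ℓ, hℓ, ax, hadj, haxg, hdist⟩
  · obtain ⟨K, hK1, hK2, p, hp, -, hpK⟩ := secstab hT H T v0 hTree L
    refine ⟨K, hK1, hK2, fun a ha => ?_⟩
    obtain ⟨x, hx, hxg⟩ := conj_sec hT L hp g a (hpK _ ha)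
    have h1 := hxg v
    rw [hv] at h1
    obtain ⟨s, hs⟩ := hfix g hgen v hv (x v) (hx.1 v) h1.symm
    exact hgs s hs
  · have haxq : ∀ q i, ax (i + q * ℓ) = g ^ q • ax i := by
      intro q
      induction q with
      | zero => intro i; simp
      | succ q ih =>
        intro i
        rw [show i + (q + 1) * ℓ = (i + q * ℓ) + ℓ by ring, haxg, ih, pow_succ', mul_smul]
    have hQpos : 0 < Nat.card Q := Nat.card_pos
    have hpow : ∀ x : G, ρ (x ^ Nat.card Q) = 1 := by
      intro x; rw [map_pow, pow_card_eq_one']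
    have hsub : ∀ c d : V, {μ : G | ρ μ = 1 ∧ μ • c = d}.Subsingleton := by
      rintro c d μ ⟨h1, h2⟩ ν ⟨h3, h4⟩
      have : ν⁻¹ * μ = 1 := hst _ c (by rw [mul_smul, h2, inv_smul_eq_iff, h4])
        (by rw [map_mul, map_inv, h1, h3]; simp)
      exact (inv_mul_eq_one.1 this).symm
    let B : Set G := {g ^ Nat.card Q} ∪ ⋃ i ∈ Finset.range ℓ, ⋃ i' ∈ Finset.range (2 * ℓ),
      {μ : G | ρ μ = 1 ∧ i < i' ∧ ((μ • ax i = ax i' ∧ μ • ax (i + 1) = ax (i' + 1)) ∨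
        (μ • ax i = ax (i' + 1) ∧ μ • ax (i + 1) = ax i'))}
    have hBfin : B.Finite := by
      refine (Set.finite_singleton _).union ?_
      refine Set.Finite.biUnion (Finset.finite_toSet _) (fun i _ => ?_)
      refine Set.Finite.biUnion (Finset.finite_toSet _) (fun i' _ => ?_)
      refine ((hsub (ax i) (ax i')).finite.union (hsub (ax i) (ax (i' + 1))).finite).subset ?_
      rintro μ ⟨h1, h2, h3 | h3⟩
      · exact Or.inl ⟨h1, h3.1⟩
      · exact Or.inr ⟨h1, h3.1⟩
    have hB1 : (1 : G) ∉ B := by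
      rintro (h | h)
      · have h' : (1 : G) = g ^ Nat.card Q := h
        have e0 := haxq (Nat.card Q) 0
        have e1 := haxq (Nat.card Q) (0 + 1)
        rw [← h', one_smul] at e0 e1
        refine (hdist 0 (0 + Nat.card Q * ℓ) (by positivity)).1 ⟨e0.symm, ?_⟩
        rw [← e1]; congr 1; ring
      · simp only [Set.mem_iUnion] at h
        obtain ⟨i, _, i', _, -, hlt, h⟩ := h
        simp only [one_smul] at h
        rcases h with h | h
        · exact (hdist i i' hlt).1 h
        · exact (hdist i i' hlt).2 h
    haveI : Nonempty V := ⟨v0⟩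
    obtain ⟨M, hM1, hM2, hMker, hMB⟩ := resfin_finite hT hQ ρ hst B hBfin hB1
    have hax : ∀ i i', i < i' → i' < i + ℓ → ∀ μ ∈ M,
      ¬ (μ • ax i = ax i' ∧ μ • ax (i + 1) = ax (i' + 1)) ∧
      ¬ (μ • ax i = ax (i' + 1) ∧ μ • ax (i + 1) = ax i') := by
      intro i i' hlt hlt' μ hμ
      set q := i / ℓ with hq
      obtain ⟨r, hr⟩ : ∃ r, i = r + q * ℓ := ⟨i % ℓ, by rw [mul_comm]; exact (Nat.mod_add_div i ℓ).symm⟩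
      obtain ⟨r', hr'⟩ : ∃ r', i' = r' + q * ℓ := ⟨i' - q * ℓ, by omega⟩
      have hrl : r < ℓ := by
        have := Nat.mod_lt i hℓ
        have h2 := Nat.mod_add_div i ℓ
        rw [mul_comm, ← hq] at h2
        omega
      have e1 : ax i = g ^ q • ax r := by rw [hr, haxq]
      have e2 : ax (i + 1) = g ^ q • ax (r + 1) := by rw [hr, add_right_comm, haxq]
      have e3 : ax i' = g ^ q • ax r' := by rw [hr', haxq]
      have e4 : ax (i' + 1) = g ^ q • ax (r' + 1) := by rw [hr', add_right_comm, haxq]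
      have hμ' : (g ^ q)⁻¹ * μ * (g ^ q) ∈ M := by simpa using hM2.conj_mem μ hμ (g ^ q)⁻¹
      have conv : ∀ a b : V, μ • g ^ q • a = g ^ q • b → ((g ^ q)⁻¹ * μ * (g ^ q)) • a = b := by
        intro a b h
        rw [mul_smul, mul_smul, h, inv_smul_smul]
      have hnB : ¬ ((((g ^ q)⁻¹ * μ * (g ^ q)) • ax r = ax r' ∧
          ((g ^ q)⁻¹ * μ * (g ^ q)) • ax (r + 1) = ax (r' + 1)) ∨
          (((g ^ q)⁻¹ * μ * (g ^ q)) • ax r = ax (r' + 1) ∧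
          ((g ^ q)⁻¹ * μ * (g ^ q)) • ax (r + 1) = ax r')) := by
        intro h
        apply hMB _ _ hμ'
        right
        simp only [Set.mem_iUnion]
        exact ⟨r, Finset.mem_range.2 hrl, r', Finset.mem_range.2 (by omega), hMker hμ', by omega, h⟩
      rw [e1, e2, e3, e4]
      exact ⟨fun h => hnB (Or.inl ⟨conv _ _ h.1, conv _ _ h.2⟩),
        fun h => hnB (Or.inr ⟨conv _ _ h.1, conv _ _ h.2⟩)⟩
    have hgM : ∀ μ ∈ M, ∀ v : V, (μ * g) • v ≠ v := by
      intro μ hμ v hv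
      have h1 : (μ * g) ^ Nat.card Q = 1 := by
        apply hst _ v _ (hpow _)
        have : μ * g ∈ MulAction.stabilizer G v := hv
        exact Subgroup.pow_mem _ this _
      apply hMB (g ^ Nat.card Q) (Or.inl rfl)
      have h2 := congrArg (QuotientGroup.mk' M) h1
      rw [map_pow, map_mul, map_one] at h2
      have h3 : QuotientGroup.mk' M μ = 1 := (QuotientGroup.eq_one_iff μ).2 hμ
      rw [h3, one_mul, ← map_pow] at h2
      exact (QuotientGroup.eq_one_iff _).1 h2
    obtain ⟨W', _, _, fib', j', R', L', hno⟩ := insertion hT.smul_E hZ L ax g ℓ hℓ hadj haxg M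
      (fun μ hμ v hv => hst μ v hv (hMker hμ)) hax hgM hgs
    obtain ⟨K, hK1, hK2, p, hp, -, hpK⟩ := secstab hT H T v0 hTree L'
    refine ⟨K, hK1, hK2, fun a ha => hno ?_⟩
    exact conj_sec hT L' hp g a (hpK _ ha)

end CD



namespace CD

open scoped Pointwise

/-- a pocset of tree type with a group action -/
structure PocTree (G : Type u) {P : Type u} [Group G] [PartialOrder P] [MulAction G P]
    (c : P → P) (pos : P → Prop) (base : Set P) : Prop where
  cc : ∀ a, c (c a) = a
  anti : ∀ a b, a ≤ b → c b ≤ c a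
  irr : ∀ a, ¬ c a ≤ a
  nest : ∀ a b, a ≤ b ∨ a ≤ c b ∨ c a ≤ b ∨ b ≤ a
  smul_le : ∀ (g : G) (a b : P), a ≤ b → g • a ≤ g • b
  smul_c : ∀ (g : G) (a : P), g • c a = c (g • a)
  smul_pos : ∀ (g : G) (a : P), pos (g • a) ↔ pos a
  pos_c : ∀ a, pos (c a) ↔ ¬ pos a
  base_up : ∀ a b, a ∈ base → a ≤ b → b ∈ base
  base_c : ∀ a, a ∈ base ↔ c a ∉ base
  base_fin : ∀ g : G, (base \ g • base).Finite

/-- vertices of the dual tree -/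
structure IsV {P : Type u} [PartialOrder P] (c : P → P) (base o : Set P) : Prop where
  up : ∀ a b, a ∈ o → a ≤ b → b ∈ o
  comp : ∀ a, a ∈ o ↔ c a ∉ o
  fin : (o \ base).Finite

/-- edges -/
def PEdge {P : Type u} (c : P → P) (a : P) (o o' : Set P) : Prop :=
  a ∈ o ∧ c a ∈ o' ∧ ∀ d, d ≠ a → d ≠ c a → (d ∈ o ↔ d ∈ o')

/-- flipping an element -/
def pflip {P : Type u} (c : P → P) (o : Set P) (a : P) : Set P := (o \ {a}) ∪ {c a}

/-- abstract rooted tree recursion -/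
inductive Reach {V W : Type u} (par : V → V) (fib : V → Set W) (Rel : V → W → W → Prop)
    (v : V) (x : W) : V → W → Prop
  | root : Reach par fib Rel v x v x
  | step (w : V) (y y' : W) : w ≠ v → Reach par fib Rel v x (par w) y' → y ∈ fib w →
      Rel w y y' → Reach par fib Rel v x w y

theorem rooted_sec {V : Type u} (E : V → V → Prop) (hE : ∀ a b, E a b → ¬ E b a)
    (par : V → V) (n : V → ℕ) (v : V) (hn : ∀ w, w ≠ v → n (par w) < n w)
    (hpar : ∀ w, w ≠ v → E w (par w) ∨ E (par w) w)
    (hedge : ∀ w w', E w w' → (w ≠ v ∧ w' = par w) ∨ (w' ≠ v ∧ w = par w'))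
    (W : Type u) (fib : V → Set W) (R : V → V → W → W → Prop)
    (h1 : ∀ v w, E v w → ∀ x ∈ fib v, ∃! y, y ∈ fib w ∧ R v w x y)
    (h2 : ∀ v w, E v w → ∀ y ∈ fib w, ∃! x, x ∈ fib v ∧ R v w x y)
    (x : W) (hx : x ∈ fib v) : ∃! s : V → W, (∀ v, s v ∈ fib v) ∧
      (∀ v w, E v w → R v w (s v) (s w)) ∧ s v = x := by
  let Rel : V → W → W → Prop := fun w y y' => (E w (par w) ∧ R w (par w) y y') ∨
    (E (par w) w ∧ R (par w) w y' y)
  have hRel : ∀ w, w ≠ v → ∀ y' ∈ fib (par w), ∃! y, y ∈ fib w ∧ Rel w y y' := by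
    intro w hw y' hy'
    rcases hpar w hw with h | h
    · obtain ⟨y, hy, hu⟩ := h2 _ _ h y' hy'
      refine ⟨y, ⟨hy.1, Or.inl ⟨h, hy.2⟩⟩, ?_⟩
      rintro z ⟨hz, hz' | hz'⟩
      · exact hu z ⟨hz, hz'.2⟩
      · exact absurd hz'.1 (hE _ _ h)
    · obtain ⟨y, hy, hu⟩ := h1 _ _ h y' hy'
      refine ⟨y, ⟨hy.1, Or.inr ⟨h, hy.2⟩⟩, ?_⟩
      rintro z ⟨hz, hz' | hz'⟩
      · exact absurd hz'.1 (hE _ _ h)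
      · exact hu z ⟨hz, hz'.2⟩
  have hRv : ∀ y, Reach par fib Rel v x v y → y = x := by
    intro y hy
    cases hy with
    | root => rfl
    | step _ _ y' hw => exact absurd rfl hw
  have hfib : ∀ w y, Reach par fib Rel v x w y → y ∈ fib w := by
    intro w y h
    cases h with
    | root => exact hx
    | step _ _ y' hw _ h _ => exact h
  have hex : ∀ N w, n w ≤ N → ∃! y, Reach par fib Rel v x w y := by
    intro N
    induction N with
    | zero =>
      intro w hw
      have : w = v := by
        by_contra h
        have := hn w h
        omega
      subst this
      exact ⟨x, Reach.root, hRv⟩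
    | succ N ih =>
      intro w hw
      by_cases hwv : w = v
      · subst hwv
        exact ⟨x, Reach.root, hRv⟩
      · obtain ⟨y', hy', hu'⟩ := ih (par w) (by have := hn w hwv; omega)
        obtain ⟨y, hy, hu⟩ := hRel w hwv y' (hfib _ _ hy')
        refine ⟨y, Reach.step w y y' hwv hy' hy.1 hy.2, ?_⟩
        intro z hz
        cases hz with
        | root => exact absurd rfl hwv
        | step _ _ z' _ ha hb hc =>
          have := hu' z' ha
          subst this
          exact hu z ⟨hb, hc⟩
  choose s hs hsu using fun w => hex (n w) w le_rfl
  have hstep : ∀ w, w ≠ v → Rel w (s w) (s (par w)) := by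
    intro w hw
    have := hs w
    generalize s w = y at this
    cases this with
    | root => exact absurd rfl hw
    | step _ _ z' _ ha hb hc => rw [← hsu _ _ ha]; exact hc
  refine ⟨s, ⟨fun w => hfib _ _ (hs w), ?_, hRv _ (hs v)⟩, ?_⟩
  · intro w w' h
    rcases hedge w w' h with ⟨hw, rfl⟩ | ⟨hw, rfl⟩
    · rcases hstep w hw with h' | h'
      · exact h'.2
      · exact absurd h'.1 (hE _ _ h)
    · rcases hstep w' hw with h' | h'
      · exact absurd h'.1 (hE _ _ h)
      · exact h'.2
  · rintro t ⟨ht1, ht2, ht3⟩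
    funext w
    apply hsu
    have : ∀ N w, n w ≤ N → Reach par fib Rel v x w (t w) := by
      intro N
      induction N with
      | zero =>
        intro w hw
        have : w = v := by
          by_contra h
          have := hn w h
          omega
        subst this
        rw [ht3]; exact Reach.root
      | succ N ih =>
        intro w hw
        by_cases hwv : w = v
        · subst hwv
          rw [ht3]; exact Reach.root
        · refine Reach.step w _ (t (par w)) hwv (ih (par w) (by have := hn w hwv; omega)) (ht1 w) ?_
          rcases hpar w hwv with h | h
          · exact Or.inl ⟨h, ht2 _ _ h⟩
          · exact Or.inr ⟨h, ht2 _ _ h⟩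
    exact this _ w le_rfl

section
variable {G P : Type u} [Group G] [PartialOrder P] [MulAction G P]
  {c : P → P} {pos : P → Prop} {base : Set P}

theorem IsV.diff_fin (T : PocTree G c pos base) {o o' : Set P} (h : IsV c base o)
    (h' : IsV c base o') : (o \ o').Finite := by
  have : o \ o' ⊆ (o \ base) ∪ c '' (o' \ base) := by
    rintro d ⟨hd, hd'⟩
    by_cases hb : d ∈ base
    · right
      refine ⟨c d, ⟨?_, ?_⟩, T.cc d⟩
      · rw [h'.comp, T.cc]; exact hd'
      · exact (T.base_c d).1 hb
    · exact Or.inl ⟨hd, hb⟩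
  exact (h.fin.union (h'.fin.image _)).subset this

theorem IsV.eq_of_diff (T : PocTree G c pos base) {o o' : Set P} (h : IsV c base o)
    (h' : IsV c base o') (e : o \ o' = ∅) : o = o' := by
  have hs : o ⊆ o' := Set.sdiff_eq_empty.1 e
  apply Set.Subset.antisymm hs
  intro d hd
  rw [h.comp]
  intro hcd
  exact (h'.comp d).1 hd (hs hcd)

theorem IsV.flip (T : PocTree G c pos base) {o : Set P} (h : IsV c base o) {a : P} (ha : a ∈ o)
    (hmin : ∀ d ∈ o, d ≤ a → d = a) : IsV c base (pflip c o a) := by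
  have hne : c a ≠ a := fun e => T.irr a e.le
  refine ⟨?_, ?_, ?_⟩
  · rintro x y (⟨hx, hxa⟩ | hx) hxy
    · left
      refine ⟨h.up x y hx hxy, ?_⟩
      intro e
      rw [Set.mem_singleton_iff] at e
      subst e
      exact hxa (hmin x hx hxy)
    · rw [Set.mem_singleton_iff] at hx
      subst hx
      by_cases hy : y ∈ o
      · left
        refine ⟨hy, fun e => ?_⟩
        rw [Set.mem_singleton_iff] at e
        subst e
        exact T.irr _ hxy
      · right
        have hcy : c y ∈ o := by rw [h.comp, T.cc]; exact hy
        have := T.anti _ _ hxy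
        rw [T.cc] at this
        have := hmin _ hcy this
        rw [Set.mem_singleton_iff, ← this, T.cc]
  · intro d
    simp only [pflip, Set.mem_union, Set.mem_sdiff, Set.mem_singleton_iff]
    by_cases h1 : d = a
    · subst h1
      constructor
      · rintro (h2 | h2)
        · exact absurd rfl h2.2
        · exact absurd h2.symm hne
      · intro h2
        exact absurd (Or.inr rfl) h2
    · by_cases h2 : d = c a
      · subst h2
        rw [T.cc]
        constructor
        · intro _
          rintro (h3 | h3)
          · exact h3.2 rfl
          · exact hne h3.symm
        · intro _; exact Or.inr rfl
      · have h3 : c d ≠ a := fun e => h2 (by rw [← e, T.cc])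
        have h4 : c d ≠ c a := fun e => h1 (by rw [← T.cc d, e, T.cc])
        have := h.comp d
        tauto
  · apply (h.fin.insert (c a)).subset
    rintro d ⟨⟨hd, _⟩ | hd, hb⟩
    · exact Or.inr ⟨hd, hb⟩
    · exact Or.inl hd

theorem PEdge_flip (T : PocTree G c pos base) {o : Set P} (h : IsV c base o) {a : P}
    (ha : a ∈ o) : PEdge c a o (pflip c o a) := by
  refine ⟨ha, Or.inr rfl, ?_⟩
  intro d h1 h2
  simp only [pflip, Set.mem_union, Set.mem_sdiff, Set.mem_singleton_iff]
  tauto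

theorem PEdge.eq_flip {a : P} {o o' : Set P} (h' : IsV c base o')
    (he : PEdge c a o o') : o' = pflip c o a := by
  obtain ⟨h1, h2, h3⟩ := he
  ext d
  simp only [pflip, Set.mem_union, Set.mem_sdiff, Set.mem_singleton_iff]
  by_cases e1 : d = a
  · subst e1
    have := h'.comp d
    constructor
    · intro hd; exact absurd h2 (this.1 hd)
    · rintro (h | h)
      · exact absurd rfl h.2
      · rw [h]; exact h2
  · by_cases e2 : d = c a
    · subst e2
      tauto
    · have := h3 d e1 e2
      tauto

theorem PEdge.symm' (T : PocTree G c pos base) {a : P} {o o' : Set P} (he : PEdge c a o o') :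
    PEdge c (c a) o' o := by
  obtain ⟨h1, h2, h3⟩ := he
  refine ⟨h2, by rw [T.cc]; exact h1, fun d e1 e2 => ?_⟩
  rw [T.cc] at e2
  exact (h3 d e2 e1).symm

theorem PEdge.min (T : PocTree G c pos base) {a : P} {o o' : Set P} (h' : IsV c base o')
    (he : PEdge c a o o') : ∀ d ∈ o, d ≤ a → d = a := by
  obtain ⟨h1, h2, h3⟩ := he
  intro d hd hda
  by_contra hne
  have h4 : d ≠ c a := by rintro rfl; exact T.irr _ hda
  have h5 := h'.up _ _ ((h3 d hne h4).1 hd) hda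
  exact (h'.comp a).1 h5 h2

theorem PEdge.label (T : PocTree G c pos base) {a b : P} {o o' : Set P} (h : IsV c base o)
    (h' : IsV c base o') (he : PEdge c a o o') (he' : PEdge c b o o') : a = b := by
  by_contra hne
  by_cases hca : b = c a
  · subst hca
    exact (h.comp a).1 he.1 he'.1
  · have := (he.2.2 b (Ne.symm hne) hca).1 he'.1
    exact (h'.comp b).1 this he'.2.1

theorem chain_diff (T : PocTree G c pos base) {o o' : Set P} (h : IsV c base o)
    (h' : IsV c base o') {a b : P} (ha : a ∈ o \ o') (hb : b ∈ o \ o') : a ≤ b ∨ b ≤ a := by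
  rcases T.nest a b with h1 | h1 | h1 | h1
  · exact Or.inl h1
  · exact absurd (h.up _ _ ha.1 h1) ((h.comp b).1 hb.1)
  · have : c a ∈ o' := by rw [h'.comp, T.cc]; exact ha.2
    exact absurd (h'.up _ _ this h1) hb.2
  · exact Or.inr h1

theorem exists_least (T : PocTree G c pos base) {o o' : Set P} (h : IsV c base o)
    (h' : IsV c base o') (hne : o ≠ o') : ∃ a ∈ o \ o', ∀ d ∈ o \ o', a ≤ d := by
  have hn : (o \ o').Nonempty := by
    rw [Set.nonempty_iff_ne_empty]
    intro e
    exact hne (h.eq_of_diff T h' e)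
  obtain ⟨a, ha, hmin⟩ := (h.diff_fin T h').exists_minimal hn
  refine ⟨a, ha, fun d hd => ?_⟩
  rcases chain_diff T h h' ha hd with h1 | h1
  · exact h1
  · exact hmin hd h1

theorem least_min {o o' : Set P} (h' : IsV c base o') {a : P} (ha : a ∈ o \ o')
    (hl : ∀ d ∈ o \ o', a ≤ d) : ∀ d ∈ o, d ≤ a → d = a := by
  intro d hd hda
  apply le_antisymm hda
  apply hl
  refine ⟨hd, fun hd' => ha.2 (h'.up _ _ hd' hda)⟩

theorem flip_diff (T : PocTree G c pos base) {o o' : Set P}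
    (h' : IsV c base o') {a : P} (ha : a ∈ o \ o') : pflip c o a \ o' = (o \ o') \ {a} := by
  have h1 : c a ∈ o' := by rw [h'.comp, T.cc]; exact ha.2
  ext d
  simp only [pflip, Set.mem_union, Set.mem_sdiff, Set.mem_singleton_iff]
  constructor
  · rintro ⟨h2 | h2, h3⟩
    · tauto
    · subst h2; exact absurd h1 h3
  · tauto

theorem smul_IsV (T : PocTree G c pos base) (g : G) {o : Set P} (h : IsV c base o) :
    IsV c base (g • o) := by
  refine ⟨?_, ?_, ?_⟩
  · intro a b ha hab
    rw [Set.mem_smul_set_iff_inv_smul_mem] at *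
    exact h.up _ _ ha (T.smul_le _ _ _ hab)
  · intro a
    rw [Set.mem_smul_set_iff_inv_smul_mem, Set.mem_smul_set_iff_inv_smul_mem, T.smul_c]
    exact h.comp _
  · have h1 : (g • (o \ base)).Finite := h.fin.smul_set
    have h2 : (g • (base \ g⁻¹ • base)).Finite := (T.base_fin g⁻¹).smul_set
    apply (h1.union h2).subset
    rintro d ⟨hd, hd'⟩
    rw [Set.mem_smul_set_iff_inv_smul_mem] at hd
    rw [Set.mem_union, Set.mem_smul_set_iff_inv_smul_mem, Set.mem_smul_set_iff_inv_smul_mem]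
    by_cases hb : g⁻¹ • d ∈ base
    · right
      refine ⟨hb, ?_⟩
      rw [Set.smul_mem_smul_set_iff]; exact hd'
    · exact Or.inl ⟨hd, hb⟩

theorem smul_PEdge (T : PocTree G c pos base) (g : G) {a : P} {o o' : Set P}
    (h : PEdge c a o o') : PEdge c (g • a) (g • o) (g • o') := by
  obtain ⟨h1, h2, h3⟩ := h
  refine ⟨Set.smul_mem_smul_set h1, by rw [← T.smul_c]; exact Set.smul_mem_smul_set h2, ?_⟩
  intro d e1 e2
  rw [Set.mem_smul_set_iff_inv_smul_mem, Set.mem_smul_set_iff_inv_smul_mem]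
  apply h3
  · rintro rfl; simp at e1
  · intro e
    apply e2
    rw [← T.smul_c, ← e, smul_inv_smul]

theorem path_lemma [Nonempty P] (T : PocTree G c pos base) (ℓ : ℕ) : ∀ {o o' : Set P}, IsV c base o →
    IsV c base o' → (o \ o').ncard = ℓ → ∃ (v : ℕ → Set P) (d : ℕ → P), v 0 = o ∧ v ℓ = o' ∧
      (∀ i, IsV c base (v i)) ∧ (∀ i < ℓ, PEdge c (d i) (v i) (v (i + 1))) ∧
      (∀ i < ℓ, d i ∈ o \ o') ∧ (∀ i, i + 1 < ℓ → d i < d (i + 1)) ∧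
      (0 < ℓ → ∀ x ∈ o \ o', d 0 ≤ x) := by
  induction ℓ with
  | zero =>
    intro o o' h h' e
    rw [Set.ncard_eq_zero (h.diff_fin T h')] at e
    have := h.eq_of_diff T h' e
    subst this
    obtain ⟨p⟩ := ‹Nonempty P›
    exact ⟨fun _ => o, fun _ => p, rfl, rfl, fun _ => h, by simp, by simp, by simp, by simp⟩
  | succ ℓ ih =>
    intro o o' h h' e
    have hne : o ≠ o' := by rintro rfl; simp at e
    obtain ⟨a, ha, hl⟩ := exists_least T h h' hne
    have hm := least_min h' ha hl
    have hf := h.flip T ha.1 hm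
    have hd := flip_diff T h' ha
    have hcard : (pflip c o a \ o').ncard = ℓ := by
      rw [hd, Set.ncard_sdiff_singleton_of_mem ha, e]; rfl
    obtain ⟨v, d, hv0, hvℓ, hvV, hve, hvd, hvm, hvl⟩ := ih hf h' hcard
    refine ⟨fun i => if i = 0 then o else v (i - 1), fun i => if i = 0 then a else d (i - 1), by simp,
      by simpa using hvℓ, ?_, ?_, ?_, ?_, ?_⟩
    · intro i
      by_cases hi : i = 0
      · simpa [hi] using h
      · simpa [hi] using hvV _
    · rintro (_ | i) hi
      · simp only [if_true, zero_add, one_ne_zero, if_false, Nat.sub_self, hv0]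
        exact PEdge_flip T h ha.1
      · simpa using hve i (by omega)
    · rintro (_ | i) hi
      · simpa using ha
      · have := hvd i (by omega)
        rw [hd] at this
        simpa using this.1
    · rintro (_ | i) hi
      · have := hvd 0 (by omega)
        rw [hd] at this
        simp only [if_true, zero_add, one_ne_zero, if_false, Nat.sub_self]
        exact lt_of_le_of_ne (hl _ this.1) (fun e => this.2 e.symm)
      · simpa using hvm i (by omega)
    · intro _ x hx
      simpa using hl x hx

end

end CD



namespace CD

open scoped Pointwise

/-- type of vertices -/
def Vtx {P : Type u} [PartialOrder P] (c : P → P) (base : Set P) : Type u :=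
  {o : Set P // IsV c base o}

section
variable {G P : Type u} [Group G] [PartialOrder P] [MulAction G P]
  {c : P → P} {pos : P → Prop} {base : Set P}

/-- action on vertices -/
@[reducible]
def vtxAct (T : PocTree G c pos base) : MulAction G (Vtx c base) where
  smul g o := ⟨g • o.1, smul_IsV T g o.2⟩
  one_smul o := Subtype.ext (one_smul G o.1)
  mul_smul g h o := Subtype.ext (mul_smul g h o.1)

theorem vtx_nonempty (T : PocTree G c pos base) : Nonempty (Vtx c base) :=
  ⟨⟨base, T.base_up, T.base_c, by simp⟩⟩

theorem axis_aux (T : PocTree G c pos base) (g : G) (o : Set P) (ho : IsV c base o)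
    (hmin : ∀ o', IsV c base o' → (o \ g • o).ncard ≤ (o' \ g • o').ncard)
    (hne : o ≠ g • o) : ∃ ℓ : ℕ, 0 < ℓ ∧ ∃ (v : ℕ → Set P) (d : ℕ → P),
      (∀ i, IsV c base (v i)) ∧ (∀ i, PEdge c (d i) (v i) (v (i + 1))) ∧
      (∀ i, v (i + ℓ) = g • v i) ∧ StrictMono d := by
  have hgo := smul_IsV T g ho
  obtain ⟨a, ha, hl⟩ := exists_least T ho hgo hne
  have hm := least_min hgo ha hl
  have hinv : ∀ h : G, ∀ b : P, c (h • b) ≠ b := by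
    intro h b e
    have h1 := T.pos_c (h • b)
    rw [e, T.smul_pos] at h1
    tauto
  have hga : g • a ∈ o := by
    by_contra hga
    have h1 := hmin _ (ho.flip T ha.1 hm)
    have h2 : pflip c o a \ g • pflip c o a ⊆ (o \ g • o) \ {a} := by
      rintro d ⟨hd, hd'⟩
      have hca : c a ∈ g • pflip c o a := by
        have h3 : c a ∈ g • o := by rw [hgo.comp, T.cc]; exact ha.2
        rw [Set.mem_smul_set_iff_inv_smul_mem] at h3 ⊢
        left
        refine ⟨h3, fun e => ?_⟩
        rw [Set.mem_singleton_iff, T.smul_c] at e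
        exact hinv _ _ e
      rcases hd with hd | hd
      · refine ⟨⟨hd.1, fun h3 => hd' ?_⟩, hd.2⟩
        rw [Set.mem_smul_set_iff_inv_smul_mem] at h3 ⊢
        left
        refine ⟨h3, fun e => hga ?_⟩
        rw [Set.mem_singleton_iff] at e
        rw [← e, smul_inv_smul]
        exact hd.1
      · rw [Set.mem_singleton_iff] at hd
        rw [hd] at hd'
        exact absurd hca hd'
    have hfin := ho.diff_fin T hgo
    have h3 := Set.ncard_le_ncard h2 hfin.sdiff
    have h4 := Set.ncard_sdiff_singleton_lt_of_mem ha hfin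
    omega
  haveI : Nonempty P := ⟨a⟩
  obtain ⟨v, d, hv0, hvℓ, hvV, hve, hvd, hvm, hvl⟩ := path_lemma T _ ho hgo rfl
  set ℓ := (o \ g • o).ncard with hℓ
  have hpos : 0 < ℓ := by
    rw [hℓ, Set.ncard_pos (ho.diff_fin T hgo)]; exact ⟨a, ha⟩
  have hd0 : d 0 = a := le_antisymm (hvl hpos a ha) (hl _ (hvd 0 hpos))
  -- last element below the translate of the first
  have hlast : d (ℓ - 1) < g • a := by
    have hmm := hvd (ℓ - 1) (by omega)
    generalize d (ℓ - 1) = m at hmm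
    have hgago : g • a ∈ g • o := Set.smul_mem_smul_set ha.1
    have hne : m ≠ g • a := fun e => hmm.2 (e ▸ hgago)
    rcases T.nest m (g • a) with h1 | h1 | h1 | h1
    · exact lt_of_le_of_ne h1 hne
    · exact absurd (ho.up _ _ hmm.1 h1) ((ho.comp _).1 hga)
    · exfalso
      have h2 : c (g⁻¹ • m) ≤ a := by
        have := T.smul_le g⁻¹ _ _ h1
        rwa [T.smul_c, inv_smul_smul] at this
      have h3 : c (g⁻¹ • m) ∈ o := by
        rw [ho.comp, T.cc, ← Set.mem_smul_set_iff_inv_smul_mem]; exact hmm.2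
      have h4 := hm _ h3 h2
      have h5 : c m = g • a := by rw [← h4, T.smul_c, smul_inv_smul]
      rw [← h5] at hga
      exact (ho.comp m).1 hmm.1 hga
    · exact absurd (hgo.up _ _ hgago h1) hmm.2
  refine ⟨ℓ, hpos, fun i => g ^ (i / ℓ) • v (i % ℓ), fun i => g ^ (i / ℓ) • d (i % ℓ), ?_, ?_, ?_, ?_⟩
  · intro i; exact smul_IsV T _ (hvV _)
  · intro i
    have h1 := smul_PEdge T (g ^ (i / ℓ)) (hve (i % ℓ) (Nat.mod_lt _ hpos))
    by_cases hlt : i % ℓ + 1 = ℓ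
    · have e1 : i + 1 = (i / ℓ + 1) * ℓ := by
        have := Nat.mod_add_div i ℓ
        rw [add_mul, mul_comm (i / ℓ)]; omega
      have e2 : (i + 1) % ℓ = 0 := by rw [e1]; simp
      have e3 : (i + 1) / ℓ = i / ℓ + 1 := by rw [e1]; exact Nat.mul_div_cancel _ hpos
      rw [hlt, hvℓ] at h1
      simp only [e2, e3, hv0, pow_succ, mul_smul]
      exact h1
    · have h2 := Nat.mod_lt i hpos
      have e1 : i + 1 = (i % ℓ + 1) + ℓ * (i / ℓ) := by
        have := Nat.mod_add_div i ℓ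
        omega
      have e2 : (i + 1) % ℓ = i % ℓ + 1 := by
        conv_lhs => rw [e1, Nat.add_mul_mod_self_left]
        exact Nat.mod_eq_of_lt (by omega)
      have e3 : (i + 1) / ℓ = i / ℓ := by
        conv_lhs => rw [e1, Nat.add_mul_div_left _ _ hpos]
        rw [Nat.div_eq_of_lt (show i % ℓ + 1 < ℓ by omega), zero_add]
      simp only [e2, e3]
      exact h1
  · intro i
    simp only [Nat.add_mod_right, Nat.add_div_right _ hpos, pow_succ', mul_smul]
  · apply strictMono_nat_of_lt_succ
    intro i
    have hlt' : ∀ (h : G) (x y : P), x < y → h • x < h • y := by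
      intro h x y hxy
      refine lt_of_le_of_ne (T.smul_le _ _ _ hxy.le) ?_
      intro e
      exact hxy.ne (smul_left_cancel _ e)
    by_cases hlt : i % ℓ + 1 = ℓ
    · have e1 : i + 1 = (i / ℓ + 1) * ℓ := by
        have := Nat.mod_add_div i ℓ
        rw [add_mul, mul_comm (i / ℓ)]; omega
      have e2 : (i + 1) % ℓ = 0 := by rw [e1]; simp
      have e3 : (i + 1) / ℓ = i / ℓ + 1 := by rw [e1]; exact Nat.mul_div_cancel _ hpos
      have e4 : i % ℓ = ℓ - 1 := by omega
      simp only [e2, e3, hd0, pow_succ, mul_smul, e4]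
      exact hlt' _ _ _ hlast
    · have h2 := Nat.mod_lt i hpos
      have e1 : i + 1 = (i % ℓ + 1) + ℓ * (i / ℓ) := by
        have := Nat.mod_add_div i ℓ
        omega
      have e2 : (i + 1) % ℓ = i % ℓ + 1 := by
        conv_lhs => rw [e1, Nat.add_mul_mod_self_left]
        exact Nat.mod_eq_of_lt (by omega)
      have e3 : (i + 1) / ℓ = i / ℓ := by
        conv_lhs => rw [e1, Nat.add_mul_div_left _ _ hpos]
        rw [Nat.div_eq_of_lt (show i % ℓ + 1 < ℓ by omega), zero_add]
      simp only [e2, e3]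
      exact hlt' _ _ _ (hvm _ (by omega))

theorem pocGTree (T : PocTree G c pos base) : letI := vtxAct T
    IsGTree G (fun v w : Vtx c base => ∃ a, pos a ∧ PEdge c a v.1 w.1) := by
  classical
  letI := vtxAct T
  have smul_val : ∀ (g : G) (v : Vtx c base), (g • v).1 = g • v.1 := fun _ _ => rfl
  have adj : ∀ (v w : Vtx c base) a, PEdge c a v.1 w.1 →
      (∃ a, pos a ∧ PEdge c a v.1 w.1) ∨ (∃ a, pos a ∧ PEdge c a w.1 v.1) := by
    intro v w a h
    by_cases hp : pos a
    · exact Or.inl ⟨a, hp, h⟩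
    · exact Or.inr ⟨c a, (T.pos_c a).2 hp, h.symm' T⟩
  refine ⟨?_, ?_, ?_, ?_⟩
  · rintro g v w ⟨a, hp, he⟩
    exact ⟨g • a, (T.smul_pos g a).2 hp, smul_PEdge T g he⟩
  · intro v w
    have : ∀ n, ∀ v : Vtx c base, (v.1 \ w.1).ncard = n → Relation.ReflTransGen
        (fun a b : Vtx c base => (∃ d, pos d ∧ PEdge c d a.1 b.1) ∨
          (∃ d, pos d ∧ PEdge c d b.1 a.1)) v w := by
      intro n
      induction n with
      | zero =>
        intro v e
        rw [Set.ncard_eq_zero (v.2.diff_fin T w.2)] at e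
        have := Subtype.ext (v.2.eq_of_diff T w.2 e)
        rw [this]
      | succ n ih =>
        intro v e
        have hne : v.1 ≠ w.1 := by intro h; rw [h] at e; simp at e
        obtain ⟨a, ha, hl⟩ := exists_least T v.2 w.2 hne
        have hm := least_min w.2 ha hl
        have hf := v.2.flip T ha.1 hm
        have hd := flip_diff T w.2 ha
        refine Relation.ReflTransGen.head (adj v ⟨_, hf⟩ a (PEdge_flip T v.2 ha.1)) (ih ⟨_, hf⟩ ?_)
        rw [hd, Set.ncard_sdiff_singleton_of_mem ha, e]; rfl
    exact this _ v rfl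
  · intro W fib R h1 h2 v x hx
    have hex : ∀ w : Vtx c base, ∃ w' : Vtx c base, w ≠ v → ∃ a ∈ w.1 \ v.1,
        (∀ d ∈ w.1 \ v.1, a ≤ d) ∧ w'.1 = pflip c w.1 a := by
      intro w
      by_cases hw : w = v
      · exact ⟨w, fun h => absurd hw h⟩
      · obtain ⟨a, ha, hl⟩ := exists_least T w.2 v.2 (fun e => hw (Subtype.ext e))
        have hm := least_min v.2 ha hl
        exact ⟨⟨_, w.2.flip T ha.1 hm⟩, fun _ => ⟨a, ha, hl, rfl⟩⟩
    choose par hpar using hex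
    have key : ∀ (w w' : Vtx c base) a, PEdge c a w.1 w'.1 → a ∉ v.1 → w ≠ v ∧ w' = par w := by
      intro w w' a he hav
      have hwv : w ≠ v := by rintro rfl; exact hav he.1
      refine ⟨hwv, ?_⟩
      obtain ⟨b, hb, hl, e⟩ := hpar w hwv
      have h3 : b = a := he.min T w'.2 b hb.1 (hl a ⟨he.1, hav⟩)
      apply Subtype.ext
      rw [e, he.eq_flip w'.2, h3]
    refine rooted_sec _ ?_ par (fun w => (w.1 \ v.1).ncard) v ?_ ?_ ?_ W fib R h1 h2 x hx
    · rintro a b ⟨d, hd, he⟩ ⟨d', hd', he'⟩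
      have := PEdge.label T b.2 a.2 (he.symm' T) he'
      rw [← this, T.pos_c] at hd'
      exact hd' hd
    · intro w hw
      obtain ⟨a, ha, hl, e⟩ := hpar w hw
      simp only [e]
      rw [flip_diff T v.2 ha]
      exact Set.ncard_sdiff_singleton_lt_of_mem ha (w.2.diff_fin T v.2)
    · intro w hw
      obtain ⟨a, ha, hl, e⟩ := hpar w hw
      apply adj w (par w) a
      rw [e]
      exact PEdge_flip T w.2 ha.1
    · rintro w w' ⟨a, hp, he⟩
      by_cases hav : a ∈ v.1
      · right
        exact key w' w _ (he.symm' T) ((v.2.comp a).1 hav)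
      · left
        exact key w w' a he hav
  · intro g
    have hV := vtx_nonempty T
    obtain ⟨o, ho⟩ : ∃ o : Vtx c base, ∀ o' : Vtx c base,
        (o.1 \ g • o.1).ncard ≤ (o'.1 \ g • o'.1).ncard := by
      exact ⟨_, fun o' => Function.argmin_le (fun o : Vtx c base => (o.1 \ g • o.1).ncard) o'⟩
    by_cases he : o.1 = g • o.1
    · exact Or.inl ⟨o, Subtype.ext he.symm⟩
    · right
      obtain ⟨ℓ, hℓ, v, d, hv, hed, hg, hmono⟩ := axis_aux T g o.1 o.2 (fun o' h => ho ⟨o', h⟩) he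
      refine ⟨ℓ, hℓ, fun i => ⟨v i, hv i⟩, fun i => adj _ _ (d i) (hed i),
        fun i => Subtype.ext (hg i), ?_⟩
      intro i j hij
      have hlt := hmono hij
      constructor
      · rintro ⟨e1, e2⟩
        have e1 := congrArg Subtype.val e1
        have e2 := congrArg Subtype.val e2
        simp only at e1 e2
        have h3 := hed i
        rw [e1, e2] at h3
        exact hlt.ne (h3.label T (hv _) (hv _) (hed j))
      · rintro ⟨e1, e2⟩
        have e1 := congrArg Subtype.val e1
        have e2 := congrArg Subtype.val e2
        simp only at e1 e2
        have h3 := hed i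
        rw [e1, e2] at h3
        have h4 := h3.label T (hv _) (hv _) ((hed j).symm' T)
        rw [h4] at hlt
        exact T.irr _ hlt.le

end

end CD



namespace CD

section cuts
variable {X : Type u} (adj : X → X → Prop)

/-- boundary of a set in a graph -/
def bd (A : Set X) : Set (X × X) := {p | p.1 ∈ A ∧ p.2 ∉ A ∧ adj p.1 p.2}

/-- size of the boundary -/
noncomputable def bdn (A : Set X) : ℕ := (bd adj A).ncard

/-- cut of minimal size separating two ultrafilters -/
def IsMin (A : Set X) (p q : Ultrafilter X) : Prop :=
  (bd adj A).Finite ∧ ¬ (A ∈ p ↔ A ∈ q) ∧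
    ∀ B, (bd adj B).Finite → ¬ (B ∈ p ↔ B ∈ q) → bdn adj A ≤ bdn adj B

/-- minimal cuts of bounded size -/
def MM (k : ℕ) : Set (Set X) := {A | bdn adj A ≤ k ∧ ∃ p q, IsMin adj A p q}

/-- two sets cross when all four corners are nonempty -/
def Cross (A B : Set X) : Prop :=
  (A ∩ B).Nonempty ∧ (A ∩ Bᶜ).Nonempty ∧ (Aᶜ ∩ B).Nonempty ∧ (Aᶜ ∩ Bᶜ).Nonempty

/-- the minimal cuts crossing a given set -/
def XS (k : ℕ) (A : Set X) : Set (Set X) := {D | D ∈ MM adj k ∧ Cross D A}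

/-- crossing number -/
noncomputable def cr (k : ℕ) (A : Set X) : ℕ := (XS adj k A).ncard

/-- optimal cuts -/
def Opt (k : ℕ) (A : Set X) (p q : Ultrafilter X) : Prop :=
  IsMin adj A p q ∧ bdn adj A ≤ k ∧ ∀ B, IsMin adj B p q → cr adj k A ≤ cr adj k B

/-- the nested family -/
def EE (k : ℕ) : Set (Set X) := {A | ∃ p q, Opt adj k A p q}

/-- connectedness of a subset -/
def Irr (D : Set X) : Prop :=
  ∀ A, A ⊆ D → A.Nonempty → (D \ A).Nonempty → ∃ x ∈ A, ∃ y ∈ D \ A, adj x y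

variable {adj}

theorem Cross.compl_left {A B : Set X} (h : Cross A B) : Cross Aᶜ B := by
  obtain ⟨h1, h2, h3, h4⟩ := h
  exact ⟨h3, h4, by rwa [compl_compl], by rwa [compl_compl]⟩

theorem Cross.symm' {A B : Set X} (h : Cross A B) : Cross B A := by
  obtain ⟨h1, h2, h3, h4⟩ := h
  refine ⟨?_, ?_, ?_, ?_⟩ <;> rwa [Set.inter_comm]

theorem Cross.compl_right {A B : Set X} (h : Cross A B) : Cross A Bᶜ :=
  h.symm'.compl_left.symm'


theorem bd_compl (hsym : ∀ x y, adj x y → adj y x)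
    (A : Set X) : bd adj Aᶜ = Prod.swap '' bd adj A := by
  ext ⟨x, y⟩
  simp only [bd, Set.mem_ofPred_eq, Set.mem_compl_iff, not_not, Set.mem_image, Prod.exists,
    Prod.swap_prod_mk, Prod.mk.injEq]
  constructor
  · rintro ⟨h1, h2, h3⟩
    exact ⟨y, x, ⟨h2, h1, hsym _ _ h3⟩, rfl, rfl⟩
  · rintro ⟨a, b, ⟨h1, h2, h3⟩, rfl, rfl⟩
    exact ⟨h2, h1, hsym _ _ h3⟩

theorem bd_compl_fin (hsym : ∀ x y, adj x y → adj y x)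
    {A : Set X} (h : (bd adj A).Finite) : (bd adj Aᶜ).Finite := by
  rw [bd_compl hsym]; exact h.image _

theorem bdn_compl (hsym : ∀ x y, adj x y → adj y x)
    (A : Set X) : bdn adj Aᶜ = bdn adj A := by
  unfold bdn
  rw [bd_compl hsym, Set.InjOn.ncard_image Prod.swap_injective.injOn]

theorem bd_inter_fin {A B : Set X} (hA : (bd adj A).Finite) (hB : (bd adj B).Finite) :
    (bd adj (A ∩ B)).Finite := by
  apply (hA.union hB).subset
  rintro ⟨x, y⟩ ⟨h1, h2, h3⟩
  simp only [Set.mem_inter_iff, not_and_or] at h1 h2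
  rcases h2 with h2 | h2
  · exact Or.inl ⟨h1.1, h2, h3⟩
  · exact Or.inr ⟨h1.2, h2, h3⟩

theorem submod (hsym : ∀ x y, adj x y → adj y x)
    {A B : Set X} (hA : (bd adj A).Finite) (hB : (bd adj B).Finite) :
    bdn adj (A ∩ B) + bdn adj (Aᶜ ∩ Bᶜ) ≤ bdn adj A + bdn adj B := by
  rw [← Set.compl_union, bdn_compl hsym]
  unfold bdn
  have hI := bd_inter_fin hA hB
  have hU : (bd adj (A ∪ B)).Finite := by
    apply (hA.union hB).subset
    rintro ⟨x, y⟩ ⟨h1, h2, h3⟩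
    simp only [Set.mem_union, not_or] at h1 h2
    rcases h1 with h1 | h1
    · exact Or.inl ⟨h1, h2.1, h3⟩
    · exact Or.inr ⟨h1, h2.2, h3⟩
  rw [← Set.ncard_union_add_ncard_inter _ _ hI hU, ← Set.ncard_union_add_ncard_inter _ _ hA hB]
  apply Nat.add_le_add
  · apply Set.ncard_le_ncard _ (hA.union hB)
    rintro ⟨x, y⟩ (⟨h1, h2, h3⟩ | ⟨h1, h2, h3⟩) <;>
    simp only [Set.mem_union, Set.mem_inter_iff, bd, Set.mem_ofPred_eq] at * <;> tauto
  · apply Set.ncard_le_ncard _ (hA.inter_of_left _)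
    rintro ⟨x, y⟩ ⟨⟨h1, h2, h3⟩, ⟨h4, h5, h6⟩⟩
    simp only [Set.mem_union, Set.mem_inter_iff, bd, Set.mem_ofPred_eq] at *
    tauto

theorem bd_empty (hconn : ∀ x y, Relation.ReflTransGen adj x y)
    {A : Set X} (h : bd adj A = ∅) (hne : A.Nonempty) : A = Set.univ := by
  obtain ⟨x, hx⟩ := hne
  ext y
  simp only [Set.mem_univ, iff_true]
  have := hconn x y
  induction this with
  | refl => exact hx
  | tail _ hbc ih =>
    by_contra hc
    have : (⟨_, _⟩ : X × X) ∈ bd adj A := ⟨ih, hc, hbc⟩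
    rw [h] at this
    exact this

theorem IsMin.compl (hsym : ∀ x y, adj x y → adj y x)
    {A : Set X} {p q : Ultrafilter X} (h : IsMin adj A p q) : IsMin adj Aᶜ p q := by
  obtain ⟨h1, h2, h3⟩ := h
  refine ⟨bd_compl_fin hsym h1, ?_, ?_⟩
  · rw [Ultrafilter.compl_mem_iff_notMem, Ultrafilter.compl_mem_iff_notMem]; tauto
  · rw [bdn_compl hsym]; exact h3

theorem MM_compl (hsym : ∀ x y, adj x y → adj y x)
    {k : ℕ} {A : Set X} (h : A ∈ MM adj k) : Aᶜ ∈ MM adj k := by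
  obtain ⟨h1, p, q, h2⟩ := h
  exact ⟨by rwa [bdn_compl hsym], p, q, h2.compl hsym⟩

theorem IsMin.nonempty {A : Set X} {p q : Ultrafilter X} (h : IsMin adj A p q) : A.Nonempty := by
  rw [Set.nonempty_iff_ne_empty]
  rintro rfl
  apply h.2.1
  simp [Ultrafilter.empty_notMem]

theorem IsMin.compl_nonempty {A : Set X} {p q : Ultrafilter X} (h : IsMin adj A p q) :
    Aᶜ.Nonempty := by
  rw [Set.nonempty_iff_ne_empty]
  intro e
  rw [Set.compl_empty_iff] at e
  subst e
  exact h.2.1 (iff_of_true Filter.univ_mem Filter.univ_mem)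

theorem IsMin.irr (hsym : ∀ x y, adj x y → adj y x) (hconn : ∀ x y, Relation.ReflTransGen adj x y)
    {A : Set X} {p q : Ultrafilter X} (h : IsMin adj A p q) : Irr adj A := by
  intro A1 hA1 hne hne2
  by_contra hcon
  push Not at hcon
  have hs1 : bd adj A1 ⊆ bd adj A := by
    rintro ⟨x, y⟩ ⟨h1, h2, h3⟩
    exact ⟨hA1 h1, fun hy => hcon x h1 y ⟨hy, h2⟩ h3, h3⟩
  have hs2 : bd adj (A \ A1) ⊆ bd adj A := by
    rintro ⟨x, y⟩ ⟨h1, h2, h3⟩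
    refine ⟨h1.1, fun hy => ?_, h3⟩
    by_cases hy1 : y ∈ A1
    · exact hcon y hy1 x h1 (hsym _ _ h3)
    · exact h2 ⟨hy, hy1⟩
  have hdis : Disjoint (bd adj A1) (bd adj (A \ A1)) := by
    rw [Set.disjoint_left]
    rintro ⟨x, y⟩ ⟨h1, h2, h3⟩ ⟨h4, h5, h6⟩
    exact h4.2 h1
  have hcard : bdn adj A1 + bdn adj (A \ A1) ≤ bdn adj A := by
    unfold bdn
    rw [← Set.ncard_union_eq hdis (h.1.subset hs1) (h.1.subset hs2)]
    exact Set.ncard_le_ncard (Set.union_subset hs1 hs2) h.1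
  have hpos : ∀ B, B ⊆ A → B.Nonempty → (bd adj B).Finite → 0 < bdn adj B := by
    intro B hB hBn hf
    unfold bdn
    rw [Set.ncard_pos hf, Set.nonempty_iff_ne_empty]
    intro e
    have := bd_empty hconn e hBn
    subst this
    obtain ⟨x, hx⟩ := h.compl_nonempty
    exact hx (hB trivial)
  have p1 := hpos A1 hA1 hne (h.1.subset hs1)
  have p2 := hpos (A \ A1) Set.sdiff_subset hne2 (h.1.subset hs2)
  have hmem : ∀ r : Ultrafilter X, A ∈ r ↔ (A1 ∈ r ∨ A \ A1 ∈ r) := by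
    intro r
    rw [← Ultrafilter.union_mem_iff, Set.union_sdiff_cancel hA1]
  have hm1 := hmem p
  have hm2 := hmem q
  by_cases c1 : (A1 ∈ p ↔ A1 ∈ q)
  · have c2 : ¬ (A \ A1 ∈ p ↔ A \ A1 ∈ q) := by
      have := h.2.1
      tauto
    have := h.2.2 _ (h.1.subset hs2) c2
    omega
  · have := h.2.2 _ (h.1.subset hs1) c1
    omega

theorem path_edges {r : X → X → Prop} {x y : X} (h : Relation.ReflTransGen r x y) :
    ∃ L : Set (X × X), L.Finite ∧ (∀ e ∈ L, r e.1 e.2) ∧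
      ∀ D : Set X, x ∈ D → y ∉ D → ∃ e ∈ L, e.1 ∈ D ∧ e.2 ∉ D := by
  induction h with
  | refl => exact ⟨∅, Set.finite_empty, by simp, fun D h1 h2 => absurd h1 h2⟩
  | @tail b c _ hbc ih =>
    obtain ⟨L, hL1, hL2, hL3⟩ := ih
    refine ⟨insert (b, c) L, hL1.insert _, ?_, ?_⟩
    · rintro e (rfl | he)
      · exact hbc
      · exact hL2 e he
    · intro D hx hc
      by_cases hb : b ∈ D
      · exact ⟨(b, c), Or.inl rfl, hb, hc⟩
      · obtain ⟨e, he, h1⟩ := hL3 D hx hb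
        exact ⟨e, Or.inr he, h1⟩

theorem finite_sep (hsym : ∀ x y, adj x y → adj y x)
    (k : ℕ) (x y : X) : {D : Set X | Irr adj D ∧ Irr adj Dᶜ ∧ x ∈ D ∧ y ∉ D ∧
    (bd adj D).Finite ∧ bdn adj D ≤ k}.Finite := by
  have main : ∀ n, ∀ S : Set (X × X), S.Finite → k < S.ncard + n →
      {D : Set X | (Irr adj D ∧ Irr adj Dᶜ ∧ x ∈ D ∧ y ∉ D ∧
        (bd adj D).Finite ∧ bdn adj D ≤ k) ∧ S ⊆ bd adj D}.Finite := by
    intro n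
    induction n with
    | zero =>
      intro S hS hk
      convert Set.finite_empty
      rw [Set.eq_empty_iff_forall_notMem]
      rintro D ⟨⟨_, _, _, _, h5, h6⟩, h7⟩
      have := Set.ncard_le_ncard h7 h5
      unfold bdn at h6
      omega
    | succ n ih =>
      intro S hS hk
      let r : X → X → Prop := fun a b => adj a b ∧ (a, b) ∉ S ∧ (b, a) ∉ S
      have hrs : ∀ a b, r a b → r b a := fun a b h => ⟨hsym _ _ h.1, h.2.2, h.2.1⟩
      by_cases hc : Relation.ReflTransGen r x y
      · obtain ⟨L, hL1, hL2, hL3⟩ := path_edges hc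
        have : (⋃ e ∈ L, {D : Set X | (Irr adj D ∧ Irr adj Dᶜ ∧ x ∈ D ∧ y ∉ D ∧
            (bd adj D).Finite ∧ bdn adj D ≤ k) ∧ insert e S ⊆ bd adj D}).Finite := by
          apply hL1.biUnion
          intro e he
          apply ih _ (hS.insert e)
          rw [Set.ncard_insert_of_notMem (hL2 e he).2.1 hS]
          omega
        apply this.subset
        rintro D ⟨hD, hSD⟩
        obtain ⟨e, he, h1, h2⟩ := hL3 D hD.2.2.1 hD.2.2.2.1
        rw [Set.mem_iUnion₂]
        exact ⟨e, he, hD, Set.insert_subset ⟨h1, h2, (hL2 e he).1⟩ hSD⟩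
      · apply (Set.finite_singleton {z | Relation.ReflTransGen r x z}).subset
        rintro D ⟨⟨hD1, hD2, hx, hy, hf, hk'⟩, hSD⟩
        have comp : ∀ B : Set X, Irr adj B → (∀ a b, a ∈ B → b ∈ B → (a, b) ∉ S) → ∀ z ∈ B,
            B ⊆ {w | Relation.ReflTransGen r z w} := by
          intro B hB hBS z hz
          by_contra hcon
          rw [Set.not_subset] at hcon
          obtain ⟨w, hw, hw'⟩ := hcon
          obtain ⟨a, ha, b, hb, hab⟩ := hB (B ∩ {w | Relation.ReflTransGen r z w})
            Set.inter_subset_left ⟨z, hz, Relation.ReflTransGen.refl⟩ ⟨w, hw, fun h => hw' h.2⟩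
          exact hb.2 ⟨hb.1, Relation.ReflTransGen.tail ha.2
            ⟨hab, hBS a b ha.1 hb.1, hBS b a hb.1 ha.1⟩⟩
        have c1 := comp D hD1 (fun a b ha hb hS => (hSD hS).2.1 hb) x hx
        have c2 := comp Dᶜ hD2 (fun a b ha hb hS => ha (hSD hS).1) y hy
        rw [Set.mem_singleton_iff]
        apply Set.Subset.antisymm c1
        intro z hz
        by_contra hzD
        exact hc (Relation.ReflTransGen.trans hz (rtg_symm hrs (c2 hzD)))
  have := main (k + 1) ∅ Set.finite_empty (by simp)
  simpa using this

theorem MM_sep (hsym : ∀ x y, adj x y → adj y x) (hconn : ∀ x y, Relation.ReflTransGen adj x y)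
    (k : ℕ) (x y : X) : {D | D ∈ MM adj k ∧ x ∈ D ∧ y ∉ D}.Finite := by
  apply (finite_sep hsym k x y).subset
  rintro D ⟨⟨h1, p, q, h2⟩, h3, h4⟩
  exact ⟨h2.irr hsym hconn, (h2.compl hsym).irr hsym hconn, h3, h4, h2.1, h1⟩

theorem XS_finite (hsym : ∀ x y, adj x y → adj y x) (hconn : ∀ x y, Relation.ReflTransGen adj x y)
    {k : ℕ} {A : Set X} (hA : (bd adj A).Finite) : (XS adj k A).Finite := by
  have : (⋃ e ∈ bd adj A, ⋃ e' ∈ bd adj A, {D | D ∈ MM adj k ∧ e.1 ∈ D ∧ e'.1 ∉ D}).Finite :=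
    hA.biUnion fun e _ => hA.biUnion fun e' _ => MM_sep hsym hconn k _ _
  apply this.subset
  rintro D ⟨hD, h1, h2, h3, h4⟩
  have key : ∀ B, Irr adj B → (B ∩ A).Nonempty → (B ∩ Aᶜ).Nonempty → ∃ e ∈ bd adj A, e.1 ∈ B := by
    intro B hB h1 h2
    obtain ⟨z, hz⟩ := h2
    obtain ⟨a, ha, b, hb, hab⟩ := hB (B ∩ A) Set.inter_subset_left h1 ⟨z, hz.1, fun h => hz.2 h.2⟩
    exact ⟨(a, b), ⟨ha.2, fun h => hb.2 ⟨hb.1, h⟩, hab⟩, ha.1⟩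
  obtain ⟨h5, p, q, h6⟩ := hD
  obtain ⟨e, he, heD⟩ := key D (h6.irr hsym hconn) h1 h2
  obtain ⟨e', he', heD'⟩ := key Dᶜ ((h6.compl hsym).irr hsym hconn) h3 h4
  simp only [Set.mem_iUnion]
  exact ⟨e, he, e', he', ⟨h5, p, q, h6⟩, heD, heD'⟩

theorem XS_compl (k : ℕ) (A : Set X) : XS adj k Aᶜ = XS adj k A := by
  ext D
  constructor
  · rintro ⟨h1, h2⟩
    have := h2.compl_right
    rw [compl_compl] at this
    exact ⟨h1, this⟩
  · rintro ⟨h1, h2⟩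
    exact ⟨h1, h2.compl_right⟩

theorem cr_compl (k : ℕ) (A : Set X) : cr adj k Aᶜ = cr adj k A := by
  unfold cr; rw [XS_compl]

theorem cross_corner {A B D : Set X} (hAB : (Aᶜ ∩ Bᶜ).Nonempty) (h : Cross D (A ∩ B)) :
    Cross D A ∨ Cross D B := by
  obtain ⟨⟨a, ha, haA, haB⟩, ⟨b, hb, hb'⟩, ⟨c, hc, hcA, hcB⟩, ⟨d, hd, hd'⟩⟩ := h
  obtain ⟨e, heA, heB⟩ := hAB
  by_contra hcon
  rw [not_or] at hcon
  obtain ⟨n1, n2⟩ := hcon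
  have k1 : D ⊆ A ∨ Dᶜ ⊆ A := by
    by_contra hk
    rw [not_or, Set.not_subset, Set.not_subset] at hk
    obtain ⟨⟨u, hu, hu'⟩, ⟨v, hv, hv'⟩⟩ := hk
    exact n1 ⟨⟨a, ha, haA⟩, ⟨u, hu, hu'⟩, ⟨c, hc, hcA⟩, ⟨v, hv, hv'⟩⟩
  have k2 : D ⊆ B ∨ Dᶜ ⊆ B := by
    by_contra hk
    rw [not_or, Set.not_subset, Set.not_subset] at hk
    obtain ⟨⟨u, hu, hu'⟩, ⟨v, hv, hv'⟩⟩ := hk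
    exact n2 ⟨⟨a, ha, haB⟩, ⟨u, hu, hu'⟩, ⟨c, hc, hcB⟩, ⟨v, hv, hv'⟩⟩
  rcases k1 with k1 | k1 <;> rcases k2 with k2 | k2
  · exact hb' ⟨k1 hb, k2 hb⟩
  · by_cases h : e ∈ D
    · exact heA (k1 h)
    · exact heB (k2 h)
  · by_cases h : e ∈ D
    · exact heB (k2 h)
    · exact heA (k1 h)
  · exact hd' ⟨k1 hd, k2 hd⟩

theorem counting (hsym : ∀ x y, adj x y → adj y x) (hconn : ∀ x y, Relation.ReflTransGen adj x y)
    {k : ℕ} {A B : Set X} (hA : A ∈ MM adj k) (hB : B ∈ MM adj k) (h : Cross A B) :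
    cr adj k (A ∩ B) + cr adj k (Aᶜ ∩ Bᶜ) < cr adj k A + cr adj k B := by
  obtain ⟨_, _, _, mA⟩ := id hA
  obtain ⟨_, _, _, mB⟩ := id hB
  have fA := mA.1
  have fB := mB.1
  have f1 := XS_finite hsym hconn (k := k) (bd_inter_fin fA fB)
  have f2 := XS_finite hsym hconn (k := k)
    (bd_inter_fin (bd_compl_fin hsym fA) (bd_compl_fin hsym fB))
  have f3 := XS_finite hsym hconn (k := k) fA
  have f4 := XS_finite hsym hconn (k := k) fB
  unfold cr
  rw [← Set.ncard_union_add_ncard_inter _ _ f1 f2, ← Set.ncard_union_add_ncard_inter _ _ f3 f4]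
  apply Nat.add_lt_add_of_lt_of_le
  · apply Set.ncard_lt_ncard _ (f3.union f4)
    rw [Set.ssubset_iff_of_subset]
    · refine ⟨A, Or.inr ⟨hA, h⟩, ?_⟩
      rintro (⟨_, h1⟩ | ⟨_, h1⟩)
      · obtain ⟨x, hx, hx'⟩ := h1.2.2.1
        exact hx hx'.1
      · obtain ⟨x, hx, hx'⟩ := h1.1
        exact hx'.1 hx
    · rintro D (⟨hD, h1⟩ | ⟨hD, h1⟩)
      · rcases cross_corner h.2.2.2 h1 with h2 | h2
        · exact Or.inl ⟨hD, h2⟩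
        · exact Or.inr ⟨hD, h2⟩
      · rcases cross_corner (by rw [compl_compl, compl_compl]; exact h.1) h1 with h2 | h2
        · left; rw [← XS_compl]; exact ⟨hD, h2⟩
        · right; rw [← XS_compl]; exact ⟨hD, h2⟩
  · apply Set.ncard_le_ncard _ (f3.inter_of_left _)
    rintro D ⟨⟨hD, ⟨a, ha, ha'⟩, -, ⟨b, hb, hb'⟩, -⟩, ⟨-, ⟨c, hc, hc'⟩, -, ⟨d, hd, hd'⟩, -⟩⟩
    exact ⟨⟨hD, ⟨a, ha, ha'.1⟩, ⟨c, hc, hc'.1⟩, ⟨b, hb, hb'.1⟩, ⟨d, hd, hd'.1⟩⟩,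
      ⟨hD, ⟨a, ha, ha'.2⟩, ⟨c, hc, hc'.2⟩, ⟨b, hb, hb'.2⟩, ⟨d, hd, hd'.2⟩⟩⟩

theorem Opt.compl (hsym : ∀ x y, adj x y → adj y x)
    {k : ℕ} {A : Set X} {p q : Ultrafilter X} (h : Opt adj k A p q) :
    Opt adj k Aᶜ p q := by
  obtain ⟨h1, h2, h3⟩ := h
  exact ⟨h1.compl hsym, by rwa [bdn_compl hsym], by rwa [cr_compl]⟩

theorem L1 (hsym : ∀ x y, adj x y → adj y x) (hconn : ∀ x y, Relation.ReflTransGen adj x y)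
    {k : ℕ} {A B : Set X} {r r' s s' : Ultrafilter X} (hA : Opt adj k A r r')
    (hB : Opt adj k B s s') (h : Cross A B) (h1 : ¬ (A ∩ B ∈ s ↔ A ∩ B ∈ s'))
    (h2 : ¬ (Aᶜ ∩ Bᶜ ∈ r ↔ Aᶜ ∩ Bᶜ ∈ r')) : False := by
  have fA := hA.1.1
  have fB := hB.1.1
  have f1 := bd_inter_fin fA fB
  have f2 := bd_inter_fin (bd_compl_fin hsym fA) (bd_compl_fin hsym fB)
  have hs := submod hsym fA fB
  have d1 := hB.1.2.2 _ f1 h1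
  have d2 := hA.1.2.2 _ f2 h2
  have m1 : IsMin adj (A ∩ B) s s' := ⟨f1, h1, fun D hD hD' => by
    have := hB.1.2.2 D hD hD'
    omega⟩
  have m2 : IsMin adj (Aᶜ ∩ Bᶜ) r r' := ⟨f2, h2, fun D hD hD' => by
    have := hA.1.2.2 D hD hD'
    omega⟩
  have := counting hsym hconn ⟨hA.2.1, _, _, hA.1⟩ ⟨hB.2.1, _, _, hB.1⟩ h
  have := hA.2.2 _ m2
  have := hB.2.2 _ m1
  omega

theorem L2 (hsym : ∀ x y, adj x y → adj y x) (hconn : ∀ x y, Relation.ReflTransGen adj x y)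
    {k : ℕ} {A B : Set X} {r r' s s' : Ultrafilter X} (hA : Opt adj k A r r')
    (hB : Opt adj k B s s') (h : Cross A B) (hd : bdn adj A = bdn adj B)
    (h1 : ¬ (A ∩ B ∈ r ↔ A ∩ B ∈ r'))
    (h2 : ¬ (Aᶜ ∩ Bᶜ ∈ r ↔ Aᶜ ∩ Bᶜ ∈ r')) : cr adj k A < cr adj k B := by
  have fA := hA.1.1
  have fB := hB.1.1
  have f1 := bd_inter_fin fA fB
  have f2 := bd_inter_fin (bd_compl_fin hsym fA) (bd_compl_fin hsym fB)
  have hs := submod hsym fA fB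
  have d1 := hA.1.2.2 _ f1 h1
  have d2 := hA.1.2.2 _ f2 h2
  have m1 : IsMin adj (A ∩ B) r r' := ⟨f1, h1, fun D hD hD' => by
    have := hA.1.2.2 D hD hD'
    omega⟩
  have m2 : IsMin adj (Aᶜ ∩ Bᶜ) r r' := ⟨f2, h2, fun D hD hD' => by
    have := hA.1.2.2 D hD hD'
    omega⟩
  have := counting hsym hconn ⟨hA.2.1, _, _, hA.1⟩ ⟨hB.2.1, _, _, hB.1⟩ h
  have := hA.2.2 _ m2
  have := hA.2.2 _ m1
  omega

theorem prop1 (a b c d e f g h : Prop)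
    (hr : ¬ (a ↔ b)) (hs : ¬ (g ↔ h))
    (p1 : ¬ (e ∧ g ↔ f ∧ h) → ¬ (¬ a ∧ ¬ c ↔ ¬ b ∧ ¬ d) → False)
    (p2 : ¬ (¬ e ∧ g ↔ ¬ f ∧ h) → ¬ (a ∧ ¬ c ↔ b ∧ ¬ d) → False)
    (p3 : ¬ (e ∧ ¬ g ↔ f ∧ ¬ h) → ¬ (¬ a ∧ c ↔ ¬ b ∧ d) → False)
    (p4 : ¬ (¬ e ∧ ¬ g ↔ ¬ f ∧ ¬ h) → ¬ (a ∧ c ↔ b ∧ d) → False) :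
    ¬ (e ↔ f) ∧ ¬ (c ↔ d) := by
  grind

theorem prop2 (a b c d Y : Prop) (hr : ¬ (a ↔ b)) (hs : ¬ (c ↔ d))
    (q1 : ¬ (a ∧ c ↔ b ∧ d) → ¬ (¬ a ∧ ¬ c ↔ ¬ b ∧ ¬ d) → Y)
    (q2 : ¬ (a ∧ ¬ c ↔ b ∧ ¬ d) → ¬ (¬ a ∧ c ↔ ¬ b ∧ d) → Y) : Y := by
  grind

theorem EE_nested (hsym : ∀ x y, adj x y → adj y x) (hconn : ∀ x y, Relation.ReflTransGen adj x y)
    {k : ℕ} {A B : Set X} (hA : A ∈ EE adj k) (hB : B ∈ EE adj k) : ¬ Cross A B := by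
  intro h
  obtain ⟨r, r', hA⟩ := hA
  obtain ⟨s, s', hB⟩ := hB
  have p1 := L1 hsym hconn hA hB h
  have p2 := L1 hsym hconn (hA.compl hsym) hB h.compl_left
  have p3 := L1 hsym hconn hA (hB.compl hsym) h.compl_right
  have p4 := L1 hsym hconn (hA.compl hsym) (hB.compl hsym) h.compl_left.compl_right
  have im : ∀ (p : Ultrafilter X) (C D : Set X), C ∩ D ∈ p ↔ C ∈ p ∧ D ∈ p :=
    fun p C D => Filter.inter_mem_iff
  have cm : ∀ (p : Ultrafilter X) (C : Set X), Cᶜ ∈ p ↔ ¬ C ∈ p :=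
    fun p C => Ultrafilter.compl_mem_iff_notMem
  have hr := hA.1.2.1
  have hs := hB.1.2.1
  simp only [compl_compl, im, cm] at p1 p2 p3 p4
  obtain ⟨hsA, hrB⟩ := prop1 _ _ _ _ _ _ _ _ hr hs p1 p2 p3 p4
  have hd : bdn adj A = bdn adj B :=
    le_antisymm (hA.1.2.2 B hB.1.1 hrB) (hB.1.2.2 A hA.1.1 hsA)
  have q1 := L2 hsym hconn hA hB h hd
  have q2 := L2 hsym hconn hB hA h.symm' hd.symm
  have q3 := L2 hsym hconn hA (hB.compl hsym) h.compl_right (by rw [bdn_compl hsym, hd])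
  have q4 := L2 hsym hconn hB (hA.compl hsym) h.symm'.compl_right (by rw [bdn_compl hsym, hd])
  simp only [compl_compl, im, cm, cr_compl] at q1 q2 q3 q4
  have n1 : cr adj k A < cr adj k B := prop2 _ _ _ _ _ hr hrB q1 q3
  have n2 : cr adj k B < cr adj k A := prop2 _ _ _ _ _ hs hsA q2 q4
  omega

theorem EE_sub {k : ℕ} {A : Set X} (h : A ∈ EE adj k) : A ∈ MM adj k := by
  obtain ⟨p, q, h1, h2, h3⟩ := h
  exact ⟨h2, p, q, h1⟩

theorem EE_exists {k : ℕ} {p q : Ultrafilter X} {B : Set X} (hB : (bd adj B).Finite)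
    (hk : bdn adj B ≤ k) (hs : ¬ (B ∈ p ↔ B ∈ q)) :
    ∃ A ∈ EE adj k, (bd adj A).Finite ∧ ¬ (A ∈ p ↔ A ∈ q) := by
  have h1 : ({B : Set X | (bd adj B).Finite ∧ ¬ (B ∈ p ↔ B ∈ q)}).Nonempty := ⟨B, hB, hs⟩
  have e1 : ∃ A, IsMin adj A p q := by
    have hmem := Function.argminOn_mem (bdn adj) _ h1
    exact ⟨_, hmem.1, hmem.2, fun C hC hC' => Function.argminOn_le (bdn adj)
      {B : Set X | (bd adj B).Finite ∧ ¬ (B ∈ p ↔ B ∈ q)} (a := C) ⟨hC, hC'⟩⟩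
  have h2 : ({A : Set X | IsMin adj A p q}).Nonempty := e1
  have hmem := Function.argminOn_mem (cr adj k) _ h2
  refine ⟨_, ⟨p, q, hmem, (hmem.2.2 B hB hs).trans hk, fun C hC =>
    Function.argminOn_le (cr adj k) {A : Set X | IsMin adj A p q} (a := C) hC⟩, hmem.1, hmem.2.1⟩

end cuts

end CD



namespace CD

open scoped Pointwise

section inv
variable {G X : Type u} [Group G] [MulAction G X] {adj : X → X → Prop}

theorem bd_smul (hadj : ∀ (g : G) x y, adj x y → adj (g • x) (g • y)) (g : G) (A : Set X) :
    bd adj (g • A) = (fun p => g • p) '' bd adj A := by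
  ext ⟨x, y⟩
  simp only [Set.mem_image, bd, Set.mem_ofPred_eq, Prod.exists, Prod.smul_mk, Prod.mk.injEq]
  constructor
  · rintro ⟨h1, h2, h3⟩
    refine ⟨g⁻¹ • x, g⁻¹ • y, ⟨?_, ?_, hadj _ _ _ h3⟩, by simp, by simp⟩
    · rwa [Set.mem_smul_set_iff_inv_smul_mem] at h1
    · rwa [Set.mem_smul_set_iff_inv_smul_mem] at h2
  · rintro ⟨a, b, ⟨h1, h2, h3⟩, rfl, rfl⟩
    refine ⟨Set.smul_mem_smul_set h1, ?_, hadj _ _ _ h3⟩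
    rwa [Set.smul_mem_smul_set_iff]

theorem bdn_smul (hadj : ∀ (g : G) x y, adj x y → adj (g • x) (g • y)) (g : G) (A : Set X) :
    bdn adj (g • A) = bdn adj A := by
  unfold bdn
  rw [bd_smul hadj, Set.InjOn.ncard_image (MulAction.injective g).injOn]

theorem bd_smul_fin (hadj : ∀ (g : G) x y, adj x y → adj (g • x) (g • y)) (g : G) {A : Set X}
    (h : (bd adj A).Finite) : (bd adj (g • A)).Finite := by
  rw [bd_smul hadj]; exact h.image _

theorem mem_mapU (g : G) (A : Set X) (p : Ultrafilter X) :
    g • A ∈ p.map (fun x => g • x) ↔ A ∈ p := by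
  rw [Ultrafilter.mem_map]
  have : (fun x => g • x) ⁻¹' (g • A) = A := by
    ext x
    simp [Set.smul_mem_smul_set_iff]
  rw [this]

theorem IsMin_smul (hadj : ∀ (g : G) x y, adj x y → adj (g • x) (g • y)) (g : G) {A : Set X}
    {p q : Ultrafilter X} (h : IsMin adj A p q) :
    IsMin adj (g • A) (p.map (fun x => g • x)) (q.map (fun x => g • x)) := by
  obtain ⟨h1, h2, h3⟩ := h
  refine ⟨bd_smul_fin hadj g h1, by rwa [mem_mapU, mem_mapU], ?_⟩
  intro B hB hs
  have e : B = g • (g⁻¹ • B) := by simp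
  rw [e, mem_mapU, mem_mapU] at hs
  rw [bdn_smul hadj, ← bdn_smul hadj g⁻¹ B]
  exact h3 _ (bd_smul_fin hadj _ hB) hs

theorem MM_smul (hadj : ∀ (g : G) x y, adj x y → adj (g • x) (g • y)) {k : ℕ} (g : G) {A : Set X}
    (h : A ∈ MM adj k) : g • A ∈ MM adj k := by
  obtain ⟨h1, p, q, h2⟩ := h
  exact ⟨by rwa [bdn_smul hadj], _, _, IsMin_smul hadj g h2⟩

theorem Cross_smul (g : G) {A B : Set X} (h : Cross A B) : Cross (g • A) (g • B) := by
  obtain ⟨h1, h2, h3, h4⟩ := h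
  unfold Cross
  rw [← Set.smul_set_compl, ← Set.smul_set_compl, ← Set.smul_set_inter, ← Set.smul_set_inter,
    ← Set.smul_set_inter, ← Set.smul_set_inter]
  exact ⟨h1.smul_set, h2.smul_set, h3.smul_set, h4.smul_set⟩

theorem cr_smul (hadj : ∀ (g : G) x y, adj x y → adj (g • x) (g • y)) (k : ℕ) (g : G) (A : Set X) :
    cr adj k (g • A) = cr adj k A := by
  have : XS adj k (g • A) = (fun D => g • D) '' XS adj k A := by
    ext D
    constructor
    · rintro ⟨h1, h2⟩
      refine ⟨g⁻¹ • D, ⟨MM_smul hadj _ h1, ?_⟩, by simp⟩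
      have := Cross_smul g⁻¹ h2
      simpa using this
    · rintro ⟨D, ⟨h1, h2⟩, rfl⟩
      exact ⟨MM_smul hadj _ h1, Cross_smul g h2⟩
  unfold cr
  rw [this, Set.InjOn.ncard_image (MulAction.injective g).injOn]

theorem EE_smul (hadj : ∀ (g : G) x y, adj x y → adj (g • x) (g • y)) {k : ℕ} (g : G) {A : Set X}
    (h : A ∈ EE adj k) : g • A ∈ EE adj k := by
  obtain ⟨p, q, h1, h2, h3⟩ := h
  refine ⟨_, _, IsMin_smul hadj g h1, by rwa [bdn_smul hadj], ?_⟩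
  intro B hB
  rw [cr_smul hadj, ← cr_smul hadj k g⁻¹ B]
  apply h3
  have := IsMin_smul hadj g⁻¹ hB
  have e : ∀ r : Ultrafilter X, (r.map (fun x => g • x)).map (fun x => g⁻¹ • x) = r := by
    intro r
    rw [Ultrafilter.map_map]
    convert Ultrafilter.map_id r
    ext x
    simp
  rwa [e, e] at this

end inv

/-- pocset built from a nested family -/
@[ext]
structure PP {X : Type u} (S : Set (Set X)) : Type u where
  A : Set X
  mem : A ∈ S
  i : Bool

/-- a nested invariant family of sets -/
structure Nest (G : Type u) {X : Type u} [Group G] [MulAction G X] (S : Set (Set X)) : Prop where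
  compl : ∀ A ∈ S, Aᶜ ∈ S
  smul : ∀ (g : G), ∀ A ∈ S, g • A ∈ S
  ne : ∀ A ∈ S, A.Nonempty
  nested : ∀ A ∈ S, ∀ B ∈ S, ¬ Cross A B
  fin : ∀ x y, {A | A ∈ S ∧ x ∈ A ∧ y ∉ A}.Finite

section
variable {G X : Type u} [Group G] [MulAction G X] {S : Set (Set X)}

instance : PartialOrder (PP S) where
  le a b := a.A ⊂ b.A ∨ (a.A = b.A ∧ (a.i = true → b.i = true))
  le_refl a := Or.inr ⟨rfl, id⟩
  le_trans a b c := by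
    rintro (h | ⟨h, h'⟩) (k | ⟨k, k'⟩)
    · exact Or.inl (h.trans k)
    · exact Or.inl (k ▸ h)
    · exact Or.inl (h ▸ k)
    · exact Or.inr ⟨h.trans k, fun e => k' (h' e)⟩
  le_antisymm a b := by
    rintro (h | ⟨h, h'⟩) (k | ⟨k, k'⟩)
    · exact absurd (h.trans k) (ssubset_irrefl _)
    · exact absurd (k ▸ h) (ssubset_irrefl _)
    · exact absurd (h ▸ k) (ssubset_irrefl _)
    · refine PP.ext h ?_
      cases ha : a.i <;> cases hb : b.i <;> simp_all

theorem PP_le (a b : PP S) : a ≤ b ↔ (a.A ⊂ b.A ∨ (a.A = b.A ∧ (a.i = true → b.i = true))) := Iff.rfl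

theorem PP_le_sub {a b : PP S} (h : a ≤ b) : a.A ⊆ b.A := by
  rcases h with h | h
  · exact h.subset
  · exact h.1.subset

theorem PP_tot {a b : PP S} (h : a.A ⊆ b.A) : a ≤ b ∨ b ≤ a := by
  by_cases e : a.A = b.A
  · cases ha : a.i
    · left; right; exact ⟨e, by simp [ha]⟩
    · right; right; exact ⟨e.symm, by simp [ha]⟩
  · left; left; exact HasSubset.Subset.ssubset_of_ne h e

/-- the action -/
@[reducible]
def PPact (N : Nest G S) : MulAction G (PP S) where
  smul g a := ⟨g • a.A, N.smul g _ a.mem, a.i⟩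
  one_smul a := PP.ext (one_smul G a.A) rfl
  mul_smul g h a := PP.ext (mul_smul g h a.A) rfl

/-- the complement -/
def PPc (N : Nest G S) (a : PP S) : PP S := ⟨a.Aᶜ, N.compl _ a.mem, !a.i⟩

theorem pocTree_of_nest (N : Nest G S) (x0 : X) : letI := PPact N
    PocTree G (PPc N) (fun a : PP S => a.i = false) {a | x0 ∈ a.A} := by
  letI := PPact N
  have smul_A : ∀ (g : G) (a : PP S), (g • a).A = g • a.A := fun _ _ => rfl
  have smul_i : ∀ (g : G) (a : PP S), (g • a).i = a.i := fun _ _ => rfl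
  have cA : ∀ (a : PP S), (PPc N a).A = a.Aᶜ := fun _ => rfl
  have ci : ∀ (a : PP S), (PPc N a).i = !a.i := fun _ => rfl
  have cc : ∀ a : PP S, PPc N (PPc N a) = a := by
    intro a
    refine PP.ext ?_ ?_
    · rw [cA, cA, compl_compl]
    · rw [ci, ci, Bool.not_not]
  have anti : ∀ a b : PP S, a ≤ b → PPc N b ≤ PPc N a := by
    rintro a b (h | ⟨h, h'⟩)
    · left
      rw [cA, cA]
      exact compl_lt_compl_iff_lt.2 h
    · right
      rw [cA, cA, h, ci, ci]
      refine ⟨rfl, ?_⟩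
      cases ha : a.i <;> cases hb : b.i <;> simp_all
  refine ⟨cc, anti, ?_, ?_, ?_, ?_, ?_, ?_, ?_, ?_, ?_⟩
  · intro a h
    have := PP_le_sub h
    rw [cA] at this
    obtain ⟨x, hx⟩ := N.ne _ (N.compl _ a.mem)
    exact hx (this hx)
  · intro a b
    have := N.nested _ a.mem _ b.mem
    unfold Cross at this
    rw [not_and_or, not_and_or, not_and_or] at this
    simp only [Set.not_nonempty_iff_eq_empty, ← Set.disjoint_iff_inter_eq_empty] at this
    rcases this with h | h | h | h
    · have h1 : a.A ⊆ (PPc N b).A := Set.subset_compl_iff_disjoint_right.2 h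
      rcases PP_tot h1 with h2 | h2
      · exact Or.inr (Or.inl h2)
      · have := anti _ _ h2
        rw [cc] at this
        exact Or.inr (Or.inr (Or.inl this))
    · have h1 : a.A ⊆ b.A := Set.disjoint_compl_right_iff_subset.1 h
      rcases PP_tot h1 with h2 | h2
      · exact Or.inl h2
      · exact Or.inr (Or.inr (Or.inr h2))
    · have h1 : b.A ⊆ a.A := Set.disjoint_compl_left_iff_subset.1 h
      rcases PP_tot h1 with h2 | h2
      · exact Or.inr (Or.inr (Or.inr h2))
      · exact Or.inl h2
    · have h1 : (PPc N a).A ⊆ b.A := Set.disjoint_compl_right_iff_subset.1 h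
      rcases PP_tot h1 with h2 | h2
      · exact Or.inr (Or.inr (Or.inl h2))
      · have := anti _ _ h2
        rw [cc] at this
        exact Or.inr (Or.inl this)
  · rintro g a b (h | ⟨h, h'⟩)
    · left
      rw [smul_A, smul_A]
      exact ⟨Set.smul_set_mono h.1, fun k => h.2 (Set.smul_set_subset_smul_set_iff.1 k)⟩
    · right
      rw [smul_A, smul_A, h]
      exact ⟨rfl, h'⟩
  · intro g a
    refine PP.ext ?_ rfl
    rw [smul_A, cA, cA, smul_A, Set.smul_set_compl]
  · intro g a
    rfl
  · intro a
    rw [ci]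
    simp
  · intro a b ha hab
    exact PP_le_sub hab ha
  · intro a
    simp [cA]
  · intro g
    have h1 := N.fin x0 (g • x0)
    have h2 : ((fun a : PP S => (a.A, a.i)) ⁻¹' ({A | A ∈ S ∧ x0 ∈ A ∧ g • x0 ∉ A} ×ˢ
        (Set.univ : Set Bool))).Finite := by
      apply (h1.prod Set.finite_univ).preimage
      intro a _ b _ e
      simp only [Prod.mk.injEq] at e
      exact PP.ext e.1 e.2
    apply h2.subset
    rintro a ⟨h3, h4⟩
    refine ⟨⟨a.mem, h3, fun h5 => h4 ?_⟩, trivial⟩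
    rw [Set.mem_smul_set_iff_inv_smul_mem]
    change x0 ∈ g⁻¹ • a.A
    rw [Set.mem_inv_smul_set_iff]
    exact h5

theorem nest_nofix (N : Nest G S) (x0 : X) (f : G) (A : Set X) (hA : A ∈ S) (hf : A ⊂ f • A)
    (o : Set (PP S)) (ho : IsV (PPc N) {a | x0 ∈ a.A} o) : letI := PPact N; f • o ≠ o := by
  letI := PPact N
  intro hfix
  have T := pocTree_of_nest N x0
  have smul_A : ∀ (g : G) (a : PP S), (g • a).A = g • a.A := fun _ _ => rfl
  have mono : ∀ g : G, ∀ B C : Set X, B ⊂ C → g • B ⊂ g • C := fun g B C h =>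
    ⟨Set.smul_set_mono h.1, fun k => h.2 (Set.smul_set_subset_smul_set_iff.1 k)⟩
  have hup : StrictMono (fun n : ℕ => f ^ n • A) := by
    apply strictMono_nat_of_lt_succ
    intro n
    change f ^ n • A ⊂ f ^ (n + 1) • A
    rw [pow_succ, mul_smul]
    exact mono _ _ _ hf
  have hdown : StrictAnti (fun n : ℕ => (f⁻¹) ^ n • A) := by
    apply strictAnti_nat_of_succ_lt
    intro n
    change (f⁻¹) ^ (n + 1) • A ⊂ (f⁻¹) ^ n • A
    rw [pow_succ, mul_smul]
    apply mono
    have := mono f⁻¹ _ _ hf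
    rwa [inv_smul_smul] at this
  have hfix' : f⁻¹ • o = o := by rw [inv_smul_eq_iff, hfix]
  have hpow : ∀ h : G, h • o = o → ∀ n : ℕ, h ^ n • o = o := by
    intro h hh n
    induction n with
    | zero => simp
    | succ n ih => rw [pow_succ, mul_smul, hh, ih]
  let a : PP S := ⟨A, hA, false⟩
  by_cases ha : a ∈ o
  · obtain ⟨y, hy⟩ := N.ne _ (N.compl _ hA)
    have h1 : ((fun n : ℕ => (f⁻¹) ^ n • a) ⁻¹' (o \ {a | x0 ∈ a.A})).Finite := by
      apply ho.fin.preimage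
      intro n _ m _ e
      exact hdown.injective (congrArg PP.A e)
    have h2 : ((fun n : ℕ => (f⁻¹) ^ n • A) ⁻¹' {A | A ∈ S ∧ x0 ∈ A ∧ y ∉ A}).Finite :=
      (N.fin x0 y).preimage hdown.injective.injOn
    apply Set.infinite_univ (α := ℕ)
    apply (h1.union h2).subset
    intro n _
    by_cases hx : x0 ∈ (f⁻¹) ^ n • A
    · right
      refine ⟨N.smul _ _ hA, hx, fun hyn => hy ?_⟩
      have : (f⁻¹) ^ n • A ⊆ (f⁻¹) ^ 0 • A := hdown.antitone (Nat.zero_le n)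
      simpa using this hyn
    · left
      refine ⟨?_, hx⟩
      change (f⁻¹) ^ n • a ∈ o
      rw [← hpow f⁻¹ hfix' n]
      exact Set.smul_mem_smul_set ha
  · obtain ⟨y, hy⟩ := N.ne _ hA
    have hca : PPc N a ∈ o := by
      rw [ho.comp, T.cc]; exact ha
    have h1 : ((fun n : ℕ => f ^ n • PPc N a) ⁻¹' (o \ {a | x0 ∈ a.A})).Finite := by
      apply ho.fin.preimage
      intro n _ m _ e
      simp only [T.smul_c] at e
      have e := congrArg (PPc N) e
      rw [T.cc, T.cc] at e
      exact hup.injective (congrArg PP.A e)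
    have h2 : ((fun n : ℕ => f ^ n • A) ⁻¹' {A | A ∈ S ∧ y ∈ A ∧ x0 ∉ A}).Finite :=
      (N.fin y x0).preimage hup.injective.injOn
    apply Set.infinite_univ (α := ℕ)
    apply (h1.union h2).subset
    intro n _
    by_cases hx : x0 ∈ f ^ n • A
    · left
      refine ⟨?_, ?_⟩
      · change f ^ n • PPc N a ∈ o
        rw [← hpow f hfix n]
        exact Set.smul_mem_smul_set hca
      · change ¬ x0 ∈ (f ^ n • PPc N a).A
        rw [T.smul_c]
        change ¬ ¬ x0 ∈ f ^ n • A
        rw [not_not]; exact hx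
    · right
      refine ⟨N.smul _ _ hA, ?_, hx⟩
      have : f ^ 0 • A ⊆ f ^ n • A := hup.monotone (Nat.zero_le n)
      apply this
      simpa using hy

/-- trees from nested families -/
theorem tree_of_nest [Nonempty X] (N : Nest G S) : ∃ (V : Type u) (_ : MulAction G V) (E : V → V → Prop),
    Nonempty V ∧ IsGTree G E ∧ ∀ f : G, (∃ A ∈ S, A ⊂ f • A ∨ f • A ⊂ A) → ∀ v : V, f • v ≠ v := by
  obtain ⟨x0⟩ := ‹Nonempty X›
  letI := PPact N
  have T := pocTree_of_nest N x0
  refine ⟨_, vtxAct T, _, vtx_nonempty T, pocGTree T, ?_⟩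
  rintro f ⟨A, hA, h | h⟩ v hv
  · exact nest_nofix N x0 f A hA h v.1 v.2 (congrArg Subtype.val hv)
  · have h' : A ⊂ f⁻¹ • A :=
      ⟨by have := Set.smul_set_mono (a := f⁻¹) h.1; rwa [inv_smul_smul] at this, fun k => h.2 (by
        have := Set.smul_set_mono (a := f) k; rwa [smul_inv_smul] at this)⟩
    refine nest_nofix N x0 f⁻¹ A hA h' v.1 v.2 ?_
    have : f • v.1 = v.1 := congrArg Subtype.val hv
    rw [inv_smul_eq_iff, this]

end

end CD



namespace CD

open scoped Pointwise

/-- Almost (right) invariant subsets of a group. -/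
def AI {G : Type*} [Group G] (A : Set G) : Prop := ∀ z : G, {y | ¬ (y ∈ A ↔ y * z ∈ A)}.Finite

theorem AI_of_gen {G : Type*} [Group G] {S : Set G} (hS : Subgroup.closure S = ⊤) {A : Set G}
    (h : ∀ s ∈ S, {y | ¬ (y ∈ A ↔ y * s ∈ A)}.Finite) : AI A := by
  intro z
  have hz : z ∈ Subgroup.closure S := by rw [hS]; trivial
  induction hz using Subgroup.closure_induction with
  | mem s hs => exact h s hs
  | one => simp
  | mul a b _ _ ha hb =>
    refine (ha.union (hb.preimage (f := fun y => y * a) (mul_left_injective a).injOn)).subset ?_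
    intro y hy
    simp only [Set.mem_union, Set.mem_preimage, Set.mem_ofPred_eq, mul_assoc] at hy ⊢
    tauto
  | inv a _ ha =>
    refine (ha.preimage (f := fun y => y * a⁻¹) (mul_left_injective a⁻¹).injOn).subset ?_
    intro y hy
    simp only [Set.mem_preimage, Set.mem_ofPred_eq, inv_mul_cancel_right] at hy ⊢
    tauto

section free
variable {α : Type*} [DecidableEq α]

/-- Elements of the free group whose inverse ends in the letter `s`. -/
def lastSet (s : α × Bool) : Set (FreeGroup α) := {w | (w⁻¹).toWord.getLast? = some s}

theorem lastSet_AI [Finite α] (s : α × Bool) : AI (lastSet s) := by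
  refine AI_of_gen (FreeGroup.closure_range_of α) ?_
  rintro _ ⟨a, rfl⟩
  have h1 : {l : List (α × Bool) | l.length ≤ 1}.Finite := List.finite_length_le (α × Bool) 1
  have h2 := h1.preimage (f := FreeGroup.toWord) (FreeGroup.toWord_injective.injOn)
  have h3 := h2.preimage (f := fun y : FreeGroup α => y⁻¹) inv_injective.injOn
  refine h3.subset ?_
  intro y hy
  simp only [Set.mem_preimage, Set.mem_ofPred_eq, lastSet, mul_inv_rev] at hy ⊢
  by_contra hl
  apply hy
  generalize y⁻¹ = u at hl ⊢
  have e : ((FreeGroup.of a)⁻¹ * u).toWord = FreeGroup.reduce ((a, false) :: u.toWord) := by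
    rw [FreeGroup.toWord_mul, FreeGroup.toWord_inv]; simp [FreeGroup.invRev]
  rw [e, FreeGroup.reduce.cons, FreeGroup.reduce_toWord]
  rcases hu : u.toWord with _ | ⟨x, _ | ⟨y, l⟩⟩
  · simp [hu] at hl
  · simp [hu] at hl
  · simp only
    split_ifs
    · simp [List.getLast?_cons]
    · simp [List.getLast?_cons]

theorem getLast_flat {R : List (α × Bool)} (hR : R ≠ []) (n : ℕ) :
    ((List.replicate (n+1) R).flatten).getLast? = R.getLast? := by
  rw [List.replicate_succ', List.flatten_append]
  simp [List.getLast?_append]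
  rcases h : R.getLast? with _ | x
  · simp at h; exact absurd h hR
  · simp

theorem head_flat {R : List (α × Bool)} (hR : R ≠ []) (n : ℕ) :
    ((List.replicate (n+1) R).flatten).head? = R.head? := by
  rw [List.replicate_succ, List.flatten_cons]
  cases R <;> simp at hR ⊢

theorem free_end (f : FreeGroup α) (hf : f ≠ 1) : ∃ (c : FreeGroup α) (s : α × Bool), ∀ n : ℕ,
    c * f ^ (n+1) * c⁻¹ ∈ lastSet s ∧ c * (f ^ (n+1))⁻¹ * c⁻¹ ∉ lastSet s := by
  set L := (f⁻¹).toWord with hL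
  set R := FreeGroup.reduceCyclically L with hRdef
  have hR : FreeGroup.IsCyclicallyReduced R :=
    FreeGroup.reduceCyclically.isCyclicallyReduced FreeGroup.isReduced_toWord
  have hdec := FreeGroup.reduceCyclically.conj_conjugator_reduceCyclically L
  set k := FreeGroup.reduceCyclically.conjugator L
  have hf' : f⁻¹ = FreeGroup.mk k * FreeGroup.mk R * (FreeGroup.mk k)⁻¹ := by
    rw [← FreeGroup.mk_toWord (x := f⁻¹), ← hL, ← hdec]
    simp [FreeGroup.inv_mk, FreeGroup.mul_mk, hRdef]
  have hR0 : R ≠ [] := by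
    intro h0
    rw [h0] at hf'
    apply hf
    rw [← FreeGroup.one_eq_mk] at hf'
    rw [mul_one, mul_inv_cancel] at hf'
    exact inv_eq_one.1 hf'
  obtain ⟨s, hs⟩ : ∃ s, R.getLast? = some s := by
    rcases h : R.getLast? with _ | x
    · simp at h; exact absurd h hR0
    · exact ⟨x, rfl⟩
  have hp : ∀ n : ℕ, ((FreeGroup.mk R)^(n+1)).toWord = (List.replicate (n+1) R).flatten := by
    intro n
    rw [FreeGroup.toWord_pow, FreeGroup.toWord_mk, hR.isReduced.reduce_eq,
      (hR.flatten_replicate (n+1)).isReduced.reduce_eq]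
  have hc : ∀ n : ℕ, (FreeGroup.mk k)⁻¹ * (f^(n+1))⁻¹ * ((FreeGroup.mk k)⁻¹)⁻¹ =
      (FreeGroup.mk R)^(n+1) := by
    intro n
    rw [← inv_pow, hf', conj_pow]; group
  refine ⟨(FreeGroup.mk k)⁻¹, s, fun n => ⟨?_, ?_⟩⟩
  · have e : ((FreeGroup.mk k)⁻¹ * f^(n+1) * ((FreeGroup.mk k)⁻¹)⁻¹)⁻¹ = (FreeGroup.mk R)^(n+1) := by
      rw [← hc n]; group
    simp only [lastSet, Set.mem_ofPred_eq]
    rw [e, hp, getLast_flat hR0, hs]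
  · rw [hc n]
    simp only [lastSet, Set.mem_ofPred_eq]
    rw [FreeGroup.toWord_inv, hp]
    have : (FreeGroup.invRev (List.replicate (n+1) R).flatten).getLast? =
      R.head?.map (fun p => (p.1, !p.2)) := by
      rw [← head_flat hR0 n]
      simp [FreeGroup.invRev, List.getLast?_reverse]
    rw [this]
    intro h
    rw [Option.map_eq_some_iff] at h
    obtain ⟨b, hb, hbs⟩ := h
    have := (FreeGroup.isCyclicallyReduced_iff.1 hR).2 s hs b hb (by rw [← hbs])
    rw [← hbs] at this
    simp at this

end free

end CD



namespace CD

open scoped Pointwise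

section cay
variable {G : Type u} [Group G]

/-- Cayley graph -/
def cay (Sg : Set G) (x y : G) : Prop := x⁻¹ * y ∈ Sg

theorem cay_sym {Sg : Set G} (hs : ∀ s ∈ Sg, s⁻¹ ∈ Sg) (x y : G) (h : cay Sg x y) : cay Sg y x := by
  have := hs _ h
  simpa [cay] using this

theorem cay_inv (Sg : Set G) (g x y : G) (h : cay Sg x y) : cay Sg (g • x) (g • y) := by
  simpa [cay, mul_assoc] using h

theorem cay_conn {Sg : Set G} (hs : ∀ s ∈ Sg, s⁻¹ ∈ Sg) (hgen : Subgroup.closure Sg = ⊤) (x y : G) :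
    Relation.ReflTransGen (cay Sg) x y := by
  have key : ∀ z : G, ∀ x, Relation.ReflTransGen (cay Sg) x (x * z) := by
    intro z
    have hz : z ∈ Subgroup.closure Sg := by rw [hgen]; trivial
    induction hz using Subgroup.closure_induction with
    | mem s hs => intro x; exact Relation.ReflTransGen.single (by simpa [cay] using hs)
    | one => intro x; simpa using Relation.ReflTransGen.refl
    | mul a b _ _ ha hb =>
      intro x
      have := (ha x).trans (hb (x * a))
      rwa [mul_assoc] at this
    | inv a _ ha =>
      intro x
      have h1 := ha (x * a⁻¹)
      rw [inv_mul_cancel_right] at h1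
      exact rtg_symm (cay_sym hs) h1
  have := key (x⁻¹ * y) x
  simpa using this

theorem AI_of_bd {Sg : Set G} (hs : ∀ s ∈ Sg, s⁻¹ ∈ Sg) (hgen : Subgroup.closure Sg = ⊤)
    {A : Set G} (h : (bd (cay Sg) A).Finite) : AI A := by
  refine AI_of_gen hgen ?_
  intro s hsm
  refine ((h.image Prod.fst).union (h.image Prod.snd)).subset ?_
  intro y hy
  simp only [Set.mem_ofPred_eq] at hy
  have c1 : cay Sg y (y * s) := by simpa [cay] using hsm
  by_cases h1 : y ∈ A
  · left
    exact ⟨(y, y * s), ⟨h1, by tauto, c1⟩, rfl⟩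
  · right
    exact ⟨(y * s, y), ⟨by tauto, h1, cay_sym hs _ _ c1⟩, rfl⟩

theorem bd_of_AI {Sg : Set G} (hf : Sg.Finite) {A : Set G} (h : AI A) :
    (bd (cay Sg) A).Finite := by
  refine (hf.biUnion (fun s _ => (h s).image (fun y => (y, y * s)))).subset ?_
  rintro ⟨x, y⟩ ⟨h1, h2, h3⟩
  simp only [Set.mem_iUnion]
  refine ⟨x⁻¹ * y, h3, x, ?_, by simp⟩
  simp only [Set.mem_ofPred_eq, mul_inv_cancel_left]
  tauto

theorem cayNest {Sg : Set G} (hs : ∀ s ∈ Sg, s⁻¹ ∈ Sg) (hgen : Subgroup.closure Sg = ⊤) (k : ℕ) :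
    Nest G (EE (cay Sg) k) where
  compl A hA := by
    obtain ⟨p, q, h⟩ := hA
    exact ⟨p, q, h.compl (cay_sym hs)⟩
  smul g A hA := EE_smul (cay_inv Sg) g hA
  ne A hA := by
    obtain ⟨p, q, h⟩ := hA
    exact h.1.nonempty
  nested A hA B hB := EE_nested (cay_sym hs) (cay_conn hs hgen) hA hB
  fin x y := (MM_sep (cay_sym hs) (cay_conn hs hgen) k x y).subset
    (fun A hA => ⟨EE_sub hA.1, hA.2⟩)

theorem ev_const {P : ℕ → Prop} (h : {n | ¬ (P n ↔ P (n+1))}.Finite) :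
    (∃ N, ∀ n ≥ N, P n) ∨ (∃ N, ∀ n ≥ N, ¬ P n) := by
  obtain ⟨N, hN⟩ := h.bddAbove
  have hc : ∀ n ≥ N+1, (P n ↔ P (N+1)) := by
    intro n hn
    induction n, hn using Nat.le_induction with
    | base => rfl
    | succ n hn ih =>
      rw [← ih]
      by_contra hh
      have := hN (show n ∈ {n | ¬ (P n ↔ P (n+1))} from fun h' => hh h'.symm)
      omega
  by_cases h0 : P (N+1)
  · exact Or.inl ⟨N+1, fun n hn => (hc n hn).2 h0⟩
  · exact Or.inr ⟨N+1, fun n hn h1 => h0 ((hc n hn).1 h1)⟩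

theorem mem_hyper {P : ℕ → Prop} (h : ∃ N, ∀ n ≥ N, P n) :
    {n | P n} ∈ (Filter.hyperfilter ℕ : Ultrafilter ℕ) := by
  obtain ⟨N, hN⟩ := h
  apply Nat.hyperfilter_le_atTop
  exact Filter.mem_atTop_sets.2 ⟨N, hN⟩

theorem not_mem_hyper {P : ℕ → Prop} (h : ∃ N, ∀ n ≥ N, ¬ P n) :
    {n | P n} ∉ (Filter.hyperfilter ℕ : Ultrafilter ℕ) := by
  have := mem_hyper h
  intro h2
  rw [← Ultrafilter.compl_notMem_iff] at h2
  exact h2 this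

theorem ray_const {A : Set G} (hA : AI A) (f x : G) (hf : ∀ n : ℕ, f ^ (n+1) ≠ 1) :
    (∃ N, ∀ n ≥ N, f ^ n * x ∈ A) ∨ (∃ N, ∀ n ≥ N, ¬ f ^ n * x ∈ A) := by
  refine ev_const (P := fun n => f ^ n * x ∈ A) ?_
  have hinj : Function.Injective (fun n : ℕ => f ^ n * x) := by
    intro a b hab
    have hab : f ^ a = f ^ b := mul_right_cancel hab
    have key : ∀ a b : ℕ, a < b → f ^ a = f ^ b → False := by
      intro a b hlt he
      obtain ⟨d, rfl⟩ := Nat.exists_eq_add_of_lt hlt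
      rw [add_assoc, pow_add] at he
      exact hf d (by simpa using he)
    rcases lt_trichotomy a b with h | h | h
    · exact (key _ _ h hab).elim
    · exact h
    · exact (key _ _ h hab.symm).elim
  refine ((hA (x⁻¹ * f * x)).preimage hinj.injOn).subset ?_
  intro n hn
  simp only [Set.mem_preimage, Set.mem_ofPred_eq] at hn ⊢
  have e : f ^ n * x * (x⁻¹ * f * x) = f ^ (n+1) * x := by rw [pow_succ]; group
  rwa [e]

theorem strict_of_ends {S : Set (Set G)} (N : Nest G S) {A : Set G} (hA : A ∈ S) (f x : G) (M : ℕ)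
    (h1 : ∀ n ≥ M, f ^ n * x ∈ A) (h2 : ∀ n ≥ M, ¬ (f⁻¹) ^ n * x ∈ A) :
    A ⊂ f • A ∨ f • A ⊂ A := by
  have hx := N.nested A hA (f • A) (N.smul f A hA)
  have m : ∀ y, y ∈ f • A ↔ f⁻¹ * y ∈ A := fun y => by
    rw [Set.mem_smul_set_iff_inv_smul_mem]; rfl
  have c1 : (A ∩ f • A).Nonempty := by
    refine ⟨f ^ (M+1) * x, h1 _ (by omega), ?_⟩
    rw [m, pow_succ', mul_assoc, inv_mul_cancel_left]
    exact h1 _ le_rfl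
  have c2 : (Aᶜ ∩ (f • A)ᶜ).Nonempty := by
    refine ⟨(f⁻¹) ^ M * x, h2 _ le_rfl, ?_⟩
    rw [Set.mem_compl_iff, m, ← mul_assoc, ← pow_succ']
    exact h2 _ (by omega)
  have hne : A ≠ f • A := by
    intro he
    have hst : ∀ n : ℕ, ∀ y, (f ^ n * y ∈ A ↔ y ∈ A) := by
      intro n
      induction n with
      | zero => simp
      | succ n ih =>
        intro y
        rw [pow_succ, mul_assoc, ih]
        rw [he, m, inv_mul_cancel_left, ← he]
    have h3 := h1 M le_rfl
    have h4 := h2 M le_rfl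
    apply h4
    rw [← hst M, ← hst M]
    simpa using h3
  by_cases c3 : (A ∩ (f • A)ᶜ).Nonempty
  · by_cases c4 : (Aᶜ ∩ f • A).Nonempty
    · exact absurd ⟨c1, c3, c4, c2⟩ hx
    · right
      refine ssubset_of_subset_of_ne ?_ hne.symm
      intro y hy
      by_contra hh
      exact c4 ⟨y, hh, hy⟩
  · left
    refine ssubset_of_subset_of_ne ?_ hne
    intro y hy
    by_contra hh
    exact c3 ⟨y, hy, hh⟩

theorem strict_of_sep {Sg : Set G} (hs : ∀ s ∈ Sg, s⁻¹ ∈ Sg) (hgen : Subgroup.closure Sg = ⊤) {k : ℕ}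
    {B : Set G} (hB : (bd (cay Sg) B).Finite) (hk : bdn (cay Sg) B ≤ k) (f x : G)
    (hf : ∀ n : ℕ, f ^ (n+1) ≠ 1)
    (h1 : ∀ n : ℕ, f ^ (n+1) * x ∈ B) (h2 : ∀ n : ℕ, ¬ (f⁻¹) ^ (n+1) * x ∈ B) :
    ∃ A ∈ EE (cay Sg) k, A ⊂ f • A ∨ f • A ⊂ A := by
  have hf' : ∀ n : ℕ, f⁻¹ ^ (n+1) ≠ 1 := fun n => by
    rw [inv_pow]; simpa using hf n
  let p : Ultrafilter G := (Filter.hyperfilter ℕ).map (fun n => f ^ n * x)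
  let q : Ultrafilter G := (Filter.hyperfilter ℕ).map (fun n => (f⁻¹) ^ n * x)
  have mp : ∀ A, A ∈ p ↔ {n : ℕ | f ^ n * x ∈ A} ∈ (Filter.hyperfilter ℕ : Ultrafilter ℕ) :=
    fun A => Ultrafilter.mem_map
  have mq : ∀ A, A ∈ q ↔ {n : ℕ | f⁻¹ ^ n * x ∈ A} ∈ (Filter.hyperfilter ℕ : Ultrafilter ℕ) :=
    fun A => Ultrafilter.mem_map
  have hp : B ∈ p := by
    rw [mp]
    refine mem_hyper ⟨1, fun n hn => ?_⟩
    obtain ⟨m, rfl⟩ := Nat.exists_eq_add_of_le' hn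
    exact h1 m
  have hq : B ∉ q := by
    rw [mq]
    refine not_mem_hyper ⟨1, fun n hn => ?_⟩
    obtain ⟨m, rfl⟩ := Nat.exists_eq_add_of_le' hn
    exact h2 m
  obtain ⟨A, hA, hAf, hsep⟩ := EE_exists (p := p) (q := q) hB hk (by tauto)
  have hAI := AI_of_bd hs hgen hAf
  have N := cayNest hs hgen k
  rcases ray_const hAI f x hf with a | a <;> rcases ray_const hAI f⁻¹ x hf' with b | b
  · exact absurd (iff_of_true ((mp A).2 (mem_hyper a)) ((mq A).2 (mem_hyper b))) hsep
  · obtain ⟨a, ha⟩ := a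
    obtain ⟨b, hb⟩ := b
    exact ⟨A, hA, strict_of_ends N hA f x (max a b) (fun n hn => ha n (by omega))
      (fun n hn => hb n (by omega))⟩
  · obtain ⟨a, ha⟩ := a
    obtain ⟨b, hb⟩ := b
    exact ⟨Aᶜ, N.compl A hA, strict_of_ends N (N.compl A hA) f x (max a b)
      (fun n hn => ha n (by omega)) (fun n hn h => h (hb n (by omega)))⟩
  · exact absurd (iff_of_false (fun h => not_mem_hyper a ((mp A).1 h))
      (fun h => not_mem_hyper b ((mq A).1 h))) hsep

/-- retraction of `G` onto a subgroup, equivariant for left multiplication -/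
noncomputable def pr (F : Subgroup G) (y : G) : F :=
  ⟨y * ((QuotientGroup.mk y⁻¹ : G ⧸ F)).out, by
    have := QuotientGroup.mk_out_eq_mul F y⁻¹
    obtain ⟨h, hh⟩ := this
    rw [hh]; simp⟩

theorem pr_coe (F : Subgroup G) (y : G) : (pr F y : G) = y * ((QuotientGroup.mk y⁻¹ : G ⧸ F)).out :=
  rfl

theorem pr_mul (F : Subgroup G) (f : F) (y : G) : pr F (f * y) = f * pr F y := by
  apply Subtype.ext
  have : (QuotientGroup.mk (f * y : G)⁻¹ : G ⧸ F) = QuotientGroup.mk y⁻¹ := by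
    rw [QuotientGroup.eq]; simp
  rw [Subgroup.coe_mul, pr_coe, pr_coe, this, mul_assoc]

theorem pr_out (F : Subgroup G) (q : G ⧸ F) : pr F (q.out)⁻¹ = 1 := by
  apply Subtype.ext
  rw [pr_coe, inv_inv, QuotientGroup.out_eq']
  simp

theorem AI_pr (F : Subgroup G) [F.FiniteIndex] {A : Set F} (hA : AI A) : AI (pr F ⁻¹' A) := by
  intro z
  refine (Set.finite_iUnion (fun q : G ⧸ F =>
    (hA (pr F (q.out⁻¹ * z))).image (fun w : F => (w : G) * q.out⁻¹))).subset ?_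
  intro y hy
  simp only [Set.mem_iUnion]
  have ey : (y : G) = (pr F y : G) * ((QuotientGroup.mk y⁻¹ : G ⧸ F).out)⁻¹ := by
    rw [pr_coe]; simp
  refine ⟨QuotientGroup.mk y⁻¹, pr F y, ?_, ey.symm⟩
  simp only [Set.mem_ofPred_eq, Set.mem_preimage] at hy ⊢
  rw [← pr_mul, ← mul_assoc, ← ey]
  exact hy

theorem AI_equiv {F F' : Type*} [Group F] [Group F'] (e : F ≃* F') {A : Set F'} (h : AI A) :
    AI (e ⁻¹' A) := by
  intro z
  refine ((h (e z)).preimage e.injective.injOn).subset ?_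
  intro y hy
  simpa using hy

end cay

theorem free_fg_finite (α : Type u) (h : Group.FG (FreeGroup α)) : Finite α := by
  classical
  have key : ∀ w : FreeGroup α, ∃ T : Set α, T.Finite ∧
      w ∈ Subgroup.closure (FreeGroup.of '' T) := by
    intro w
    have hw : w ∈ Subgroup.closure (Set.range (FreeGroup.of (α := α))) := by
      rw [FreeGroup.closure_range_of]; trivial
    induction hw using Subgroup.closure_induction with
    | mem s hs =>
      obtain ⟨a, rfl⟩ := hs
      exact ⟨{a}, Set.finite_singleton a, Subgroup.subset_closure ⟨a, rfl, rfl⟩⟩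
    | one => exact ⟨∅, Set.finite_empty, one_mem _⟩
    | mul a b _ _ ha hb =>
      obtain ⟨T, hT, h1⟩ := ha
      obtain ⟨T', hT', h2⟩ := hb
      exact ⟨T ∪ T', hT.union hT', mul_mem
        (Subgroup.closure_mono (Set.image_mono Set.subset_union_left) h1)
        (Subgroup.closure_mono (Set.image_mono Set.subset_union_right) h2)⟩
    | inv a _ ha =>
      obtain ⟨T, hT, h1⟩ := ha
      exact ⟨T, hT, inv_mem h1⟩
  choose T hT hmem using key
  obtain ⟨S, hS, hSf⟩ := Group.fg_iff.1 h
  have hU : (⋃ s ∈ S, T s).Finite := hSf.biUnion (fun s _ => hT s)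
  have htop : Subgroup.closure (FreeGroup.of '' (⋃ s ∈ S, T s)) = ⊤ := by
    rw [eq_top_iff, ← hS, Subgroup.closure_le]
    intro s hs
    exact Subgroup.closure_mono (Set.image_mono (Set.subset_biUnion_of_mem hs)) (hmem s)
  have huniv : (⋃ s ∈ S, T s) = Set.univ := by
    rw [Set.eq_univ_iff_forall]
    intro a
    by_contra ha
    let φ : FreeGroup α →* Multiplicative ℤ :=
      FreeGroup.lift (fun b => if b = a then Multiplicative.ofAdd 1 else 1)
    have hk : Subgroup.closure (FreeGroup.of '' (⋃ s ∈ S, T s)) ≤ φ.ker := by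
      rw [Subgroup.closure_le]
      rintro _ ⟨b, hb, rfl⟩
      have hba : b ≠ a := fun h => ha (h ▸ hb)
      change φ _ = 1
      simp [φ, hba]
    rw [htop] at hk
    have : φ (FreeGroup.of a) = 1 := hk (Subgroup.mem_top _)
    simp only [φ, FreeGroup.lift_apply_of, if_true] at this
    exact absurd (congrArg Multiplicative.toAdd this) (by simp)
  rw [huniv] at hU
  exact Set.finite_univ_iff.1 hU

theorem thmA (G : Type u) [Group G] (hfg : Group.FG G) (F : Subgroup G) [F.FiniteIndex]
    [IsFreeGroup F] : ∃ (V : Type u) (_ : MulAction G V) (E : V → V → Prop), Nonempty V ∧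
      IsGTree G E ∧ ∀ f ∈ F, ∀ v : V, f • v = v → f = 1 := by
  classical
  obtain ⟨S0, hS0, hS0f⟩ := Group.fg_iff.1 hfg
  set Sg : Set G := S0 ∪ S0⁻¹ with hSg
  have hs : ∀ s ∈ Sg, s⁻¹ ∈ Sg := by
    intro s h
    simp only [hSg, Set.mem_union, Set.mem_inv, inv_inv] at h ⊢
    tauto
  have hgen : Subgroup.closure Sg = ⊤ := by
    rw [eq_top_iff, ← hS0]
    exact Subgroup.closure_mono Set.subset_union_left
  have hfin : Sg.Finite := hS0f.union hS0f.inv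
  have hFfg : Group.FG F := inferInstance
  let α := IsFreeGroup.Generators F
  let e : F ≃* FreeGroup α := IsFreeGroup.toFreeGroup F
  have hα : Finite α := by
    have : Group.FG (FreeGroup α) := Group.fg_of_surjective (f := e.toMonoidHom) e.surjective
    exact free_fg_finite α this
  let T : α × Bool → Set G := fun s => pr F ⁻¹' (e ⁻¹' lastSet s)
  have hT : ∀ s, AI (T s) := fun s => AI_pr F (AI_equiv e (lastSet_AI s))
  obtain ⟨k, hk⟩ : ∃ k, ∀ s, bdn (cay Sg) (T s) ≤ k := by
    obtain ⟨k, hk⟩ := (Set.finite_range (fun s => bdn (cay Sg) (T s))).bddAbove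
    exact ⟨k, fun s => hk ⟨s, rfl⟩⟩
  obtain ⟨V, i1, E, hV, hE, hfree⟩ := tree_of_nest (cayNest hs hgen k)
  refine ⟨V, i1, E, hV, hE, ?_⟩
  intro f hf v hv
  by_contra hne
  let f' : F := ⟨f, hf⟩
  have hf' : e f' ≠ 1 := by
    intro h
    have : f' = 1 := by simpa using h
    exact hne (congrArg Subtype.val this)
  obtain ⟨c', s, hc⟩ := free_end (e f') hf'
  obtain ⟨c, rfl⟩ := e.surjective c'
  refine hfree f ?_ v hv
  let x0 : G := ((QuotientGroup.mk 1 : G ⧸ F).out)⁻¹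
  have hx0 : pr F x0 = 1 := pr_out F _
  have hm : ∀ w : F, (w : G) * ((c : G)⁻¹ * x0) ∈ (c : G)⁻¹ • T s ↔
      e c * e w * (e c)⁻¹ ∈ lastSet s := by
    intro w
    rw [Set.mem_smul_set_iff_inv_smul_mem]
    have : ((c : G)⁻¹)⁻¹ • ((w : G) * ((c : G)⁻¹ * x0)) = ((c * w * c⁻¹ : F) : G) * x0 := by
      simp [mul_assoc]
    rw [this]
    change e (pr F _) ∈ lastSet s ↔ _
    rw [pr_mul, hx0]
    simp
  refine strict_of_sep hs hgen (B := (c : G)⁻¹ • T s) (bd_smul_fin (cay_inv Sg) _ (bd_of_AI hfin (hT s)))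
    (by rw [bdn_smul (cay_inv Sg)]; exact hk s) f ((c : G)⁻¹ * x0) ?_ ?_ ?_
  · intro n hn
    have h1 : f' ^ (n+1) = 1 := Subtype.ext hn
    have h2 : e f' ^ (n+1) = 1 := by rw [← map_pow, h1, map_one]
    have := hc n
    rw [h2] at this
    simp at this
  · intro n
    have := (hm (f' ^ (n+1))).2 (by rw [map_pow]; exact (hc n).1)
    simpa [f'] using this
  · intro n h
    refine (hc n).2 ?_
    have := (hm ((f' ^ (n+1))⁻¹)).1 (by simpa [f'] using h)
    rwa [map_inv, map_pow] at this

end CD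



namespace CD

theorem thmC (G : Type u) [Group G] (hfg : Group.FG G) (F : Subgroup G) [F.Normal] [F.FiniteIndex]
    [IsFreeGroup F] (g : G) (hgen : ∀ y : G, ∃ n : ℤ, ∃ f ∈ F, g ^ n * f = y)
    (H : Subgroup G) (hH : H.FG) (hg : ∀ k : G, k⁻¹ * g * k ∉ H) :
    ∃ K : Subgroup G, K.FiniteIndex ∧ H ≤ K ∧ ∀ a : G, a⁻¹ * g * a ∉ K := by
  obtain ⟨V, i1, E, hV, hE, hst⟩ := thmA G hfg F
  have hz : ∀ q : G ⧸ F, q ∈ Subgroup.zpowers (QuotientGroup.mk' F g) := by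
    intro q
    obtain ⟨y, rfl⟩ := QuotientGroup.mk'_surjective F q
    obtain ⟨n, f, hf, rfl⟩ := hgen y
    refine ⟨n, ?_⟩
    have : QuotientGroup.mk' F f = 1 := (QuotientGroup.eq_one_iff f).2 hf
    rw [map_mul, this, mul_one, map_zpow]
  refine thmB hE (Q := G ⧸ F) ?_ (QuotientGroup.mk' F) ?_ g hz H hH hg
  · intro a b
    obtain ⟨m, rfl⟩ := hz a
    obtain ⟨n, rfl⟩ := hz b
    exact zpow_mul_comm _ m n
  · intro x v hx h1
    exact hst x ((QuotientGroup.eq_one_iff x).1 h1) v hx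

theorem fg_subgroupOf {G : Type u} [Group G] (L G1 : Subgroup G) [G1.FiniteIndex] [Group.FG L] :
    (L.subgroupOf G1).FG := by
  rw [← Group.fg_iff_subgroup_fg]
  have h1 : Group.FG (G1.subgroupOf L) := inferInstance
  let φ : G1.subgroupOf L →* L.subgroupOf G1 :=
    { toFun := fun x => ⟨⟨x.1.1, x.2⟩, x.1.2⟩
      map_one' := rfl
      map_mul' := fun _ _ => rfl }
  refine Group.fg_of_surjective (f := φ) ?_
  rintro ⟨⟨x, hx⟩, hx'⟩
  exact ⟨⟨⟨x, hx'⟩, hx⟩, rfl⟩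

theorem main (G : Type u) [Group G] (hfg : Group.FG G)
    (hvf : ∃ F : Subgroup G, F.FiniteIndex ∧ IsFreeGroup F)
    (H : Subgroup G) (hH : H.FG) (g : G)
    (hg : ¬ ∃ (k : G), ∃ x ∈ H, g = k⁻¹ * x * k) :
    ∃ N : Subgroup G, N.Normal ∧ N.FiniteIndex ∧ ∀ k : G, ∀ h ∈ H, g⁻¹ * (k⁻¹ * h * k) ∉ N := by
  obtain ⟨F, hF, hfree⟩ := hvf
  set F0 := F.normalCore with hF0
  have f0 : IsFreeGroup F0 :=
    IsFreeGroup.ofMulEquiv (Subgroup.subgroupOfEquivOfLe F.normalCore_le)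
  set G1 := Subgroup.zpowers g ⊔ F0 with hG1
  have hle : F0 ≤ G1 := le_sup_right
  have hgG1 : g ∈ G1 := (le_sup_left : _ ≤ G1) (Subgroup.mem_zpowers g)
  have hfi : G1.FiniteIndex := Subgroup.finiteIndex_of_le hle
  have f1 : IsFreeGroup (F0.subgroupOf G1) :=
    IsFreeGroup.ofMulEquiv (Subgroup.subgroupOfEquivOfLe hle).symm
  have hfg1 : Group.FG G1 := inferInstance
  have hHfg : Group.FG H := (Group.fg_iff_subgroup_fg H).2 hH
  let L : G ⧸ G1 → Subgroup G := fun q => H.map (MulAut.conj (q.out)⁻¹).toMonoidHom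
  have hL : ∀ q, Group.FG (L q) := fun q =>
    Group.fg_of_surjective (MonoidHom.subgroupMap_surjective _ H)
  have hK : ∀ q, ∃ K : Subgroup G1, K.FiniteIndex ∧ (L q).subgroupOf G1 ≤ K ∧
      ∀ a : G1, a⁻¹ * ⟨g, hgG1⟩ * a ∉ K := by
    intro q
    have := hL q
    refine thmC G1 hfg1 (F0.subgroupOf G1) ⟨g, hgG1⟩ ?_ _ (fg_subgroupOf (L q) G1) ?_
    · rintro ⟨y, hy⟩
      obtain ⟨a, ⟨n, rfl⟩, f, hf, rfl⟩ := Subgroup.mem_sup_of_normal_right.1 hy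
      exact ⟨n, ⟨f, hle hf⟩, hf, Subtype.ext (by simp)⟩
    · rintro ⟨a, ha⟩ h
      obtain ⟨x, hx, hx'⟩ := h
      apply hg
      refine ⟨q.out * a⁻¹, x, hx, ?_⟩
      have e : (q.out)⁻¹ * x * q.out = a⁻¹ * g * a := by simpa using hx'
      have : g = a * (a⁻¹ * g * a) * a⁻¹ := by group
      rw [this, ← e]; group
  choose K hKf hKL hKg using hK
  have hmf : ∀ q, ((K q).map G1.subtype).FiniteIndex := fun q => by
    constructor
    rw [Subgroup.index_map_subtype]
    exact mul_ne_zero (hKf q).index_ne_zero hfi.index_ne_zero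
  have hinf : (⨅ q, (K q).map G1.subtype).FiniteIndex := Subgroup.finiteIndex_iInf hmf
  refine ⟨(⨅ q, (K q).map G1.subtype).normalCore, inferInstance, inferInstance, ?_⟩
  intro k h hh hN
  set N := (⨅ q, (K q).map G1.subtype).normalCore with hNdef
  have hNn : N.Normal := inferInstance
  set q : G ⧸ G1 := QuotientGroup.mk k with hq
  have hNK : N ≤ (K q).map G1.subtype :=
    (Subgroup.normalCore_le _).trans (iInf_le _ q)
  obtain ⟨b, hb⟩ : ∃ b : G1, q.out * b = k := by
    obtain ⟨c, hc⟩ := QuotientGroup.mk_out_eq_mul G1 k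
    exact ⟨c⁻¹, by rw [hq, hc]; simp⟩
  set n := g⁻¹ * (k⁻¹ * h * k) with hn
  have hbn : (b : G) * n * (b : G)⁻¹ ∈ N := hNn.conj_mem n hN b
  obtain ⟨m, hm, hmb⟩ := hNK hbn
  have hmb : (m : G) = b * n * (b : G)⁻¹ := hmb
  have e : ((b * ⟨g, hgG1⟩ * b⁻¹ * m : G1) : G) = (q.out)⁻¹ * h * q.out := by
    have e1 : q.out = k * (b : G)⁻¹ := by rw [← hb]; group
    rw [e1]
    simp only [Subgroup.coe_mul, Subgroup.coe_inv, hmb, hn]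
    group
  have hin : (b * ⟨g, hgG1⟩ * b⁻¹ * m : G1) ∈ K q := by
    apply hKL q
    rw [Subgroup.mem_subgroupOf, e]
    exact ⟨h, hh, by simp⟩
  have h2 := (K q).mul_mem hin ((K q).inv_mem hm)
  rw [mul_inv_cancel_right] at h2
  refine hKg q b⁻¹ ?_
  rwa [inv_inv]

end CD


/-- Ribes–Zalesskii: finitely generated subgroups of finitely generated virtually
free groups are conjugacy distinguished: if `g` is not conjugate into `H`, some
finite quotient of `G` separates `g` from the conjugates of `H`. -/
theorem fg_subgroup_conjugacy_distinguished (G : Type u) [Group G]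
    (hfg : Group.FG G)
    (hvf : ∃ F : Subgroup G, F.FiniteIndex ∧ IsFreeGroup F)
    (H : Subgroup G) (hH : H.FG) (g : G)
    (hg : ¬ ∃ (k : G), ∃ x ∈ H, g = k⁻¹ * x * k) :
    ∃ (Q : Type u) (_ : Group Q) (_ : Finite Q) (q : G →* Q), Function.Surjective q ∧
      ¬ ∃ (k : Q), ∃ x ∈ H.map q, q g = k⁻¹ * x * k := by
  obtain ⟨N, hN, hf, h⟩ := CD.main G hfg hvf H hH g hg
  refine ⟨G ⧸ N, inferInstance, inferInstance, QuotientGroup.mk' N,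
    QuotientGroup.mk'_surjective N, ?_⟩
  rintro ⟨k, _, ⟨x, hx, rfl⟩, he⟩
  obtain ⟨k, rfl⟩ := QuotientGroup.mk'_surjective N k
  rw [← map_inv, ← map_mul, ← map_mul] at he
  exact h k x hx (QuotientGroup.eq.1 he)
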